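/- arXiv:1701.01849 — 7 statements merged into one kernel-verified Lean document; each statement's English description precedes it below -/
import Mathlib

section
/- Logarithmic surjectivity bound: let f ∈ P₃(kⁿ) have q-rank r with r > exp(240) (real exponential), and let d ≤ n be a positive integer with d < (1/3)·log(r) (real natural logarithm). Then the Zariski closure of the GLₙ(k)-orbit of f surjects onto P₃(k^d): for every homogeneous degree-3 polynomial h in the first d variables there exists g in the Zariski closure of the GLₙ(k)-orbit of f with π_d(g) = h. -/
open scoped BigOperators

/-- The q-rank of a multivariate polynomial `f`: the least `m` such that
`f = ∑ ℓᵢ · qᵢ` with each `ℓᵢ` homogeneous of degree 1 and each `qᵢ` homogeneous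
of degree 2, as an element of `ℕ∞`. -/
noncomputable def polyQRank {k : Type*} [Field k] {n : ℕ}
    (f : MvPolynomial (Fin n) k) : ℕ∞ :=
  sInf {r : ℕ∞ | ∃ m : ℕ, r = m ∧
    ∃ ℓ q : Fin m → MvPolynomial (Fin n) k,
      (∀ i, (ℓ i).IsHomogeneous 1) ∧ (∀ i, (q i).IsHomogeneous 2) ∧
        f = ∑ i, ℓ i * q i}

/-- The action of `GLₙ(k)` on `MvPolynomial (Fin n) k` by invertible linear
substitution of the variables. -/
noncomputable def glAct {k : Type*} [Field k] {n : ℕ} (g : GL (Fin n) k)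
    (f : MvPolynomial (Fin n) k) : MvPolynomial (Fin n) k :=
  MvPolynomial.aeval
    (fun j => ∑ i, MvPolynomial.C ((g : Matrix (Fin n) (Fin n) k) i j) *
      MvPolynomial.X i) f

/-- The `GLₙ(k)`-orbit of a polynomial. -/
def glOrbit {k : Type*} [Field k] {n : ℕ} (f : MvPolynomial (Fin n) k) :
    Set (MvPolynomial (Fin n) k) :=
  {h | ∃ g : GL (Fin n) k, h = glAct g f}

/-- `g` lies in the Zariski closure of `S ⊆ MvPolynomial (Fin n) k`: every polynomial
in the coefficients (coordinates w.r.t. the monomial basis) vanishing on `S`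
vanishes at `g`. -/
def InZariskiClosure {k : Type*} [Field k] {n : ℕ}
    (S : Set (MvPolynomial (Fin n) k)) (g : MvPolynomial (Fin n) k) : Prop :=
  ∀ P : MvPolynomial (Fin n →₀ ℕ) k,
    (∀ f ∈ S, MvPolynomial.eval (fun m => MvPolynomial.coeff m f) P = 0) →
    MvPolynomial.eval (fun m => MvPolynomial.coeff m g) P = 0

/-- `ξ(d) = ⌊(√(8d+17) − 3)/2⌋`. -/
noncomputable def xi (d : ℕ) : ℕ := ⌊(Real.sqrt (8 * d + 17) - 3) / 2⌋₊

/-- The restriction map `π_d : P₃(kⁿ) → P₃(k^d)`: substitute `0` for all variables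
of index `≥ d`. -/
noncomputable def restrictVars {k : Type*} [Field k] {n : ℕ} (d : ℕ)
    (f : MvPolynomial (Fin n) k) : MvPolynomial (Fin d) k :=
  MvPolynomial.aeval
    (fun i : Fin n => if h : (i : ℕ) < d then MvPolynomial.X ⟨i, h⟩ else 0) f


/-- The irrelevant ideal has height at least the number of variables. -/
lemma aux_height {k : Type*} [Field k] (N : ℕ) :
    (N : ℕ∞) ≤ (MvPolynomial.vanishingIdeal k {(0 : Fin N → k)} : Ideal (MvPolynomial (Fin N) k)).height := by
  classical
  let φ : ℕ → (MvPolynomial (Fin N) k →ₐ[k] MvPolynomial (Fin N) k) := fun i =>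
    MvPolynomial.aeval (fun j : Fin N => if (j : ℕ) < i then 0 else MvPolynomial.X j)
  let p : ℕ → PrimeSpectrum (MvPolynomial (Fin N) k) := fun i =>
    ⟨RingHom.ker (φ i), RingHom.ker_isPrime _⟩
  have hcomp : ∀ i, (φ (i+1)).comp (φ i) = φ (i+1) := by
    intro i
    ext1 j
    simp only [φ, AlgHom.comp_apply, MvPolynomial.aeval_X]
    by_cases h : (j : ℕ) < i
    · simp [h, Nat.lt_succ_of_lt h]
    · simp [h]
  let s : LTSeries (PrimeSpectrum (MvPolynomial (Fin N) k)) :=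
    { length := N
      toFun := fun i => p i
      step := by
        intro i
        show p i < p (i+1)
        rw [← PrimeSpectrum.asIdeal_lt_asIdeal]
        refine lt_of_le_of_ne ?_ ?_
        · intro x hx
          simp only [p, RingHom.mem_ker] at hx ⊢
          rw [← hcomp, AlgHom.comp_apply]
          rw [hx, map_zero]
        · intro h
          have : (MvPolynomial.X i : MvPolynomial (Fin N) k) ∈ (p (i+1)).asIdeal := by
            simp [p, RingHom.mem_ker, φ]
          rw [← h] at this
          simp [p, RingHom.mem_ker, φ] at this }
  have h1 := Order.length_le_height_last (p := s)
  have h2 : Order.height s.last = s.last.asIdeal.height := by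
    exact (PrimeSpectrum.height_eq_orderHeight _).symm
  rw [h2] at h1
  refine le_trans h1 (Ideal.height_mono ?_)
  intro x hx
  have hx' : φ N x = 0 := by
    have : x ∈ (p N).asIdeal := by
      simpa [s, RelSeries.last] using hx
    simpa [p] using this
  rw [MvPolynomial.mem_vanishingIdeal_singleton_iff]
  have : (MvPolynomial.aeval (0 : Fin N → k) : MvPolynomial (Fin N) k →ₐ[k] k) = (MvPolynomial.aeval (0 : Fin N → k)).comp (φ N) := by
    ext j; simp [φ]
  rw [this, AlgHom.comp_apply, hx', map_zero]

/-- Few polynomials without constant term have a common nontrivial zero. -/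
lemma aux_zero {k : Type*} [Field k] [IsAlgClosed k] {N s : ℕ} (hs : s < N)
    (p : Fin s → MvPolynomial (Fin N) k) (hp : ∀ i, MvPolynomial.eval 0 (p i) = 0) :
    ∃ x : Fin N → k, x ≠ 0 ∧ ∀ i, MvPolynomial.eval x (p i) = 0 := by
  by_contra hcon
  push Not at hcon
  set I : Ideal (MvPolynomial (Fin N) k) := Ideal.span (Set.range p) with hI
  have hz : MvPolynomial.zeroLocus k I = {0} := by
    rw [hI, MvPolynomial.zeroLocus_span]
    ext x
    simp only [Set.mem_ofPred_eq, Set.mem_range, forall_exists_index, forall_apply_eq_imp_iff,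
      Set.mem_singleton_iff]
    constructor
    · intro h
      by_contra hx
      obtain ⟨i, hi⟩ := hcon x hx
      exact hi (by simpa [MvPolynomial.aeval_eq_eval] using h i)
    · rintro rfl i
      simpa [MvPolynomial.aeval_eq_eval] using hp i
  have hrad := MvPolynomial.vanishingIdeal_zeroLocus_eq_radical (K := k) I
  rw [hz] at hrad
  have hmin : MvPolynomial.vanishingIdeal k {(0 : Fin N → k)} ∈ I.minimalPrimes := by
    rw [← Ideal.radical_minimalPrimes, ← hrad, Ideal.minimalPrimes_eq_subsingleton_self]
    rfl
  have h1 := Ideal.height_le_card_of_mem_minimalPrimes_span (Set.finite_range p) hmin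
  have h2 := (aux_height (k := k) N).trans h1
  have h3 : (Set.range p).ncard ≤ s := by
    rw [← Set.image_univ]
    refine (Set.ncard_image_le Set.finite_univ).trans ?_
    simp [Set.ncard_univ]
  have h4 : N ≤ (Set.range p).ncard := by exact_mod_cast h2
  omega

/-- `F` is a sum of at most `c` products of a linear and a quadratic form. -/
def AuxQR (k : Type*) [Field k] {V : Type*} [AddCommGroup V] [Module k V] (F : V → k) (c : ℕ) :
    Prop :=
  ∃ (ι : Type) (_ : Fintype ι), Fintype.card ι ≤ c ∧
    ∃ (ℓ : ι → V →ₗ[k] k) (q : ι → V →ₗ[k] V →ₗ[k] k), ∀ x, F x = ∑ i, ℓ i x * q i x x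

lemma AuxQR.mono {k : Type*} [Field k] {V : Type*} [AddCommGroup V] [Module k V] {F : V → k}
    {c c' : ℕ} (h : AuxQR k F c) (hc : c ≤ c') : AuxQR k F c' := by
  obtain ⟨ι, i1, h1, h2⟩ := h
  exact ⟨ι, i1, h1.trans hc, h2⟩

/-- restriction of a trilinear form to a subspace -/
def auxRes {k : Type*} [Field k] {V : Type*} [AddCommGroup V] [Module k V]
    (T : V →ₗ[k] V →ₗ[k] V →ₗ[k] k) (W : Submodule k V) : W →ₗ[k] W →ₗ[k] W →ₗ[k] k where
  toFun x := (T x).domRestrict₁₂ W W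
  map_add' x y := by ext; simp [LinearMap.domRestrict₁₂_apply]
  map_smul' c y := by ext; simp [LinearMap.domRestrict₁₂_apply]

@[simp] lemma auxRes_apply {k : Type*} [Field k] {V : Type*} [AddCommGroup V] [Module k V]
    (T : V →ₗ[k] V →ₗ[k] V →ₗ[k] k) (W : Submodule k V) (x y z : W) :
    auxRes T W x y z = T x y z := rfl

lemma AuxQR.of_res {k : Type*} [Field k] {V : Type*} [AddCommGroup V] [Module k V]
    [FiniteDimensional k V]
    (T : V →ₗ[k] V →ₗ[k] V →ₗ[k] k) (W : Submodule k V) {a c : ℕ}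
    (ha : Module.finrank k V ≤ Module.finrank k W + a)
    (h : AuxQR k (fun x : W => T x x x) c) : AuxQR k (fun x => T x x x) (a + c) := by
  obtain ⟨ι, i1, hc, ℓ, q, hq⟩ := h
  obtain ⟨W', hW⟩ := Submodule.exists_isCompl W
  have hfr := Submodule.finrank_add_eq_of_isCompl hW
  let P : V →ₗ[k] W := W.projectionOnto W' hW
  let P' : V →ₗ[k] W' := W'.projectionOnto W hW.symm
  have hP : ∀ x, (P x : V) + P' x = x := fun x => by
    exact Submodule.projection_add_projection_eq_self hW x
  let b := Module.finBasis k W'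
  let S : Fin (Module.finrank k W') → V →ₗ[k] V →ₗ[k] k := fun j =>
    T (b j) + (T.flip (b j)).comp (W.subtype.comp P) +
      (((T.compl₁₂ (W.subtype.comp P) (W.subtype.comp P)).flip).flip).compr₂ (LinearMap.applyₗ (b j : V))
  refine ⟨Fin (Module.finrank k W') ⊕ ι, inferInstance, ?_, 
    Sum.elim (fun j => (b.coord j).comp P') (fun i => (ℓ i).comp P),
    Sum.elim S (fun i => (q i).compl₁₂ P P), ?_⟩
  · simp; omega
  · intro x
    have hy : ((P' x : W') : V) = ∑ j, (b.coord j (P' x)) • (b j : V) := by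
      have := congrArg W'.subtype (b.sum_repr (P' x))
      rw [map_sum] at this
      exact this.symm
    have h3 : T x x x = T (P x) (P x) (P x) + (T (P' x) x x + T (P x) (P' x) x + T (P x) (P x) (P' x)) := by
      have := hP x
      set u : V := (P x : V)
      set y : V := (P' x : V)
      rw [← this]
      simp only [map_add, LinearMap.add_apply]
      ring
    have h4 := hq (P x)
    simp only at h4 ⊢
    rw [h3, h4]
    simp only [Fintype.sum_sum_type, Sum.elim_inl, Sum.elim_inr]
    rw [add_comm]
    congr 1
    rw [hy]
    simp only [map_sum, LinearMap.sum_apply, map_smul, LinearMap.smul_apply, ← Finset.sum_add_distrib]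
    refine Finset.sum_congr rfl fun j _ => ?_
    simp [S]
    ring

/-- independence is an open condition -/
lemma aux_open {k : Type*} [Field k] [Infinite k] {U : Type*} [AddCommGroup U] [Module k U]
    {ι : Type*} [Fintype ι] (v v' : ι → U) (hv : LinearIndependent k v) :
    ∃ t : k, t ≠ 0 ∧ LinearIndependent k (fun i => v i + t • v' i) := by
  classical
  obtain ⟨P, hP⟩ := (Fintype.linearCombination k v).exists_leftInverse_of_injective
    (LinearMap.ker_eq_bot.2 (linearIndependent_iff_injective_fintypeLinearCombination.1 hv))
  have hPv : ∀ i, P (v i) = Pi.single i 1 := by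
    intro i
    have := LinearMap.congr_fun hP (Pi.single i 1)
    simpa [Fintype.linearCombination_apply_single] using this
  let M : Matrix ι ι k := Matrix.of fun i => P (v' i)
  let p : Polynomial k := (1 + (Polynomial.X : Polynomial k) • M.map Polynomial.C).det
  have hev : ∀ t, p.eval t = (1 + t • M).det := by
    intro t
    simp only [p]
    rw [← Polynomial.coe_evalRingHom, RingHom.map_det]
    congr 1
    ext i j
    simp only [Matrix.one_apply, RingHom.mapMatrix_apply, Matrix.map_apply, Matrix.add_apply, Matrix.smul_apply, smul_eq_mul, map_add, map_mul]
    split_ifs <;> simp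
  have hp : p * Polynomial.X ≠ 0 := by
    refine mul_ne_zero ?_ Polynomial.X_ne_zero
    intro h
    have := hev 0
    simp [h] at this
  obtain ⟨t, ht⟩ := Polynomial.exists_eval_ne_zero_of_natDegree_lt_card _ hp
    (lt_of_lt_of_le (Cardinal.natCast_lt_aleph0) (Cardinal.aleph0_le_mk k))
  simp only [Polynomial.eval_mul, Polynomial.eval_X, hev] at ht
  refine ⟨t, right_ne_zero_of_mul ht, LinearIndependent.of_comp P ?_⟩
  have hrow := Matrix.linearIndependent_rows_of_det_ne_zero (left_ne_zero_of_mul ht)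
  have : (P ∘ fun i => v i + t • v' i) = fun i => (1 + t • M) i := by
    ext i j
    simp [hPv, M, Matrix.one_apply, Pi.single_apply, eq_comm]
  rw [this]
  exact hrow

/-- Max-rank trick. -/
lemma aux_indep {k : Type*} [Field k] [Infinite k] {V U : Type*} [AddCommGroup V] [Module k V]
    [AddCommGroup U] [Module k U] [FiniteDimensional k U]
    {s N : ℕ} (B : Fin s → V →ₗ[k] U)
    (hB : ∀ l : Fin s → k, l ≠ 0 → s * N ≤ Module.finrank k (LinearMap.range (∑ i, l i • B i))) :
    ∃ e : Fin N → V, LinearIndependent k (fun ia : Fin s × Fin N => B ia.1 (e ia.2)) := by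
  classical
  let g : (Fin N → V) → (Fin s × Fin N → U) := fun e ia => B ia.1 (e ia.2)
  let rk : (Fin N → V) → ℕ := fun e => Module.finrank k (Submodule.span k (Set.range (g e)))
  have hbd : ∀ e, rk e ≤ Module.finrank k U := fun e => Submodule.finrank_le _
  obtain ⟨e, he⟩ : ∃ e, ∀ e', rk e' ≤ rk e := by
    have hfin : (Set.range rk).Finite := (Set.finite_Iic (Module.finrank k U)).subset (by
      rintro _ ⟨e, rfl⟩; exact hbd e)
    obtain ⟨m, ⟨e, rfl⟩, hm⟩ := Set.exists_max_image (Set.range rk) id hfin ⟨_, ⟨0, rfl⟩⟩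
    exact ⟨e, fun e' => hm _ ⟨e', rfl⟩⟩
  refine ⟨e, ?_⟩
  by_contra hdep
  have hlt : rk e < s * N := by
    have h1 := finrank_range_le_card (R := k) (g e)
    rw [Fintype.card_prod, Fintype.card_fin, Fintype.card_fin] at h1
    refine lt_of_le_of_ne h1 fun h => hdep ?_
    refine linearIndependent_iff_card_eq_finrank_span.2 ?_
    rw [Fintype.card_prod, Fintype.card_fin, Fintype.card_fin]
    exact h.symm
  obtain ⟨l, hl, ⟨i0, a0⟩, hne⟩ := Fintype.not_linearIndependent_iff.1 hdep
  have hl0 : (fun i => l (i, a0)) ≠ 0 := fun h => hne (congrFun h i0)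
  have hr := hB _ hl0
  obtain ⟨u, ⟨e', rfl⟩, hu⟩ : ∃ u ∈ LinearMap.range (∑ i, l (i, a0) • B i),
      u ∉ Submodule.span k (Set.range (g e)) := by
    by_contra hcon
    push Not at hcon
    have := Submodule.finrank_mono (R := k) (show LinearMap.range (∑ i, l (i, a0) • B i) ≤ _ from hcon)
    exact absurd (hr.trans this) (not_le.2 hlt)
  obtain ⟨κ, a, hinj, hspan, hind⟩ := exists_linearIndependent' k (g e)
  have : Finite κ := Finite.of_injective a hinj
  have := Fintype.ofFinite κ
  have hcard : Fintype.card κ = rk e := by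
    rw [← finrank_span_eq_card hind, hspan]
  set u := (∑ i, l (i, a0) • B i) e' with hudef
  have hopt : LinearIndependent k (fun o : Option κ => o.elim u (g e ∘ a)) := by
    have := (linearIndependent_option' (K := k) (v := g e ∘ a) (x := u)).2 ⟨hind, by rwa [hspan]⟩
    convert this using 1
    ext o; cases o <;> rfl
  let δ : Fin N → V := Pi.single a0 e'
  obtain ⟨t, ht, hti⟩ := aux_open _ (fun o : Option κ => o.elim 0 (g δ ∘ a)) hopt
  have hg : ∀ ia, g (e + t • δ) ia = g e ia + t • g δ ia := by
    intro ia; simp [g]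
  have hmem : Submodule.span k (Set.range (fun o : Option κ =>
      o.elim u (g e ∘ a) + t • o.elim 0 (g δ ∘ a))) ≤
      Submodule.span k (Set.range (g (e + t • δ))) := by
    rw [Submodule.span_le]
    rintro _ ⟨o, rfl⟩
    cases o with
    | some j =>
      exact Submodule.subset_span ⟨a j, by simp [hg]⟩
    | none =>
      have h5 : ∑ ia, l ia • g (e + t • δ) ia = t • u := by
        simp only [hg, smul_add, Finset.sum_add_distrib]
        have hl' : ∑ ia, l ia • g e ia = 0 := hl
        rw [hl', zero_add, hudef, Fintype.sum_prod_type]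
        simp only [LinearMap.sum_apply, LinearMap.smul_apply, Finset.smul_sum]
        refine Finset.sum_congr rfl fun i _ => ?_
        rw [Finset.sum_eq_single a0]
        · simp only [g, δ, Pi.single_eq_same]
          rw [smul_comm]
        · intro b _ hb
          simp [g, δ, hb]
        · simp
      have h6 : u = t⁻¹ • ∑ ia, l ia • g (e + t • δ) ia := by
        rw [h5, smul_smul, inv_mul_cancel₀ ht, one_smul]
      simp only [Option.elim_none, smul_zero, add_zero, SetLike.mem_coe]
      rw [h6]
      exact Submodule.smul_mem _ _ (Submodule.sum_mem _ fun ia _ =>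
        Submodule.smul_mem _ _ (Submodule.subset_span ⟨ia, rfl⟩))
  have h7 := Submodule.finrank_mono hmem
  rw [finrank_span_eq_card hti, Fintype.card_option, hcard] at h7
  have h8 := he (e + t • δ)
  simp only [rk] at h8 h7
  omega

lemma aux_bil {k : Type*} [Field k] {V : Type*} [AddCommGroup V] [Module k V]
    {N : ℕ} (b : Module.Basis (Fin N) k V) (B : V →ₗ[k] V →ₗ[k] k) (u v : V) :
    B u v = ∑ i, ∑ j, B (b i) (b j) * (b.repr u i * b.repr v j) := by
  conv_lhs => rw [← b.sum_repr u, ← b.sum_repr v]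
  simp only [map_sum, LinearMap.sum_apply, map_smul, LinearMap.smul_apply, smul_eq_mul, Finset.mul_sum]
  rw [Finset.sum_comm]
  refine Finset.sum_congr rfl fun i _ => Finset.sum_congr rfl fun j _ => ?_
  ring

lemma aux_tri {k : Type*} [Field k] {V : Type*} [AddCommGroup V] [Module k V]
    {N : ℕ} (b : Module.Basis (Fin N) k V) (T : V →ₗ[k] V →ₗ[k] V →ₗ[k] k) (u v w : V) :
    T u v w = ∑ i, ∑ j, ∑ l, T (b i) (b j) (b l) * (b.repr u i * (b.repr v j * b.repr w l)) := by
  have h1 : T u v w = ∑ i, b.repr u i * T (b i) v w := by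
    conv_lhs => rw [← b.sum_repr u]
    simp only [map_sum, LinearMap.sum_apply, map_smul, LinearMap.smul_apply, smul_eq_mul]
  rw [h1]
  refine Finset.sum_congr rfl fun i _ => ?_
  rw [aux_bil b (T (b i)) v w, Finset.mul_sum]
  refine Finset.sum_congr rfl fun j _ => ?_
  rw [Finset.mul_sum]
  refine Finset.sum_congr rfl fun l _ => ?_
  ring

/-- If `T` vanishes on the common zeros of the `B i`, it vanishes on formal arcs. -/
lemma aux_arc {k : Type*} [Field k] [IsAlgClosed k] {V : Type*} [AddCommGroup V] [Module k V]
    [FiniteDimensional k V] (T : V →ₗ[k] V →ₗ[k] V →ₗ[k] k) {s : ℕ}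
    (B : Fin s → V →ₗ[k] V →ₗ[k] k)
    (hvan : ∀ x, (∀ i, B i x x = 0) → T x x x = 0)
    (y : ℕ → V) (hy : ∀ i m, ∑ p ∈ Finset.HasAntidiagonal.antidiagonal m, B i (y p.1) (y p.2) = 0) (m : ℕ) :
    ∑ p ∈ Finset.HasAntidiagonal.antidiagonal m, ∑ p' ∈ Finset.HasAntidiagonal.antidiagonal p.2,
      T (y p.1) (y p'.1) (y p'.2) = 0 := by
  set b := Module.finBasis k V
  set N := Module.finrank k V
  let pT : MvPolynomial (Fin N) k := ∑ i, ∑ j, ∑ l, MvPolynomial.C (T (b i) (b j) (b l)) *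
    (MvPolynomial.X i * (MvPolynomial.X j * MvPolynomial.X l))
  let pB : Fin s → MvPolynomial (Fin N) k := fun r => ∑ i, ∑ j, MvPolynomial.C (B r (b i) (b j)) *
    (MvPolynomial.X i * MvPolynomial.X j)
  have hev : ∀ x : Fin N → k, ∃ v : V, MvPolynomial.aeval x pT = T v v v ∧
      ∀ r, MvPolynomial.aeval x (pB r) = B r v v := by
    intro x
    refine ⟨b.equivFun.symm x, ?_, ?_⟩
    · rw [aux_tri b]
      have : ∀ i, b.repr (b.equivFun.symm x) i = x i := fun i => by
        rw [← b.equivFun_apply, LinearEquiv.apply_symm_apply]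
      simp only [this, pT, map_sum, map_mul, MvPolynomial.aeval_X, MvPolynomial.aeval_C, Algebra.algebraMap_self, RingHom.id_apply]
    · intro r
      rw [aux_bil b]
      have : ∀ i, b.repr (b.equivFun.symm x) i = x i := fun i => by
        rw [← b.equivFun_apply, LinearEquiv.apply_symm_apply]
      simp only [this, pB, map_sum, map_mul, MvPolynomial.aeval_X, MvPolynomial.aeval_C, Algebra.algebraMap_self, RingHom.id_apply]
  have hrad : pT ∈ (Ideal.span (Set.range pB)).radical := by
    rw [← MvPolynomial.vanishingIdeal_zeroLocus_eq_radical (K := k), MvPolynomial.zeroLocus_span]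
    intro x hx
    obtain ⟨v, hv, hv'⟩ := hev x
    rw [hv]
    refine hvan v fun r => ?_
    rw [← hv' r]
    exact hx _ ⟨r, rfl⟩
  obtain ⟨M, hM⟩ := hrad
  let ξ : Fin N → PowerSeries k := fun a => PowerSeries.mk fun m => b.repr (y m) a
  let Φ : MvPolynomial (Fin N) k →ₐ[k] PowerSeries k := MvPolynomial.aeval ξ
  have hC : ∀ c : k, algebraMap k (PowerSeries k) c = PowerSeries.C c := fun c => rfl
  have hB : ∀ r, Φ (pB r) = 0 := by
    intro r
    ext m
    rw [map_zero, ← hy r m]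
    simp only [Φ, pB, map_sum, map_mul, MvPolynomial.aeval_X, MvPolynomial.aeval_C, hC,
      PowerSeries.coeff_C_mul]
    simp only [PowerSeries.coeff_mul, ξ, PowerSeries.coeff_mk]
    simp only [aux_bil b (B r) (y _)]
    symm
    rw [Finset.sum_comm]
    refine Finset.sum_congr rfl fun i _ => ?_
    rw [Finset.sum_comm]
    refine Finset.sum_congr rfl fun j _ => ?_
    rw [Finset.mul_sum]
  have hT : Φ pT = 0 := by
    have h1 : Φ (pT ^ M) = 0 := by
      have : Ideal.span (Set.range pB) ≤ RingHom.ker Φ := by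
        rw [Ideal.span_le]
        rintro _ ⟨r, rfl⟩
        exact hB r
      exact this hM
    rw [map_pow] at h1
    exact eq_zero_of_pow_eq_zero h1
  have h2 := congrArg (PowerSeries.coeff m) hT
  rw [map_zero] at h2
  rw [← h2]
  simp only [Φ, pT, map_sum, map_mul, MvPolynomial.aeval_X, MvPolynomial.aeval_C, hC,
      PowerSeries.coeff_C_mul]
  simp only [PowerSeries.coeff_mul, ξ, PowerSeries.coeff_mk]
  simp only [aux_tri b T (y _)]
  have h3 : ∀ p : ℕ × ℕ, ∑ p' ∈ Finset.HasAntidiagonal.antidiagonal p.2,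
      ∑ i, ∑ j, ∑ l, T (b i) (b j) (b l) *
        (b.repr (y p.1) i * (b.repr (y p'.1) j * b.repr (y p'.2) l)) =
      ∑ i, ∑ j, ∑ l, T (b i) (b j) (b l) *
        (b.repr (y p.1) i * ∑ p' ∈ Finset.HasAntidiagonal.antidiagonal p.2,
          (b.repr (y p'.1) j * b.repr (y p'.2) l)) := by
    intro p
    rw [Finset.sum_comm]
    refine Finset.sum_congr rfl fun i _ => ?_
    rw [Finset.sum_comm]
    refine Finset.sum_congr rfl fun j _ => ?_
    rw [Finset.sum_comm]
    refine Finset.sum_congr rfl fun l _ => ?_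
    rw [Finset.mul_sum, Finset.mul_sum]
  simp only [h3]
  rw [Finset.sum_comm]
  refine Finset.sum_congr rfl fun i _ => ?_
  rw [Finset.sum_comm]
  refine Finset.sum_congr rfl fun j _ => ?_
  rw [Finset.sum_comm]
  refine Finset.sum_congr rfl fun l _ => ?_
  rw [Finset.mul_sum]

/-- coefficients of the formal arc -/
noncomputable def auxSeq {k : Type*} [Field k] {V : Type*} [AddCommGroup V] [Module k V] {s : ℕ}
    (B : Fin s → V →ₗ[k] V →ₗ[k] k) (w : Fin s → V) (e z : V) : ℕ → V
  | 0 => e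
  | 1 => z
  | n + 2 => -∑ i, ((2 : k)⁻¹ * ∑ j : Fin (n + 1),
      B i (auxSeq B w e z (j + 1)) (auxSeq B w e z (n + 1 - j))) • w i
  termination_by m => m
  decreasing_by all_goals omega

lemma auxSeq_spec {k : Type*} [Field k] (h2 : (2 : k) ≠ 0) {V : Type*} [AddCommGroup V]
    [Module k V] {s : ℕ}
    (B : Fin s → V →ₗ[k] V →ₗ[k] k) (hB : ∀ i x y, B i x y = B i y x) (w : Fin s → V) (e z : V)
    (he : ∀ i, B i e e = 0) (hz : ∀ i, B i e z = 0)
    (hw : ∀ i j, B i e (w j) = if i = j then 1 else 0) (i : Fin s) (m : ℕ) :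
    ∑ p ∈ Finset.HasAntidiagonal.antidiagonal m,
      B i (auxSeq B w e z p.1) (auxSeq B w e z p.2) = 0 := by
  rw [Finset.Nat.sum_antidiagonal_eq_sum_range_succ_mk]
  match m with
  | 0 => simp [auxSeq, he]
  | 1 => simp [Finset.sum_range_succ, auxSeq, hz, hB i z e]
  | n + 2 =>
    rw [Finset.sum_range_succ, Finset.sum_range_succ', Finset.sum_range]
    have h0 : auxSeq B w e z 0 = e := by rw [auxSeq]
    have h1 : B i e (auxSeq B w e z (n + 2)) = - ((2 : k)⁻¹ * ∑ j : Fin (n + 1),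
      B i (auxSeq B w e z (j + 1)) (auxSeq B w e z (n + 1 - j))) := by
      rw [auxSeq]
      simp [hw]
    simp only [Nat.sub_self, Nat.sub_zero, h0, hB i _ e, h1]
    have h3 : ∀ j : Fin (n + 1), n + 2 - ((j : ℕ) + 1) = n + 1 - j := fun j => by omega
    simp only [h3]
    field_simp
    ring

lemma aux_smooth {k : Type*} [Field k] [IsAlgClosed k] (h2 : (2 : k) ≠ 0)
    {V : Type*} [AddCommGroup V] [Module k V]
    [FiniteDimensional k V] (T : V →ₗ[k] V →ₗ[k] V →ₗ[k] k)
    (hT1 : ∀ x y z, T x y z = T y x z) (hT2 : ∀ x y z, T x y z = T x z y) {s : ℕ}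
    (B : Fin s → V →ₗ[k] V →ₗ[k] k) (hB : ∀ i x y, B i x y = B i y x)
    (hvan : ∀ x, (∀ i, B i x x = 0) → T x x x = 0)
    (e : V) (he : ∀ i, B i e e = 0) (hind : LinearIndependent k (fun i => B i e)) :
    AuxQR k (fun x => T x x x) (s + s) := by
  classical
  let Φ : V →ₗ[k] (Fin s → k) := LinearMap.pi fun i => B i e
  have hsurj : LinearMap.range Φ = ⊤ := by
    by_contra hne
    obtain ⟨φ, hφ, hle⟩ := Submodule.exists_le_ker_of_lt_top _ (lt_top_iff_ne_top.2 hne)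
    apply hφ
    have h0 : ∀ x, φ (Φ x) = 0 := fun x => hle ⟨x, rfl⟩
    have h1 := Fintype.linearIndependent_iff.1 hind (fun i => φ (Pi.single i 1)) (by
      ext x
      have h3 := h0 x
      rw [LinearMap.pi_apply_eq_sum_univ φ] at h3
      simp only [LinearMap.sum_apply, LinearMap.smul_apply, smul_eq_mul, LinearMap.zero_apply]
      rw [← h3]
      refine Finset.sum_congr rfl fun i _ => ?_
      have hs : (fun j => if i = j then (1 : k) else 0) = Pi.single i 1 := by
        ext j; simp [Pi.single_apply, eq_comm]
      rw [hs, smul_eq_mul, mul_comm]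
      rfl)
    ext i
    simpa using h1 i
  have hw : ∀ j : Fin s, ∃ w, Φ w = Pi.single j 1 := fun j => by
    have : Pi.single j (1 : k) ∈ LinearMap.range Φ := by rw [hsurj]; trivial
    exact this
  choose w hw using hw
  have hw' : ∀ i j, B i e (w j) = if i = j then 1 else 0 := by
    intro i j
    have := congrFun (hw j) i
    simpa [Φ, Pi.single_apply] using this
  have hrn := LinearMap.finrank_range_add_finrank_ker Φ
  rw [hsurj, finrank_top, Module.finrank_fin_fun] at hrn
  refine AuxQR.of_res T (LinearMap.ker Φ) (by omega) ?_
  refine ⟨Fin s, inferInstance, by simp, fun j => (((3 : k) • (T e).flip (w j) -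
      ∑ i, ((3 : k) * 2⁻¹ * T e e (w i)) • (B i).flip (w j)).comp (LinearMap.ker Φ).subtype),
      fun j => (B j).domRestrict₁₂ _ _, ?_⟩
  rintro ⟨z, hz⟩
  have hz' : ∀ i, B i e z = 0 := fun i => congrFun (show Φ z = 0 from hz) i
  have harc := aux_arc T B hvan (auxSeq B w e z) (auxSeq_spec h2 B hB w e z he hz' hw') 3
  have y0 : auxSeq B w e z 0 = e := by rw [auxSeq]
  have y1 : auxSeq B w e z 1 = z := by rw [auxSeq]
  have y2 : auxSeq B w e z 2 = -∑ i, ((2 : k)⁻¹ * B i z z) • w i := by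
    rw [auxSeq]; simp [y1]
  have y3 : auxSeq B w e z 3 = -∑ i, B i z (auxSeq B w e z 2) • w i := by
    rw [auxSeq]
    refine neg_inj.2 (Finset.sum_congr rfl fun i _ => ?_)
    congr 1
    rw [show (∑ j : Fin (1 + 1), B i (auxSeq B w e z (j + 1)) (auxSeq B w e z (1 + 1 - j))) = _
      from Fin.sum_univ_two _]
    simp only [Fin.val_zero, Fin.val_one, Nat.zero_add, Nat.sub_zero, Nat.reduceAdd,
      Nat.reduceSub, y1]
    rw [hB i _ z]
    field_simp
    ring
  simp only [Finset.Nat.antidiagonal_succ, Finset.Nat.antidiagonal_zero, Finset.map_singleton, Finset.sum_cons, Finset.map_cons,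
     Finset.sum_singleton, Function.Embedding.prodMap, Function.Embedding.coeFn_mk, Prod.map, Function.Embedding.refl_apply, Nat.succ_eq_add_one, Nat.reduceAdd, zero_add, y0, y1] at harc
  set Y2 := auxSeq B w e z 2
  set Y3 := auxSeq B w e z 3
  have h5 : T z z z = -(6 * T e z Y2) - 3 * T e e Y3 := by
    have a1 : T e Y2 z = T e z Y2 := hT2 _ _ _
    have a2 : T z e Y2 = T e z Y2 := hT1 _ _ _
    have a3 : T z Y2 e = T e z Y2 := by rw [hT2, hT1]
    have a4 : T Y2 e z = T e z Y2 := by rw [hT1, hT2]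
    have a5 : T Y2 z e = T e z Y2 := by rw [hT2, hT1, hT2]
    have a6 : T e Y3 e = T e e Y3 := hT2 _ _ _
    have a7 : T Y3 e e = T e e Y3 := by rw [hT1, hT2]
    linear_combination harc - a1 - a2 - a3 - a4 - a5 - a6 - a7
  have e1 : T e z Y2 = -∑ j, (2 : k)⁻¹ * B j z z * T e z (w j) := by
    rw [y2]; simp
  have e2 : T e e Y3 = ∑ j, ∑ i, T e e (w i) * (2⁻¹ * B j z z * B i z (w j)) := by
    rw [y3, y2]
    simp only [map_neg, map_sum, map_smul, smul_eq_mul, neg_smul, Finset.sum_neg_distrib, neg_neg]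
    rw [Finset.sum_comm]
    refine Finset.sum_congr rfl fun i _ => ?_
    rw [Finset.sum_mul]
    refine Finset.sum_congr rfl fun j _ => ?_
    ring
  have hg : ∀ j, (((3 : k) • (T e).flip (w j) -
      ∑ i, ((3 : k) * 2⁻¹ * T e e (w i)) • (B i).flip (w j)).comp (LinearMap.ker Φ).subtype) ⟨z, hz⟩ *
      (B j).domRestrict₁₂ (LinearMap.ker Φ) (LinearMap.ker Φ) ⟨z, hz⟩ ⟨z, hz⟩ =
      6 * (2⁻¹ * B j z z * T e z (w j)) -
        3 * ∑ i, T e e (w i) * (2⁻¹ * B j z z * B i z (w j)) := by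
    intro j
    simp only [LinearMap.comp_apply, LinearMap.sub_apply, LinearMap.smul_apply, LinearMap.sum_apply,
      LinearMap.flip_apply, Submodule.subtype_apply, smul_eq_mul, LinearMap.domRestrict₁₂_apply]
    rw [sub_mul, Finset.sum_mul, Finset.mul_sum]
    congr 1
    · field_simp; ring
    · refine Finset.sum_congr rfl fun i _ => ?_
      ring
  rw [Finset.sum_congr rfl fun j _ => hg j, Finset.sum_sub_distrib, ← Finset.mul_sum,
    ← Finset.mul_sum, ← e2]
  show T z z z = _
  rw [h5, e1]
  ring


lemma aux_case2 {k : Type*} [Field k] [IsAlgClosed k] (h2 : (2 : k) ≠ 0)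
    {V : Type*} [AddCommGroup V] [Module k V]
    [FiniteDimensional k V] (T : V →ₗ[k] V →ₗ[k] V →ₗ[k] k)
    (hT1 : ∀ x y z, T x y z = T y x z) (hT2 : ∀ x y z, T x y z = T x z y) {s : ℕ}
    (B : Fin s → V →ₗ[k] V →ₗ[k] k) (hB : ∀ i x y, B i x y = B i y x)
    (hvan : ∀ x, (∀ i, B i x x = 0) → T x x x = 0)
    (hrk : ∀ l : Fin s → k, l ≠ 0 →
      s * (s + 1) ≤ Module.finrank k (LinearMap.range (∑ i, l i • B i))) :
    AuxQR k (fun x => T x x x) (s + s) := by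
  classical
  have : Infinite k := IsAlgClosed.instInfinite
  obtain ⟨e, he⟩ := aux_indep (N := s + 1) B hrk
  let p : Fin s → MvPolynomial (Fin (s + 1)) k := fun i =>
    ∑ a, ∑ b, MvPolynomial.C (B i (e a) (e b)) * (MvPolynomial.X a * MvPolynomial.X b)
  have hp : ∀ i x, MvPolynomial.eval x (p i) = B i (∑ a, x a • e a) (∑ a, x a • e a) := by
    intro i x
    simp only [p, map_sum, map_mul, MvPolynomial.eval_C, MvPolynomial.eval_X, map_smul,
      LinearMap.sum_apply, LinearMap.smul_apply, smul_eq_mul, Finset.mul_sum]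
    rw [Finset.sum_comm]
    refine Finset.sum_congr rfl fun a _ => Finset.sum_congr rfl fun b _ => ?_
    ring
  obtain ⟨x, hx, hx0⟩ := aux_zero (Nat.lt_succ_self s) p (by intro i; rw [hp]; simp)
  refine aux_smooth h2 T hT1 hT2 B hB hvan (∑ a, x a • e a) (fun i => by rw [← hp, hx0]) ?_
  obtain ⟨a0, ha0⟩ : ∃ a, x a ≠ 0 := by
    by_contra hcon
    push Not at hcon
    exact hx (funext hcon)
  rw [Fintype.linearIndependent_iff] at he ⊢
  intro g hg i
  have := he (fun ia => g ia.1 * x ia.2) (by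
    rw [← hg, Fintype.sum_prod_type]
    refine Finset.sum_congr rfl fun i _ => ?_
    rw [map_sum, Finset.smul_sum]
    refine Finset.sum_congr rfl fun a _ => ?_
    rw [map_smul, smul_smul]) (i, a0)
  exact (mul_eq_zero.1 this).resolve_right ha0

def auxC (s : ℕ) : ℕ := s * (s * (s + 1)) + 2 * s

lemma aux_key.{v, u} {k : Type u} [Field k] [IsAlgClosed k] (h2 : (2 : k) ≠ 0) (s : ℕ) :
    ∀ {V : Type v} [AddCommGroup V] [Module k V]
    [FiniteDimensional k V] (T : V →ₗ[k] V →ₗ[k] V →ₗ[k] k)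
    (_ : ∀ x y z, T x y z = T y x z) (_ : ∀ x y z, T x y z = T x z y) 
    (B : Fin s → V →ₗ[k] V →ₗ[k] k) (_ : ∀ i x y, B i x y = B i y x)
    (_ : ∀ x, (∀ i, B i x x = 0) → T x x x = 0),
    AuxQR k (fun x => T x x x) (auxC s) := by
  induction s with
  | zero =>
    intro V _ _ _ T hT1 hT2 B hB hvan
    refine ⟨Fin 0, inferInstance, by simp, fun _ => 0, fun _ => 0, fun x => ?_⟩
    simpa using hvan x (fun i => i.elim0)
  | succ s ih =>
    intro V _ _ _ T hT1 hT2 B hB hvan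
    by_cases hrk : ∀ l : Fin (s + 1) → k, l ≠ 0 →
      (s + 1) * (s + 1 + 1) ≤ Module.finrank k (LinearMap.range (∑ i, l i • B i))
    · exact (aux_case2 h2 T hT1 hT2 B hB hvan hrk).mono (by unfold auxC; rw [two_mul]; exact Nat.le_add_left _ _)
    push Not at hrk
    obtain ⟨l, hl, hrk⟩ := hrk
    obtain ⟨i0, hi0⟩ : ∃ a, l a ≠ 0 := by
      by_contra hcon
      push Not at hcon
      exact hl (funext hcon)
    set W := LinearMap.ker (∑ i, l i • B i) with hW
    have hfr := LinearMap.finrank_range_add_finrank_ker (∑ i, l i • B i)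
    rw [← hW] at hfr
    have key := AuxQR.of_res T W (a := (s + 1) * (s + 1 + 1)) (c := auxC s) (by omega) (by
      refine ih (auxRes T W) (fun x y z => hT1 _ _ _) (fun x y z => hT2 _ _ _)
        (fun i => (B (i0.succAbove i)).domRestrict₁₂ W W) (fun i x y => hB _ _ _) ?_
      intro x hx
      refine hvan x ?_
      have h0 : ∀ i, B (i0.succAbove i) x x = 0 := hx
      have h1 : (∑ i, l i • B i) x x = 0 := by
        rw [LinearMap.mem_ker.1 x.2]; rfl
      rw [Fin.sum_univ_succAbove _ i0] at h1
      simp only [LinearMap.add_apply, LinearMap.smul_apply, LinearMap.sum_apply, smul_eq_mul, h0,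
        mul_zero, Finset.sum_const_zero, add_zero] at h1
      intro i
      rcases Fin.eq_self_or_eq_succAbove i0 i with rfl | ⟨j, rfl⟩
      · exact (mul_eq_zero.1 h1).resolve_left hi0
      · exact h0 j)
    refine key.mono ?_
    unfold auxC
    nlinarith

/-- Key with extra linear functionals, contrapositive. -/
lemma aux_key' {k : Type*} [Field k] [IsAlgClosed k] (h2 : (2 : k) ≠ 0)
    {V : Type*} [AddCommGroup V] [Module k V]
    [FiniteDimensional k V] (T : V →ₗ[k] V →ₗ[k] V →ₗ[k] k)
    (hT1 : ∀ x y z, T x y z = T y x z) (hT2 : ∀ x y z, T x y z = T x z y) (s : ℕ)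
    {ι : Type*} [Fintype ι] (α : ι → V →ₗ[k] k)
    (B : Fin s → V →ₗ[k] V →ₗ[k] k) (hB : ∀ i x y, B i x y = B i y x)
    (h : ¬ AuxQR k (fun x => T x x x) (Fintype.card ι + auxC s)) :
    ∃ x, (∀ a, α a x = 0) ∧ (∀ i, B i x x = 0) ∧ T x x x ≠ 0 := by
  by_contra hcon
  push Not at hcon
  apply h
  let Φ : V →ₗ[k] (ι → k) := LinearMap.pi α
  have hfr := LinearMap.finrank_range_add_finrank_ker Φ
  have hle : Module.finrank k (LinearMap.range Φ) ≤ Fintype.card ι := by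
    simpa using Submodule.finrank_le (LinearMap.range Φ)
  refine AuxQR.of_res T (LinearMap.ker Φ) (by omega) ?_
  refine aux_key h2 s (auxRes T _) (fun x y z => hT1 _ _ _) (fun x y z => hT2 _ _ _)
        (fun i => (B i).domRestrict₁₂ _ _) (fun i x y => hB _ _ _) ?_
  intro x hx
  exact hcon x (fun a => congrFun (show Φ x = 0 from x.2) a) hx

lemma aux_diag {k : Type*} [Field k] [IsAlgClosed k] (h2 : (2 : k) ≠ 0)
    {V : Type*} [AddCommGroup V] [Module k V]
    [FiniteDimensional k V] (T : V →ₗ[k] V →ₗ[k] V →ₗ[k] k)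
    (hT1 : ∀ x y z, T x y z = T y x z) (hT2 : ∀ x y z, T x y z = T x z y) (m : ℕ)
    (h : ¬ AuxQR k (fun x => T x x x) (m * m + auxC m)) :
    ∃ v : Fin m → V, ∀ i j l, T (v i) (v j) (v l) = if i = j ∧ j = l then 1 else 0 := by
  induction m with
  | zero => exact ⟨fun _ => 0, fun i => i.elim0⟩
  | succ m ih =>
    have hmono : m * m + auxC m ≤ (m + 1) * (m + 1) + auxC (m + 1) := by
      unfold auxC; nlinarith
    obtain ⟨v, hv⟩ := ih (fun h' => h (h'.mono hmono))
    obtain ⟨x, hx1, hx2, hx3⟩ := aux_key' h2 T hT1 hT2 m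
      (fun p : Fin m × Fin m => T (v p.1) (v p.2)) (fun i => T (v i)) (fun i x y => hT2 _ _ _)
      (fun h' => h (h'.mono (by simpa using hmono)))
    obtain ⟨c, hc⟩ := IsAlgClosed.exists_pow_nat_eq (T x x x)⁻¹ (n := 3) (by norm_num)
    have b1 : ∀ i j, T (v i) (v j) x = 0 := fun i j => hx1 (i, j)
    have b2 : ∀ i j, T (v i) x (v j) = 0 := fun i j => by rw [hT2]; exact b1 i j
    have b3 : ∀ i j, T x (v i) (v j) = 0 := fun i j => by rw [hT1]; exact b2 i j
    have b4 : ∀ i, T (v i) x x = 0 := hx2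
    have b5 : ∀ i, T x (v i) x = 0 := fun i => by rw [hT1]; exact b4 i
    have b6 : ∀ i, T x x (v i) = 0 := fun i => by rw [hT2]; exact b5 i
    have b7 : c * (c * (c * T x x x)) = 1 := by
      have : c * (c * (c * T x x x)) = c ^ 3 * T x x x := by ring
      rw [this, hc, inv_mul_cancel₀ hx3]
    refine ⟨Fin.cons (c • x) v, fun i j l => ?_⟩
    refine Fin.cases ?_ (fun i => ?_) i <;> refine Fin.cases ?_ (fun j => ?_) j <;>
      refine Fin.cases ?_ (fun l => ?_) l <;>
      simp [b1, b2, b3, b4, b5, b6, b7, hv, Fin.succ_ne_zero, (Fin.succ_ne_zero _).symm]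

lemma aux_pderiv_comm {k : Type*} [Field k] {n : ℕ} (i j : Fin n) (f : MvPolynomial (Fin n) k) :
    MvPolynomial.pderiv i (MvPolynomial.pderiv j f) =
      MvPolynomial.pderiv j (MvPolynomial.pderiv i f) := by
  classical
  have h : ⁅MvPolynomial.pderiv (R := k) i, MvPolynomial.pderiv (R := k) j⁆ = 0 := by
    refine MvPolynomial.derivation_ext fun a => ?_
    rw [Derivation.commutator_apply]
    simp only [MvPolynomial.pderiv_X, Pi.single_apply]
    split_ifs <;> simp
  have h' := congrArg (fun D : Derivation k (MvPolynomial (Fin n) k) (MvPolynomial (Fin n) k) => D f) h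
  simp only [Derivation.commutator_apply, Derivation.zero_apply] at h'
  exact sub_eq_zero.1 h'

lemma aux_coeffs {k : Type*} [Field k] (h2 : (2 : k) ≠ 0) (h3 : (3 : k) ≠ 0) {n : ℕ}
    (f : MvPolynomial (Fin n) k) (hf : f.IsHomogeneous 3) :
    ∃ c : Fin n → Fin n → Fin n → k, (∀ i j l, c i j l = c j i l) ∧ (∀ i j l, c i j l = c i l j) ∧
      ∀ x, MvPolynomial.eval x f = ∑ i, ∑ j, ∑ l, c i j l * (x i * (x j * x l)) := by
  let c : Fin n → Fin n → Fin n → k := fun i j l => (6 : k)⁻¹ * MvPolynomial.coeff 0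
    (MvPolynomial.pderiv l (MvPolynomial.pderiv j (MvPolynomial.pderiv i f)))
  refine ⟨c, fun i j l => ?_, fun i j l => ?_, fun x => ?_⟩
  · simp only [c, aux_pderiv_comm j i]
  · simp only [c, aux_pderiv_comm l j]
  · have e1 := hf.sum_X_mul_pderiv
    have e2 := fun i => (hf.pderiv (i := i)).sum_X_mul_pderiv
    have e3 := fun i j => ((hf.pderiv (i := i)).pderiv (i := j)).sum_X_mul_pderiv
    have e4 : ∀ i j l, MvPolynomial.eval x
        (MvPolynomial.pderiv l (MvPolynomial.pderiv j (MvPolynomial.pderiv i f))) =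
        6 * c i j l := by
      intro i j l
      have h6 : (6 : k) ≠ 0 := by
        have : (6 : k) = 2 * 3 := by norm_num
        rw [this]; exact mul_ne_zero h2 h3
      have h := ((hf.pderiv (i := i)).pderiv (i := j)).pderiv (i := l)
      have h' := MvPolynomial.totalDegree_eq_zero_iff_eq_C.1
        (MvPolynomial.totalDegree_zero_iff_isHomogeneous (σ := Fin n) |>.2 h)
      rw [h']
      simp only [MvPolynomial.eval_C, c]
      field_simp
    have f1 := congrArg (MvPolynomial.eval x) e1
    have f2 := fun i => congrArg (MvPolynomial.eval x) (e2 i)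
    have f3 := fun i j => congrArg (MvPolynomial.eval x) (e3 i j)
    simp only [map_sum, map_mul, MvPolynomial.eval_X, e4, nsmul_eq_mul] at f1 f2 f3
    norm_num at f1 f2 f3
    have h6 : (6 : k) * MvPolynomial.eval x f =
      6 * ∑ i, ∑ j, ∑ l, c i j l * (x i * (x j * x l)) := by
      have : (6 : k) * MvPolynomial.eval x f = 2 * (3 * MvPolynomial.eval x f) := by ring
      rw [this, ← f1, Finset.mul_sum, Finset.mul_sum]
      refine Finset.sum_congr rfl fun i _ => ?_
      have : 2 * (x i * MvPolynomial.eval x (MvPolynomial.pderiv i f)) =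
        x i * (2 * MvPolynomial.eval x (MvPolynomial.pderiv i f)) := by ring
      rw [this, ← f2, Finset.mul_sum, Finset.mul_sum]
      refine Finset.sum_congr rfl fun j _ => ?_
      rw [← f3, Finset.mul_sum, Finset.mul_sum, Finset.mul_sum]
      refine Finset.sum_congr rfl fun l _ => ?_
      ring
    have h6' : (6 : k) ≠ 0 := by
      have : (6 : k) = 2 * 3 := by norm_num
      rw [this]; exact mul_ne_zero h2 h3
    exact mul_left_cancel₀ h6' h6

lemma aux_T {k : Type*} [Field k] {n : ℕ} (c : Fin n → Fin n → Fin n → k) :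
    ∃ T : (Fin n → k) →ₗ[k] (Fin n → k) →ₗ[k] (Fin n → k) →ₗ[k] k,
      ∀ x y z, T x y z = ∑ i, ∑ j, ∑ l, c i j l * (x i * (y j * z l)) := by
  refine ⟨∑ i, ∑ j, ∑ l, c i j l • (LinearMap.proj (R := k) (φ := fun _ : Fin n => k) i).smulRight
    ((LinearMap.proj (R := k) (φ := fun _ : Fin n => k) j).smulRight
    (LinearMap.proj (R := k) (φ := fun _ : Fin n => k) l)), fun x y z => ?_⟩
  simp [LinearMap.sum_apply]

lemma aux_T' {k : Type*} [Field k] (h2 : (2 : k) ≠ 0) (h3 : (3 : k) ≠ 0) {n : ℕ}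
    (f : MvPolynomial (Fin n) k) (hf : f.IsHomogeneous 3) :
    ∃ T : (Fin n → k) →ₗ[k] (Fin n → k) →ₗ[k] (Fin n → k) →ₗ[k] k,
      (∀ x y z, T x y z = T y x z) ∧ (∀ x y z, T x y z = T x z y) ∧
      ∀ x, MvPolynomial.eval x f = T x x x := by
  obtain ⟨c, h1, h1', hc⟩ := aux_coeffs h2 h3 f hf
  obtain ⟨T, hT⟩ := aux_T c
  refine ⟨T, fun x y z => ?_, fun x y z => ?_, fun x => by rw [hT, hc]⟩
  · rw [hT, hT, Finset.sum_comm]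
    refine Finset.sum_congr rfl fun i _ => Finset.sum_congr rfl fun j _ =>
      Finset.sum_congr rfl fun l _ => ?_
    rw [h1]; ring
  · rw [hT, hT]
    refine Finset.sum_congr rfl fun i _ => ?_
    rw [Finset.sum_comm]
    refine Finset.sum_congr rfl fun j _ =>
      Finset.sum_congr rfl fun l _ => ?_
    rw [h1']; ring

lemma aux_qrank {k : Type*} [Field k] [Infinite k] {n : ℕ}
    (f : MvPolynomial (Fin n) k) (c : ℕ) (h : AuxQR k (fun x => MvPolynomial.eval x f) c) :
    polyQRank f ≤ c := by
  classical
  obtain ⟨ι, _, hc, ℓ, q, hq⟩ := h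
  refine le_trans (sInf_le ?_) (Nat.cast_le.2 hc)
  let e := Fintype.equivFin ι
  refine ⟨_, rfl, fun a => ∑ j, MvPolynomial.C (ℓ (e.symm a) (Pi.single j 1)) * MvPolynomial.X j,
    fun a => ∑ i, ∑ j, MvPolynomial.C (q (e.symm a) (Pi.single i 1) (Pi.single j 1)) *
      (MvPolynomial.X i * MvPolynomial.X j), ?_, ?_, ?_⟩
  · intro a
    refine MvPolynomial.IsHomogeneous.sum _ _ _ fun j _ => ?_
    simpa using (MvPolynomial.isHomogeneous_C _ _).mul (MvPolynomial.isHomogeneous_X k j)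
  · intro a
    refine MvPolynomial.IsHomogeneous.sum _ _ _ fun i _ =>
      MvPolynomial.IsHomogeneous.sum _ _ _ fun j _ => ?_
    simpa using (MvPolynomial.isHomogeneous_C _ _).mul
      ((MvPolynomial.isHomogeneous_X k i).mul (MvPolynomial.isHomogeneous_X k j))
  · refine MvPolynomial.funext fun x => ?_
    have hx : x = ∑ j, x j • (Pi.single j (1 : k) : Fin n → k) := by
      ext i; simp [Pi.single_apply]
    refine (hq x).trans ?_
    simp only [map_sum, map_mul, MvPolynomial.eval_C, MvPolynomial.eval_X]
    rw [← e.symm.sum_comp (fun i => ℓ i x * q i x x)]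
    refine Finset.sum_congr rfl fun a _ => ?_
    congr 1
    · conv_lhs => rw [hx]
      simp only [map_sum, map_smul, smul_eq_mul, mul_comm]
    · conv_lhs => rw [hx]
      simp only [map_sum, map_smul, smul_eq_mul, LinearMap.sum_apply, LinearMap.smul_apply,
        Finset.mul_sum]
      rw [Finset.sum_comm]
      refine Finset.sum_congr rfl fun i _ => Finset.sum_congr rfl fun j _ => ?_
      ring

lemma aux_cubes {k : Type*} [Field k] [IsAlgClosed k] (h2 : (2 : k) ≠ 0) (h3 : (3 : k) ≠ 0) {d : ℕ}
    (h : MvPolynomial (Fin d) k) (hh : h.IsHomogeneous 3) :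
    ∃ L : Fin (4 * d ^ 3) → (Fin d → k) →ₗ[k] k, ∀ x, MvPolynomial.eval x h = ∑ a, L a x ^ 3 := by
  classical
  obtain ⟨c, -, -, hc⟩ := aux_coeffs h2 h3 h hh
  have hroot : ∀ y : k, ∃ z, z ^ 3 = y := fun y => IsAlgClosed.exists_pow_nat_eq y (by norm_num)
  choose rt hrt using hroot
  let p : Fin d → (Fin d → k) →ₗ[k] k := fun i => LinearMap.proj i
  let L : (Fin d × Fin d × Fin d) × Fin 4 → (Fin d → k) →ₗ[k] k := fun a =>
    match a with
    | ((i, j, l), t) => ![rt ((24 : k)⁻¹ * c i j l) • (p i + p j + p l),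
        rt (-((24 : k)⁻¹ * c i j l)) • (p i + p j - p l),
        rt (-((24 : k)⁻¹ * c i j l)) • (p i - p j + p l),
        rt (-((24 : k)⁻¹ * c i j l)) • (-p i + p j + p l)] t
  have hcard : Fintype.card ((Fin d × Fin d × Fin d) × Fin 4) = 4 * d ^ 3 := by
    simp; ring
  let e := Fintype.equivFinOfCardEq hcard
  refine ⟨fun a => L (e.symm a), fun x => ?_⟩
  have h24 : (24 : k) ≠ 0 := by
    have : (24 : k) = 2 * 2 * 2 * 3 := by norm_num
    rw [this]; exact mul_ne_zero (mul_ne_zero (mul_ne_zero h2 h2) h2) h3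
  rw [e.symm.sum_comp (fun a => L a x ^ 3), hc]
  simp only [Fintype.sum_prod_type]
  refine Finset.sum_congr rfl fun i _ => Finset.sum_congr rfl fun j _ =>
    Finset.sum_congr rfl fun l _ => ?_
  simp only [Fin.sum_univ_four, L, p, Matrix.cons_val, LinearMap.smul_apply, LinearMap.add_apply,
    LinearMap.sub_apply, LinearMap.neg_apply, LinearMap.proj_apply, smul_eq_mul]
  linear_combination (-(x i + x j + x l) ^ 3) * hrt ((24 : k)⁻¹ * c i j l) -
    ((x i + x j - x l) ^ 3 + (x i - x j + x l) ^ 3 + (-x i + x j + x l) ^ 3) *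
      hrt (-((24 : k)⁻¹ * c i j l)) - c i j l * x i * x j * x l * mul_inv_cancel₀ h24


lemma aux_num (r d : ℕ) (hrbig : Real.exp 240 < (r : ℝ)) (hd : 0 < d)
    (hlog : (d : ℝ) < Real.log r / 3) :
    (4 * d ^ 3) * (4 * d ^ 3) + auxC (4 * d ^ 3) < r := by
  have hr0 : (0 : ℝ) < r := lt_trans (Real.exp_pos _) hrbig
  set x := Real.log r with hx
  have hx240 : 240 < x := (Real.lt_log_iff_exp_lt hr0).2 hrbig
  have hre : Real.exp x = r := Real.exp_log hr0
  have h12 := Real.pow_div_factorial_le_exp x (by linarith) 12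
  have hd9 : (d : ℝ) ^ 9 ≤ (x / 3) ^ 9 := pow_le_pow_left₀ (by positivity) hlog.le 9
  have hx3 : (240 : ℝ) ^ 3 < x ^ 3 := pow_lt_pow_left₀ hx240 (by norm_num) (by norm_num)
  have hx9 : 0 < x ^ 9 := by positivity
  have h1 : 320 * (x / 3) ^ 9 < x ^ 12 / (Nat.factorial 12 : ℝ) := by
    have hf : (Nat.factorial 12 : ℝ) = 479001600 := by norm_num [Nat.factorial]
    rw [hf]
    have : x ^ 12 = x ^ 9 * x ^ 3 := by ring
    rw [this]
    have h2 : x ^ 9 * 240 ^ 3 < x ^ 9 * x ^ 3 := mul_lt_mul_of_pos_left hx3 hx9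
    have h3 : (x / 3) ^ 9 = x ^ 9 / 19683 := by ring
    rw [h3]
    linarith
  have h4 : (320 : ℝ) * (d : ℝ) ^ 9 < r := by linarith
  have h5 : 320 * d ^ 9 < r := by exact_mod_cast h4
  refine lt_of_le_of_lt ?_ h5
  unfold auxC
  have h6 : 1 ≤ d ^ 3 := Nat.one_le_pow _ _ hd
  have h7 : d ^ 9 = d ^ 3 * (d ^ 3 * d ^ 3) := by ring
  rw [h7]
  generalize d ^ 3 = u at h6
  have h8 : u * 1 ≤ u * u := Nat.mul_le_mul_left _ h6
  have h9 : u * u * 1 ≤ u * u * u := Nat.mul_le_mul_left _ h6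
  nlinarith

lemma aux_eval {k : Type*} [Field k] {n d : ℕ} (y : Fin d → k)
    (φ : Fin n → MvPolynomial (Fin d) k) (g : MvPolynomial (Fin n) k) :
    MvPolynomial.eval y (MvPolynomial.aeval φ g) =
      MvPolynomial.eval (fun j => MvPolynomial.eval y (φ j)) g := by
  rw [MvPolynomial.map_aeval, MvPolynomial.eval]
  congr 2
  ext; simp [MvPolynomial.algebraMap_eq]

lemma aux_zariski {k : Type*} [Field k] [Infinite k] {n : ℕ}
    (f : MvPolynomial (Fin n) k) (M : Matrix (Fin n) (Fin n) k) :
    InZariskiClosure (glOrbit f) (MvPolynomial.aeval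
    (fun j => ∑ i, MvPolynomial.C (M i j) * MvPolynomial.X i) f) := by
  classical
  intro P hP
  let F : MvPolynomial (Fin n) (Polynomial k) := MvPolynomial.eval₂Hom
    (MvPolynomial.C.comp Polynomial.C)
    (fun j => ∑ i, MvPolynomial.C (Polynomial.C (M i j) +
      Polynomial.X * Polynomial.C ((1 : Matrix (Fin n) (Fin n) k) i j)) * MvPolynomial.X i) f
  have hF : ∀ t : k, MvPolynomial.map (Polynomial.evalRingHom t) F = MvPolynomial.aeval
    (fun j => ∑ i, MvPolynomial.C ((M + t • (1 : Matrix (Fin n) (Fin n) k)) i j) *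
      MvPolynomial.X i) f := by
    intro t
    simp only [F]
    rw [← RingHom.comp_apply]
    refine RingHom.congr_fun (g := (MvPolynomial.aeval
    (fun j => ∑ i, MvPolynomial.C ((M + t • (1 : Matrix (Fin n) (Fin n) k)) i j) *
      MvPolynomial.X i) : MvPolynomial (Fin n) k →ₐ[k] MvPolynomial (Fin n) k).toRingHom) ?_ f
    refine MvPolynomial.ringHom_ext (fun a => ?_) (fun j => ?_)
    · simp [MvPolynomial.algebraMap_eq]
    · simp
      exact Finset.sum_congr rfl fun i _ => by ring
  let Q : Polynomial k := MvPolynomial.eval₂Hom Polynomial.C (fun m => MvPolynomial.coeff m F) P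
  have hQ : ∀ t : k, Q.eval t = MvPolynomial.eval (fun m => MvPolynomial.coeff m
      (MvPolynomial.aeval
    (fun j => ∑ i, MvPolynomial.C ((M + t • (1 : Matrix (Fin n) (Fin n) k)) i j) *
      MvPolynomial.X i) f)) P := by
    intro t
    rw [← hF t]
    simp only [MvPolynomial.coeff_map]
    rw [← Polynomial.coe_evalRingHom]
    simp only [Q]
    rw [← RingHom.comp_apply]
    refine RingHom.congr_fun ?_ P
    refine MvPolynomial.ringHom_ext (fun a => ?_) (fun j => ?_)
    · simp
    · simp
  let D : Polynomial k := (M.map Polynomial.C + (Polynomial.X : Polynomial k) • 1).det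
  have hD : ∀ t : k, D.eval t = (M + t • (1 : Matrix (Fin n) (Fin n) k)).det := by
    intro t
    simp only [D]
    rw [← Polynomial.coe_evalRingHom, RingHom.map_det]
    congr 1
    ext i j
    simp only [RingHom.mapMatrix_apply, Matrix.map_apply, Matrix.add_apply, Matrix.smul_apply,
      Matrix.one_apply, smul_eq_mul, map_add, map_mul]
    split_ifs <;> simp
  have hD0 : D ≠ 0 := by
    have h1 : (-M).charpoly = D := by
      simp only [D, Matrix.charpoly, Matrix.charmatrix]
      congr 1
      ext i j
      simp [Matrix.one_apply, Matrix.diagonal_apply, add_comm]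
    rw [← h1]
    exact (Matrix.charpoly_monic _).ne_zero
  have hDQ : D * Q = 0 := by
    refine Polynomial.funext fun t => ?_
    rw [Polynomial.eval_mul, Polynomial.eval_zero]
    by_cases ht : D.eval t = 0
    · rw [ht, zero_mul]
    · have h0 := hP _ ⟨Matrix.GeneralLinearGroup.mkOfDetNeZero
        (M + t • (1 : Matrix (Fin n) (Fin n) k)) (by rw [← hD]; exact ht), rfl⟩
      have h1 : Q.eval t = 0 := (hQ t).trans h0
      rw [h1, mul_zero]
  have hQ0 := (mul_eq_zero.1 hDQ).resolve_left hD0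
  have := hQ 0
  rw [hQ0] at this
  simpa using this.symm

/-- Logarithmic surjectivity bound: if `f ∈ P₃(kⁿ)` has q-rank `r > exp 240` and
`0 < d ≤ n` with `d < (1/3) log r`, then the Zariski closure of the `GLₙ(k)`-orbit
of `f` surjects onto `P₃(k^d)`. -/
theorem orbit_closure_surjects_log {k : Type*} [Field k] [IsAlgClosed k]
    (h2 : (2 : k) ≠ 0) (h3 : (3 : k) ≠ 0) {n : ℕ}
    (f : MvPolynomial (Fin n) k) (hf : f.IsHomogeneous 3)
    (r : ℕ) (hr : polyQRank f = (r : ℕ∞)) (hrbig : Real.exp 240 < (r : ℝ))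
    (d : ℕ) (hd : 0 < d) (hdn : d ≤ n) (hlog : (d : ℝ) < Real.log r / 3) :
    ∀ h : MvPolynomial (Fin d) k, h.IsHomogeneous 3 →
      ∃ g : MvPolynomial (Fin n) k,
        InZariskiClosure (glOrbit f) g ∧ restrictVars d g = h := by
  classical
  intro h hh
  have : Infinite k := IsAlgClosed.instInfinite
  obtain ⟨T, hT1, hT2, hT⟩ := aux_T' h2 h3 f hf
  have hnot : ¬ AuxQR k (fun x => T x x x) ((4 * d ^ 3) * (4 * d ^ 3) + auxC (4 * d ^ 3)) := by
    intro hq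
    have hle := aux_qrank f _ (by simpa only [hT] using hq)
    rw [hr, Nat.cast_le] at hle
    exact absurd (aux_num r d hrbig hd hlog) (not_lt.2 hle)
  obtain ⟨v, hv⟩ := aux_diag h2 T hT1 hT2 _ hnot
  obtain ⟨L, hL⟩ := aux_cubes h2 h3 h hh
  let ρ : (Fin n → k) →ₗ[k] (Fin d → k) := LinearMap.funLeft k k (Fin.castLE hdn)
  let A : (Fin n → k) →ₗ[k] (Fin n → k) := ∑ a, ((L a).comp ρ).smulRight (v a)
  have hA : ∀ x, A x = ∑ a, L a (ρ x) • v a := fun x => by simp [A]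
  have hfA : ∀ x, MvPolynomial.eval (A x) f = MvPolynomial.eval (ρ x) h := by
    intro x
    rw [hT, hL, hA]
    simp only [map_sum, map_smul, LinearMap.sum_apply, LinearMap.smul_apply, smul_eq_mul, hv]
    refine Finset.sum_congr rfl fun a _ => ?_
    rw [Finset.sum_eq_single a]
    · rw [Finset.sum_eq_single a]
      · simp; ring
      · intro b _ hb; simp [hb]
      · simp
    · intro b _ hb
      simp [hb]
    · simp
  let M : Matrix (Fin n) (Fin n) k := Matrix.of fun i j => A (Pi.single i 1) j
  refine ⟨_, aux_zariski f M, MvPolynomial.funext fun y => ?_⟩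
  let y' : Fin n → k := fun i => if h : (i : ℕ) < d then y ⟨i, h⟩ else 0
  have hρ : ρ y' = y := by
    ext i
    simp [ρ, y', LinearMap.funLeft_apply]
  have e1 : ∀ g : MvPolynomial (Fin n) k,
      MvPolynomial.eval y (restrictVars d g) = MvPolynomial.eval y' g := by
    intro g
    unfold restrictVars
    rw [aux_eval]
    congr 2
    ext i
    simp only [y']
    split_ifs <;> simp
  have e2 : MvPolynomial.eval y' (MvPolynomial.aeval
    (fun j => ∑ i, MvPolynomial.C (M i j) * MvPolynomial.X i) f) =
      MvPolynomial.eval (A y') f := by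
    rw [aux_eval]
    congr 2
    ext j
    have hy : y' = ∑ i, y' i • (Pi.single i (1 : k) : Fin n → k) := by
      ext i; simp [Pi.single_apply]
    have hAy : A y' = ∑ i, y' i • A (Pi.single i 1) := by
      conv_lhs => rw [hy]
      simp only [map_sum, map_smul]
    rw [hAy]
    simp [M, mul_comm]
  rw [e1, e2, hfA, hρ]
end

section
/- Inverse limits of proper varieties: let k be an algebraically closed field, let I be a nonempty directed partially ordered set, and let {Z_i}_{i ∈ I} be an inverse system of schemes over Spec k (with k-morphisms Z_j → Z_i for i ≤ j, compatible with composition), where each Z_i is a nonempty reduced scheme of finite type over k whose structure morphism Z_i → Spec k is proper. Then the inverse limit of the sets of k-points, lim_{i ∈ I} Z_i(k) (where Z_i(k) denotes k-scheme morphisms Spec k → Z_i), is nonempty; i.e. there is a family of k-points z_i ∈ Z_i(k) with z_i equal to the image of z_j under the transition map whenever i ≤ j. -/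
open CategoryTheory AlgebraicGeometry Opposite

theorem exists_compatible_closed_points
    {I : Type} [Preorder I] [IsDirected I (· ≤ ·)]
    (X : I → Type) [∀ i, TopologicalSpace (X i)] [∀ i, CompactSpace (X i)]
    [∀ i, T0Space (X i)] [∀ i, Nonempty (X i)]
    (f : ∀ i j : I, i ≤ j → X j → X i)
    (hid : ∀ i (h : i ≤ i) x, f i i h x = x)
    (hcomp : ∀ i j l (h : i ≤ j) (h' : j ≤ l) x, f i j h (f j l h' x) = f i l (h.trans h') x)
    (hcont : ∀ i j h, Continuous (f i j h))
    (hcl : ∀ i j h, IsClosedMap (f i j h)) :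
    ∃ x : ∀ i, X i, (∀ i, IsClosed {x i}) ∧ ∀ i j h, f i j h (x j) = x i := by
  classical
  let S : Set (∀ i, Set (X i)) := {C | (∀ i, IsClosed (C i)) ∧ (∀ i, (C i).Nonempty) ∧
    ∀ i j h, Set.MapsTo (f i j h) (C j) (C i)}
  obtain ⟨C, -, hC⟩ : ∃ m, m ≤ (fun i => Set.univ : ∀ i, Set (X i)) ∧ Minimal (· ∈ S) m := by
    refine @zorn_le_nonempty₀ (∀ i, Set (X i))ᵒᵈ _ S ?_ _ ?_
    · intro (c : Set (∀ i, Set (X i))) (hcS : c ⊆ S) hc y hy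
      have hc' : IsChain (fun a b : (∀ i, Set (X i)) => a ≤ b) c := hc.symm
      let D : ∀ i, Set (X i) := fun i => ⋂ s : c, (s : ∀ i, Set (X i)) i
      refine ⟨D, ⟨?_, ?_, ?_⟩, ?_⟩
      · intro i
        exact isClosed_iInter fun s => (hcS s.2).1 i
      · intro i
        have : Nonempty c := ⟨⟨y, hy⟩⟩
        refine IsCompact.nonempty_iInter_of_directed_nonempty_isCompact_isClosed _ ?_
          (fun s => (hcS s.2).2.1 i) (fun s => ((hcS s.2).1 i).isCompact) (fun s => (hcS s.2).1 i)
        intro s t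
        rcases hc'.total s.2 t.2 with h | h
        · exact ⟨s, subset_rfl, h i⟩
        · exact ⟨t, h i, subset_rfl⟩
      · intro i j h x hx
        simp only [D, Set.mem_iInter] at hx ⊢
        exact fun s => (hcS s.2).2.2 i j h (hx s)
      · intro z hz i x hx
        exact Set.mem_iInter.1 hx ⟨z, hz⟩
    · exact ⟨fun i => isClosed_univ, fun i => Set.univ_nonempty, fun i j h x hx => Set.mem_univ _⟩
  obtain ⟨hCc, hCn, hCm⟩ := hC.prop
  -- surjectivity
  have hsurj : ∀ i j (h : i ≤ j), C i ⊆ f i j h '' C j := by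
    let D : ∀ i, Set (X i) := fun i => ⋂ j : Set.Ici i, f i j j.2 '' C j
    have hDC : D ≤ C := by
      intro i x hx
      obtain ⟨y, hy, rfl⟩ := Set.mem_iInter.1 hx ⟨i, le_refl i⟩
      exact hCm i i _ hy
    have hD : D ∈ S := by
      refine ⟨fun i => isClosed_iInter fun j => hcl _ _ _ _ (hCc _), ?_, ?_⟩
      · intro i
        have : Nonempty (Set.Ici i) := ⟨⟨i, le_refl i⟩⟩
        refine IsCompact.nonempty_iInter_of_directed_nonempty_isCompact_isClosed _ ?_
          (fun s => (hCn _).image _) (fun s => (hcl _ _ _ _ (hCc _)).isCompact)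
          (fun s => hcl _ _ _ _ (hCc _))
        intro s t
        obtain ⟨m, hsm, htm⟩ := exists_ge_ge (s : I) (t : I)
        refine ⟨⟨m, le_trans s.2 hsm⟩, ?_, ?_⟩
        · rintro _ ⟨y, hy, rfl⟩
          exact ⟨f s m hsm y, hCm _ _ _ hy, hcomp _ _ _ _ _ _⟩
        · rintro _ ⟨y, hy, rfl⟩
          exact ⟨f t m htm y, hCm _ _ _ hy, hcomp _ _ _ _ _ _⟩
      · intro i j h x hx
        refine Set.mem_iInter.2 fun l => ?_
        obtain ⟨m, hlm, hjm⟩ := exists_ge_ge (l : I) j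
        obtain ⟨y, hy, rfl⟩ := Set.mem_iInter.1 hx ⟨m, hjm⟩
        exact ⟨f l m hlm y, hCm _ _ _ hy, (hcomp i l m _ hlm y).trans (hcomp i j m h hjm y).symm⟩
    intro i j h x hx
    exact Set.mem_iInter.1 (hC.le_of_le hD hDC i hx) ⟨j, h⟩
  have hsing : ∀ i, ∃ x, IsClosed {x} ∧ C i = {x} := by
    intro i
    obtain ⟨x, hx, hxc⟩ := (hCc i).exists_closed_singleton (hCn i)
    refine ⟨x, hxc, ?_⟩
    let E : ∀ j, Set (X j) := fun j => {y | y ∈ C j ∧ ∀ h : i ≤ j, f i j h y = x}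
    have hEC : E ≤ C := fun j y hy => hy.1
    have hE : E ∈ S := by
      refine ⟨fun j => ?_, fun j => ?_, ?_⟩
      · by_cases h : i ≤ j
        · have : E j = C j ∩ f i j h ⁻¹' {x} := by
            ext y; simp [E, h]
          rw [this]
          exact (hCc j).inter (hxc.preimage (hcont _ _ _))
        · have : E j = C j := by
            ext y; simp [E, h]
          rw [this]; exact hCc j
      · by_cases h : i ≤ j
        · obtain ⟨y, hy, hyx⟩ := hsurj i j h hx
          exact ⟨y, hy, fun _ => hyx⟩
        · obtain ⟨y, hy⟩ := hCn j
          exact ⟨y, hy, fun h' => absurd h' h⟩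
      · intro a b h y hy
        exact ⟨hCm _ _ _ hy.1, fun h' => by rw [hcomp]; exact hy.2 _⟩
    apply Set.Subset.antisymm
    · intro y hy
      have := (hC.le_of_le hE hEC i hy).2 le_rfl
      rw [hid] at this
      exact this
    · rintro _ rfl; exact hx
  choose x hx hCx using hsing
  refine ⟨x, hx, fun i j h => ?_⟩
  have : f i j h (x j) ∈ C i := hCm i j h (by rw [hCx j]; rfl)
  rw [hCx i] at this
  exact this

/-- Inverse limits of proper varieties: given a nonempty directed inverse system of
nonempty proper (reduced, finite type) varieties over an algebraically closed field `k`,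
the inverse limit of their sets of `k`-points is nonempty. -/
theorem inverse_limit_proper_varieties_nonempty
    {k : Type} [Field k] [IsAlgClosed k]
    {I : Type} [Preorder I] [Nonempty I] [IsDirected I (· ≤ ·)]
    (Z : Iᵒᵖ ⥤ Scheme)
    (π : Z ⟶ (Functor.const Iᵒᵖ).obj (Spec (CommRingCat.of k)))
    (hne : ∀ i : I, Nonempty (Z.obj (op i)))
    (hred : ∀ i : I, IsReduced (Z.obj (op i)))
    (hft : ∀ i : I, LocallyOfFiniteType (π.app (op i)))
    (hqc : ∀ i : I, QuasiCompact (π.app (op i)))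
    (hproper : ∀ i : I, IsProper (π.app (op i))) :
    ∃ z : (i : I) → (Spec (CommRingCat.of k) ⟶ Z.obj (op i)),
      (∀ i : I, z i ≫ π.app (op i) = 𝟙 (Spec (CommRingCat.of k))) ∧
      ∀ (i j : I) (h : i ≤ j), z j ≫ Z.map (homOfLE h).op = z i := by
  have := hproper
  have := hft
  have := hne
  have : ∀ i : I, CompactSpace (Z.obj (op i)) := fun i =>
    QuasiCompact.compactSpace_of_compactSpace (Y := Spec (CommRingCat.of k)) (π.app (op i))
  have hπ : ∀ (i j : I) (h : i ≤ j), Z.map (homOfLE h).op ≫ π.app (op i) = π.app (op j) := by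
    intro i j h
    simpa using π.naturality (homOfLE h).op
  have hpr : ∀ (i j : I) (h : i ≤ j), IsProper (Z.map (homOfLE h).op) := by
    intro i j h
    have : IsProper (Z.map (homOfLE h).op ≫ π.app (op i)) := by
      rw [hπ]; exact hproper j
    have : IsSeparated (π.app (op i)) := (hproper i).toIsSeparated
    exact IsProper.of_comp _ (π.app (op i))
  obtain ⟨x, hx, hxf⟩ := exists_compatible_closed_points (fun i : I => (Z.obj (op i) : Type))
    (fun i j h => Z.map (homOfLE h).op)
    (fun i h x => by
      have : (homOfLE h).op = 𝟙 (op i) := rfl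
      rw [this, Z.map_id]; rfl)
    (fun i j l h h' x => by
      have : (homOfLE (h.trans h')).op = (homOfLE h').op ≫ (homOfLE h).op := rfl
      rw [this, Z.map_comp]; rfl)
    (fun i j h => (Z.map (homOfLE h).op).continuous)
    (fun i j h => (Z.map (homOfLE h).op).isClosedMap)
  refine ⟨fun i => pointOfClosedPoint (π.app (op i)) (x i) (hx i),
    fun i => pointOfClosedPoint_comp _ _ _, fun i j h => ?_⟩
  refine ext_of_apply_closedPoint_eq (π.app (op i)) ?_ (pointOfClosedPoint_comp _ _ _) ?_
  · rw [Category.assoc, hπ]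
    exact pointOfClosedPoint_comp _ _ _
  · have h1 := pointOfClosedPoint_apply (π.app (op j)) (x j) (hx j) (IsLocalRing.closedPoint k)
    have h2 := pointOfClosedPoint_apply (π.app (op i)) (x i) (hx i) (IsLocalRing.closedPoint k)
    exact ((congrArg (Z.map (homOfLE h).op) h1).trans (hxf i j h)).trans h2.symm
end

section
/- Q-rank of the diagonal cubic ∑ xᵢyᵢzᵢ: for every positive integer n, the cubic form f on V = (Fin n → k) × (Fin n → k) × (Fin n → k) defined by f(x, y, z) = Σ_{i=1}^n xᵢ·yᵢ·zᵢ has q-rank exactly n. -/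
open scoped BigOperators

/-- The q-rank of a function `f : V → k`: the least `r` such that
`f = ∑ ℓᵢ · qᵢ` with `ℓᵢ` linear functionals and `qᵢ` quadratic forms on `V`,
as an element of `ℕ∞` (`⊤` if no such expression exists). -/
noncomputable def qrank (k : Type*) [Field k] {V : Type*} [AddCommGroup V] [Module k V]
    (f : V → k) : ℕ∞ :=
  sInf {r : ℕ∞ | ∃ m : ℕ, r = m ∧
    ∃ (ℓ : Fin m → (V →ₗ[k] k)) (q : Fin m → QuadraticForm k V),
      ∀ v, f v = ∑ i, ℓ i v * q i v}

/-- coordinates -/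
def qco (k : Type*) [Field k] (n : ℕ) (p : Fin n × Fin 3) :
    ((Fin n → k) × (Fin n → k) × (Fin n → k)) →ₗ[k] k :=
  (![LinearMap.proj p.1 ∘ₗ LinearMap.fst k _ _,
    LinearMap.proj p.1 ∘ₗ LinearMap.fst k _ _ ∘ₗ LinearMap.snd k _ _,
    LinearMap.proj p.1 ∘ₗ LinearMap.snd k _ _ ∘ₗ LinearMap.snd k _ _] :
    Fin 3 → (((Fin n → k) × (Fin n → k) × (Fin n → k)) →ₗ[k] k)) p.2

/-- weights -/
def qwt (n : ℕ) (p : Fin n × Fin 3) : ℤ :=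
  (![(p.1 : ℤ) + 1, (p.1 : ℤ) + 1 + n, -(2 * ((p.1 : ℤ) + 1) + n)] : Fin 3 → ℤ) p.2

lemma qwt_inj (n : ℕ) : Function.Injective (qwt n) := by
  rintro ⟨i, a⟩ ⟨j, b⟩ h
  have hi := i.2
  have hj := j.2
  fin_cases a <;> fin_cases b <;> simp [qwt] at h ⊢ <;> omega

lemma q_prod_zero {k : Type*} [Field k] {n : ℕ} (a b c : Fin n × Fin 3)
    (u v w : Fin n × Fin 3 → k)
    (hu : ∀ p, qwt n a < qwt n p → u p = 0) (hv : ∀ p, qwt n b < qwt n p → v p = 0)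
    (hw : ∀ p, qwt n c < qwt n p → w p = 0) (p q r : Fin n × Fin 3)
    (h0 : qwt n a + qwt n b + qwt n c = 0) (h1 : qwt n p + qwt n q + qwt n r = 0)
    (hne : p ≠ a ∨ q ≠ b) : u p * v q * w r = 0 := by
  by_cases h : qwt n a < qwt n p
  · simp [hu p h]
  by_cases h' : qwt n b < qwt n q
  · simp [hv q h']
  by_cases h'' : qwt n c < qwt n r
  · simp [hw r h'']
  exfalso
  rcases hne with hne | hne
  · exact hne (qwt_inj n (by omega))
  · exact hne (qwt_inj n (by omega))

lemma q_polar {k : Type*} [Field k] {n : ℕ} (i : Fin n)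
    (u v w : Fin n × Fin 3 → k)
    (hu : ∀ p, qwt n (i, 0) < qwt n p → u p = 0) (hv : ∀ p, qwt n (i, 1) < qwt n p → v p = 0)
    (hw : ∀ p, qwt n (i, 2) < qwt n p → w p = 0) :
    ∑ j, (u (j,0) * v (j,1) * w (j,2) + u (j,0) * v (j,2) * w (j,1)
      + u (j,1) * v (j,0) * w (j,2) + u (j,1) * v (j,2) * w (j,0)
      + u (j,2) * v (j,0) * w (j,1) + u (j,2) * v (j,1) * w (j,0))
      = u (i,0) * v (i,1) * w (i,2) := by
  have key := q_prod_zero (i,0) (i,1) (i,2) u v w hu hv hw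
  rw [Finset.sum_eq_single i]
  · rw [key (i,0) (i,2) (i,1), key (i,1) (i,0) (i,2), key (i,1) (i,2) (i,0),
      key (i,2) (i,0) (i,1), key (i,2) (i,1) (i,0)]
    · ring
    all_goals first | (simp [qwt]; done) | (simp [qwt]; ring)
  · intro j _ hj
    rw [key (j,0) (j,1) (j,2), key (j,0) (j,2) (j,1), key (j,1) (j,0) (j,2),
      key (j,1) (j,2) (j,0), key (j,2) (j,0) (j,1), key (j,2) (j,1) (j,0)]
    · ring
    all_goals first | (simp [qwt, hj]; done) | (simp [qwt]; ring)
  · simp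

lemma q_lower {k : Type*} [Field k] (n m : ℕ)
    (ℓ : Fin m → (((Fin n → k) × (Fin n → k) × (Fin n → k)) →ₗ[k] k))
    (h : ∀ v : (Fin n → k) × (Fin n → k) × (Fin n → k), (∀ i, ℓ i v = 0) →
      ∑ i, v.1 i * v.2.1 i * v.2.2 i = 0) : n ≤ m := by
  classical
  let P : Fin n × Fin 3 → Prop := fun p => ∃ v, (∀ i, ℓ i v = 0) ∧ qco k n p v ≠ 0 ∧
    ∀ q, qwt n p < qwt n q → qco k n q v = 0
  have hP : ∀ i, ∃ c, ¬ P (i, c) := by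
    intro i
    by_contra! hc
    obtain ⟨u, hu, hu1, hu2⟩ := hc 0
    obtain ⟨v, hv, hv1, hv2⟩ := hc 1
    obtain ⟨w, hw, hw1, hw2⟩ := hc 2
    have := q_polar i (fun p => qco k n p u) (fun p => qco k n p v) (fun p => qco k n p w)
      hu2 hv2 hw2
    refine mul_ne_zero (mul_ne_zero hu1 hv1) hw1 (this.symm.trans ?_)
    have e1 := h u hu
    have e2 := h v hv
    have e3 := h w hw
    have e4 := h (u + v) (by simp [hu, hv])
    have e5 := h (u + w) (by simp [hu, hw])
    have e6 := h (v + w) (by simp [hv, hw])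
    have e7 := h (u + v + w) (by simp [hu, hv, hw])
    have e : (∑ i, (u + v + w).1 i * (u + v + w).2.1 i * (u + v + w).2.2 i)
      - (∑ i, (u + v).1 i * (u + v).2.1 i * (u + v).2.2 i)
      - (∑ i, (u + w).1 i * (u + w).2.1 i * (u + w).2.2 i)
      - (∑ i, (v + w).1 i * (v + w).2.1 i * (v + w).2.2 i)
      + (∑ i, u.1 i * u.2.1 i * u.2.2 i)
      + (∑ i, v.1 i * v.2.1 i * v.2.2 i)
      + (∑ i, w.1 i * w.2.1 i * w.2.2 i) = 0 := by
      rw [e1, e2, e3, e4, e5, e6, e7]; ring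
    rw [← e]
    simp only [← Finset.sum_sub_distrib, ← Finset.sum_add_distrib]
    refine Finset.sum_congr rfl fun j _ => ?_
    simp [qco]
    ring
  choose c hc using hP
  let L : ((Fin n → k) × (Fin n → k) × (Fin n → k)) →ₗ[k] (Fin m → k) × ({p // P p} → k) :=
    (LinearMap.pi ℓ).prod (LinearMap.pi fun p => qco k n p.1)
  have hL : Function.Injective L := by
    rw [← LinearMap.ker_eq_bot, LinearMap.ker_eq_bot']
    intro v hv
    have h1 : ∀ i, ℓ i v = 0 := fun i => congrFun (congrArg Prod.fst hv) i
    have h2 : ∀ p, P p → qco k n p v = 0 := fun p hp => congrFun (congrArg Prod.snd hv) ⟨p, hp⟩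
    have h3 : ∀ p, qco k n p v = 0 := by
      by_contra! hne
      obtain ⟨p, hp⟩ := hne
      obtain ⟨q, hq, hmax⟩ := Finset.exists_max_image
        (Finset.univ.filter fun p => qco k n p v ≠ 0) (qwt n) ⟨p, by simpa using hp⟩
      simp only [Finset.mem_filter, Finset.mem_univ, true_and] at hq hmax
      refine hq (h2 q ⟨v, h1, hq, fun r hr => ?_⟩)
      by_contra hr'
      exact absurd (hmax r hr') (not_le.mpr hr)
    refine Prod.ext (funext fun i => h3 (i, 0)) (Prod.ext (funext fun i => h3 (i, 1))
      (funext fun i => h3 (i, 2)))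
  have hd := LinearMap.finrank_le_finrank_of_injective hL
  simp only [Module.finrank_prod, Module.finrank_fintype_fun_eq_card, Fintype.card_fin] at hd
  have hcard : n ≤ Fintype.card {p // ¬ P p} := by
    have := Fintype.card_le_of_injective (fun i : Fin n => (⟨(i, c i), hc i⟩ : {p // ¬ P p}))
      (fun i j hij => congrArg Prod.fst (congrArg Subtype.val hij))
    simpa using this
  have h4 := Fintype.card_subtype_compl P
  have h5 := Fintype.card_subtype_le P
  simp only [Fintype.card_prod, Fintype.card_fin] at h4 h5
  omega

/-- The diagonal cubic `∑ xᵢ yᵢ zᵢ` in `3n` variables has q-rank exactly `n`. -/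
theorem qrank_diagonal_cubic {k : Type*} [Field k] [IsAlgClosed k]
    (h2 : (2 : k) ≠ 0) (h3 : (3 : k) ≠ 0) (n : ℕ) (hn : 0 < n) :
    qrank k (fun v : (Fin n → k) × (Fin n → k) × (Fin n → k) =>
      ∑ i, v.1 i * v.2.1 i * v.2.2 i) = n := by
  unfold qrank
  apply le_antisymm
  · apply sInf_le
    refine ⟨n, rfl, fun i => qco k n (i, 0),
      fun i => QuadraticMap.linMulLin (qco k n (i, 1)) (qco k n (i, 2)), fun v => ?_⟩
    refine Finset.sum_congr rfl fun j _ => ?_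
    simp [qco, mul_assoc]
  · apply le_sInf
    rintro r ⟨m, rfl, ℓ, q, h⟩
    have := q_lower n m ℓ fun v hv => (h v).trans (by simp [hv])
    exact_mod_cast this
end

section
/- Nonvanishing on codimension n−1 subspaces: let V be a k-vector space of dimension 2n+1 (n a positive integer), and let x₁,…,x_n, y₁,…,y_n, z₁,…,z_n be linear functionals on V whose collection spans the full dual space of V. Then the function v ↦ Σ_{i=1}^n xᵢ(v)·yᵢ(v)·zᵢ(v) is not identically zero: there exists v ∈ V with Σ_{i=1}^n xᵢ(v)·yᵢ(v)·zᵢ(v) ≠ 0. -/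
open scoped BigOperators

theorem dcn_rank {k V U : Type*} [Field k] [AddCommGroup V] [Module k V] [FiniteDimensional k V]
    [AddCommGroup U] [Module k U] (f : V →ₗ[k] U) (W : Submodule k V) :
    Module.finrank k (LinearMap.range (f.domRestrict W)) +
      Module.finrank k (W ⊓ LinearMap.ker f : Submodule k V) = Module.finrank k W := by
  rw [← LinearMap.finrank_range_add_finrank_ker (f.domRestrict W)]
  congr 1
  rw [← Submodule.map_comap_subtype, Submodule.finrank_map_subtype_eq]
  rfl

theorem dcn_one {k V : Type*} [Field k] [AddCommGroup V] [Module k V] [FiniteDimensional k V]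
    (f : V →ₗ[k] k) (W : Submodule k V) :
    Module.finrank k W ≤ Module.finrank k (W ⊓ LinearMap.ker f : Submodule k V) + 1 := by
  have h := dcn_rank f W
  have h1 := Submodule.finrank_le (LinearMap.range (f.domRestrict W))
  rw [Module.finrank_self] at h1
  omega

theorem dcn_two {k V : Type*} [Field k] [AddCommGroup V] [Module k V] [FiniteDimensional k V]
    (f g : V →ₗ[k] k) (W : Submodule k V)
    (h : Module.finrank k (W ⊓ LinearMap.ker (f.prod g) : Submodule k V) + 2 ≤ Module.finrank k W)
    (a b : k) : ∃ w ∈ W, f w = a ∧ g w = b := by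
  have h0 := dcn_rank (f.prod g) W
  have h1 := Submodule.finrank_le (LinearMap.range ((f.prod g).domRestrict W))
  have h2 : Module.finrank k (k × k) = 2 := by simp
  have h3 : LinearMap.range ((f.prod g).domRestrict W) = ⊤ :=
    Submodule.eq_top_of_finrank_eq (by omega)
  obtain ⟨w, hw⟩ := LinearMap.range_eq_top.1 h3 (a, b)
  refine ⟨w, w.2, ?_, ?_⟩
  · simpa using congrArg Prod.fst hw
  · simpa using congrArg Prod.snd hw

/-- joint kernel -/
def dcnK {k V ι : Type*} [Field k] [AddCommGroup V] [Module k V]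
    (x y z : ι → (V →ₗ[k] k)) (s : Finset ι) : Submodule k V :=
  ⨅ i ∈ s, LinearMap.ker (x i) ⊓ LinearMap.ker (y i) ⊓ LinearMap.ker (z i)

theorem dcn_mem {k V ι : Type*} [Field k] [AddCommGroup V] [Module k V]
    (x y z : ι → (V →ₗ[k] k)) (s : Finset ι) (v : V) :
    v ∈ dcnK x y z s ↔ ∀ i ∈ s, x i v = 0 ∧ y i v = 0 ∧ z i v = 0 := by
  simp [dcnK, Submodule.mem_iInf, and_assoc]

theorem dcn_main {k V ι : Type*} [Field k] [AddCommGroup V] [Module k V] [FiniteDimensional k V]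
    [DecidableEq ι] (x y z : ι → (V →ₗ[k] k)) (s : Finset ι) :
    ∀ W : Submodule k V, (∀ w ∈ W, ∑ i ∈ s, x i w * y i w * z i w = 0) →
      Module.finrank k W ≤ 2 * s.card +
        Module.finrank k (W ⊓ dcnK x y z s : Submodule k V) := by
  induction s using Finset.induction_on with
  | empty =>
    intro W _
    refine le_trans (Submodule.finrank_mono ?_) (Nat.le_add_left _ _)
    intro w hw
    exact ⟨hw, (dcn_mem x y z ∅ w).2 (by simp)⟩
  | insert a s ha ih =>
    intro W hW
    by_contra! hlt
    rw [Finset.card_insert_of_notMem ha] at hlt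
    simp only [Finset.sum_insert ha] at hW
    have key : ∀ f g h : V →ₗ[k] k,
        (∀ v, f v = 0 → x a v * y a v * z a v = 0) →
        (∀ v, f v = 0 → g v = 0 → h v = 0 → x a v = 0 ∧ y a v = 0 ∧ z a v = 0) →
        ∀ p q : k, ∃ w ∈ W ⊓ dcnK x y z s, f w = 0 ∧ g w = p ∧ h w = q := by
      intro f g h hf hfgh p q
      have h1 := dcn_one f W
      have h2 := ih (W ⊓ LinearMap.ker f) (by
        rintro w ⟨hw, hw'⟩
        have := hW w hw
        rwa [hf w hw', zero_add] at this)
      have h3 : Module.finrank k ((W ⊓ LinearMap.ker f ⊓ dcnK x y z s) ⊓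
          LinearMap.ker (g.prod h) : Submodule k V) ≤
          Module.finrank k (W ⊓ dcnK x y z (insert a s) : Submodule k V) := by
        apply Submodule.finrank_mono
        rintro w ⟨⟨⟨hw, hw1⟩, hw2⟩, hw3⟩
        refine ⟨hw, ?_⟩
        have hw3' : g w = 0 ∧ h w = 0 := by simpa using hw3
        refine (dcn_mem x y z _ w).2 fun i hi => ?_
        rcases Finset.mem_insert.1 hi with rfl | hi
        · exact hfgh w hw1 hw3'.1 hw3'.2
        · exact (dcn_mem x y z s w).1 hw2 i hi
      obtain ⟨w, ⟨⟨hw, hw1⟩, hw2⟩, hw3⟩ :=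
        dcn_two g h (W ⊓ LinearMap.ker f ⊓ dcnK x y z s) (by omega) p q
      exact ⟨w, ⟨hw, hw2⟩, hw1, hw3⟩
    obtain ⟨v, hv, v1, v2, v3⟩ := key (x a) (y a) (z a) (fun v h => by simp [h])
      (fun v h1 h2 h3 => ⟨h1, h2, h3⟩) 1 1
    obtain ⟨u, hu, u1, u2, u3⟩ := key (y a) (x a) (z a) (fun v h => by simp [h])
      (fun v h1 h2 h3 => ⟨h2, h1, h3⟩) 1 0
    have hs := Submodule.add_mem _ hv hu
    have h0 := hW _ hs.1
    rw [Finset.sum_eq_zero] at h0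
    · simp [v1, v2, v3, u1, u2, u3] at h0
    · intro i hi
      rw [((dcn_mem x y z s _).1 hs.2 i hi).1]
      simp

/-- Nonvanishing on codimension `n-1` subspaces: if `dim V = 2n + 1` and the linear
functionals `xᵢ, yᵢ, zᵢ` (for `1 ≤ i ≤ n`) span the dual space of `V`, then
`v ↦ ∑ xᵢ(v) yᵢ(v) zᵢ(v)` is not identically zero. -/
theorem diagonal_cubic_nonvanishing {k : Type*} [Field k] [IsAlgClosed k]
    (h2 : (2 : k) ≠ 0) (h3 : (3 : k) ≠ 0)
    {V : Type*} [AddCommGroup V] [Module k V] [FiniteDimensional k V]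
    (n : ℕ) (hn : 0 < n) (hdim : Module.finrank k V = 2 * n + 1)
    (x y z : Fin n → (V →ₗ[k] k))
    (hspan : Submodule.span k (Set.range x ∪ Set.range y ∪ Set.range z) = ⊤) :
    ∃ v : V, ∑ i, x i v * y i v * z i v ≠ 0 := by
  by_contra! hc
  have h := dcn_main x y z Finset.univ ⊤ (fun w _ => hc w)
  have hK : dcnK x y z Finset.univ = ⊥ := by
    rw [eq_bot_iff]
    intro v hv
    rw [dcn_mem] at hv
    rw [Submodule.mem_bot, ← Module.forall_dual_apply_eq_zero_iff k]
    intro f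
    have hf : f ∈ Submodule.span k (Set.range x ∪ Set.range y ∪ Set.range z) := by
      rw [hspan]; trivial
    induction hf using Submodule.span_induction with
    | mem f hf =>
      rcases hf with (⟨i, rfl⟩ | ⟨i, rfl⟩) | ⟨i, rfl⟩
      · exact (hv i (Finset.mem_univ i)).1
      · exact (hv i (Finset.mem_univ i)).2.1
      · exact (hv i (Finset.mem_univ i)).2.2
    | zero => rfl
    | add f g _ _ hf hg => rw [LinearMap.add_apply, hf, hg, add_zero]
    | smul c f _ hf => rw [LinearMap.smul_apply, hf, smul_zero]
  rw [hK, inf_bot_eq, finrank_bot, finrank_top, hdim, Finset.card_univ, Fintype.card_fin] at h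
  omega
end

section
/- A cubic of infinite q-rank: let V = ℕ → (k × k × k) with finite support (the countable direct sum ⊕_{i ∈ ℕ} k³), and let f be the cubic form on V defined by f(v) = Σ_{i ∈ ℕ} xᵢ(v)·yᵢ(v)·zᵢ(v), where xᵢ, yᵢ, zᵢ are the three coordinate functionals at index i (the sum is finite since v has finite support). Then qrank(f) = ∞; i.e. there is no finite r, linear functionals ℓ₁,…,ℓ_r and quadratic forms q₁,…,q_r on V with f(v) = Σ_{i=1}^r ℓᵢ(v)·qᵢ(v) for all v. -/
open scoped BigOperators

theorem aux_large {k : Type*} [Field k] {m : ℕ} (p : (ℕ →₀ k) →ₗ[k] (Fin m → k)) (n : ℕ) :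
    ∃ u : ℕ →₀ k, p u = 0 ∧ n ≤ u.support.card := by
  induction n with
  | zero => exact ⟨0, by simp, by simp⟩
  | succ n ih =>
    obtain ⟨u, hu, hn⟩ := ih
    let N := u.support.sup id
    let e : Fin (m+1) → ℕ := fun j => N + 1 + j
    have he : Function.Injective e := by
      intro a b h
      apply Fin.ext
      simp only [e] at h
      omega
    let E : (Fin (m+1) → k) →ₗ[k] (ℕ →₀ k) :=
      (Finsupp.lmapDomain k k e) ∘ₗ (Finsupp.linearEquivFunOnFinite k k (Fin (m+1))).symm.toLinearMap
    have hE : Function.Injective E :=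
      (Finsupp.mapDomain_injective he).comp (LinearEquiv.injective _)
    have hk : LinearMap.ker (p ∘ₗ E) ≠ ⊥ := LinearMap.ker_ne_bot_of_finrank_lt (by simp)
    obtain ⟨g, hg, hg0⟩ := Submodule.exists_mem_ne_zero_of_ne_bot hk
    have hw0 : E g ≠ 0 := fun h => hg0 (hE (by rw [h, map_zero]))
    have hpw : p (E g) = 0 := hg
    have hd : Disjoint u.support (E g).support := by
      rw [Finset.disjoint_left]
      intro i hi hi'
      have h1 : i ≤ N := Finset.le_sup (f := id) hi
      have h2 := Finsupp.mapDomain_support (f := e) hi'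
      obtain ⟨j, -, rfl⟩ := Finset.mem_image.1 h2
      simp only [e] at h1
      omega
    refine ⟨u + E g, by rw [map_add, hu, hpw, add_zero], ?_⟩
    rw [Finsupp.support_add_eq hd, Finset.card_union_of_disjoint hd]
    have : 0 < (E g).support.card := Finset.card_pos.2 (Finsupp.support_nonempty_iff.2 hw0)
    omega

theorem aux_orth {k : Type*} [Field k] {m : ℕ} {ι : Type*} [Fintype ι] (w : ι → k)
    (hw : ∀ i, w i ≠ 0) (hc : 2 * m < Fintype.card ι) (φ ψ : (ι → k) →ₗ[k] (Fin m → k)) :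
    ∃ c d, φ c = 0 ∧ ψ d = 0 ∧ ∑ i, w i * c i * d i ≠ 0 := by
  classical
  by_contra! H
  let D : (ι → k) →ₗ[k] Module.Dual k (ι → k) :=
    LinearMap.mk₂ k (fun d c => ∑ i, w i * c i * d i)
      (by intros; simp [mul_add, Finset.sum_add_distrib])
      (by intros; simp [Finset.mul_sum]; congr 1; ext; ring)
      (by intros; simp [mul_add, add_mul, Finset.sum_add_distrib])
      (by intros; simp [Finset.mul_sum]; congr 1; ext; ring)
  have hD : Function.Injective D := by
    rw [injective_iff_map_eq_zero]
    intro d hd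
    ext i
    have := LinearMap.congr_fun hd (Pi.single i 1)
    simp [D, Pi.single_apply, hw] at this
    simpa using this
  have hle : (LinearMap.ker ψ).map D ≤ (LinearMap.ker φ).dualAnnihilator := by
    rintro _ ⟨d, hd, rfl⟩
    rw [Submodule.mem_dualAnnihilator]
    intro c hc
    exact H c d hc hd
  have h1 := Submodule.finrank_mono hle
  rw [← (Submodule.equivMapOfInjective D hD (LinearMap.ker ψ)).finrank_eq] at h1
  have h2 := Subspace.finrank_add_finrank_dualAnnihilator_eq (LinearMap.ker φ)
  have h3 := LinearMap.finrank_range_add_finrank_ker φ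
  have h4 := LinearMap.finrank_range_add_finrank_ker ψ
  have h5 := Submodule.finrank_le (LinearMap.range φ)
  have h6 := Submodule.finrank_le (LinearMap.range ψ)
  simp at h2 h3 h4 h5 h6
  omega

/-- The cubic `∑_{i ∈ ℕ} xᵢ yᵢ zᵢ` on the countable direct sum `⨁_{i ∈ ℕ} k³`
has infinite q-rank. -/
theorem qrank_infinite_diagonal_cubic {k : Type*} [Field k] [IsAlgClosed k]
    (h2 : (2 : k) ≠ 0) (h3 : (3 : k) ≠ 0) :
    qrank k (fun v : ℕ →₀ (k × k × k) =>
      v.sum fun _ c => c.1 * c.2.1 * c.2.2) = ⊤ := by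
  unfold qrank
  rw [sInf_eq_top]
  rintro _ ⟨m, rfl, ℓ, q, h⟩
  exfalso
  let L : (ℕ →₀ (k × k × k)) →ₗ[k] (Fin m → k) := LinearMap.pi ℓ
  have hL : ∀ v, L v = 0 → (v.sum fun _ c => c.1 * c.2.1 * c.2.2) = 0 := by
    intro v hv
    refine (h v).trans ?_
    refine Finset.sum_eq_zero fun i _ => ?_
    have : ℓ i v = 0 := congrFun hv i
    rw [this, zero_mul]
  let X : (ℕ →₀ k) →ₗ[k] (ℕ →₀ (k × k × k)) :=
    Finsupp.mapRange.linearMap (LinearMap.inl k k (k × k))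
  let Y : (ℕ →₀ k) →ₗ[k] (ℕ →₀ (k × k × k)) :=
    Finsupp.mapRange.linearMap (LinearMap.inr k k (k × k) ∘ₗ LinearMap.inl k k k)
  let Z : (ℕ →₀ k) →ₗ[k] (ℕ →₀ (k × k × k)) :=
    Finsupp.mapRange.linearMap (LinearMap.inr k k (k × k) ∘ₗ LinearMap.inr k k k)
  obtain ⟨u, hu, hcard⟩ := aux_large (L ∘ₗ X) (2 * m + 1)
  let E : (u.support → k) →ₗ[k] (ℕ →₀ k) :=
    (Finsupp.lmapDomain k k Subtype.val) ∘ₗ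
      (Finsupp.linearEquivFunOnFinite k k u.support).symm.toLinearMap
  have hE : ∀ (g : u.support → k) (i : u.support), E g i = g i := by
    intro g i
    exact Finsupp.mapDomain_apply Subtype.val_injective _ i
  obtain ⟨c, d, hc, hd, hne⟩ := aux_orth (m := m) (fun i : u.support => u i)
    (fun i => Finsupp.mem_support_iff.1 i.2) (by simp; omega) (L ∘ₗ Y ∘ₗ E) (L ∘ₗ Z ∘ₗ E)
  apply hne
  have key := hL (X u + Y (E c) + Z (E d)) (by
    simp only [LinearMap.comp_apply] at hu hc hd
    rw [map_add, map_add, hu, hc, hd]; simp)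
  have hval : ∀ i, (X u + Y (E c) + Z (E d)) i = (u i, E c i, E d i) := by
    intro i
    simp [X, Y, Z]
  have hsub : (∑ i ∈ u.support, u i * E c i * E d i) = 0 := by
    rw [← key, Finsupp.sum]
    simp only [hval]
    rw [Finset.sum_subset (s₂ := u.support ∪ (X u + Y (E c) + Z (E d)).support)
      Finset.subset_union_left, Finset.sum_subset (s₁ := (X u + Y (E c) + Z (E d)).support)
      Finset.subset_union_right]
    · intro i _ hi
      have h0 := (hval i).symm.trans (Finsupp.notMem_support_iff.1 hi)
      have : u i = 0 := congrArg Prod.fst h0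
      simp [this]
    · intro i _ hi
      simp [Finsupp.notMem_support_iff.1 hi]
  rw [← hsub, ← Finset.sum_coe_sort u.support]
  simp only [hE]
end

section
/- Uniform bound on linear subspaces of cubic hypersurfaces: for every positive integer c there exists an integer B (depending only on c and k) with the following property: for every n and every nonzero homogeneous degree-3 polynomial f in n variables over k, if the set of linear subspaces W ⊆ kⁿ of codimension c on which f vanishes identically is finite, then this set has cardinality at most B. -/
open scoped BigOperators

namespace BLS
open MvPolynomial

lemma proj_points {k : Type*} [Field k] [IsAlgClosed k] {σ τ : Type*} [Finite σ] [Finite τ]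
    {ι : Type*} [Finite ι] (P : ι → MvPolynomial (σ ⊕ τ) k) (j : τ) :
    ∃ S : PrimeSpectrum.ConstructibleSetData (MvPolynomial (Option σ) k),
      ∀ (s : σ → k) (t : k),
        (∃ x : τ → k, (∀ i, aeval (Sum.elim s x) (P i) = 0) ∧ x j = t) ↔
        ∃ C ∈ S, (∀ i, aeval (fun o : Option σ => o.elim t s) (C.g i) = 0) ∧
          aeval (fun o : Option σ => o.elim t s) C.f ≠ 0 := by
  let φ : MvPolynomial (Option σ) k →ₐ[k] MvPolynomial (σ ⊕ τ) k :=
    aeval (fun o => o.elim (X (Sum.inr j)) (fun i => X (Sum.inl i)))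
  have hφ : ∀ (y : σ ⊕ τ → k) p, aeval y (φ p) =
      aeval (fun o : Option σ => o.elim (y (Sum.inr j)) (fun i => y (Sum.inl i))) p := by
    intro y p
    rw [← AlgHom.comp_apply]
    congr 1
    ext o
    cases o <;> simp [φ]
  have hfp : (φ : MvPolynomial (Option σ) k →+* MvPolynomial (σ ⊕ τ) k).FinitePresentation := by
    rw [← RingHom.FinitePresentation.of_finiteType]
    apply RingHom.FiniteType.of_comp_finiteType (f := (MvPolynomial.C : k →+* _))
    have : ((φ : MvPolynomial (Option σ) k →+* MvPolynomial (σ ⊕ τ) k).comp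
      (MvPolynomial.C : k →+* _)) = algebraMap k _ := by
      ext a
      simp [φ, MvPolynomial.algebraMap_eq]
    rw [this, RingHom.finiteType_algebraMap]
    infer_instance
  have hcl : Topology.IsConstructible
      (PrimeSpectrum.zeroLocus (Set.range P)) := by
    rw [← Topology.isConstructible_compl]
    exact (PrimeSpectrum.isRetrocompact_zeroLocus_compl (Set.finite_range _)).isConstructible
      (PrimeSpectrum.isClosed_zeroLocus _).isOpen_compl
  obtain ⟨S, hS⟩ := PrimeSpectrum.exists_constructibleSetData_iff.mpr
    (PrimeSpectrum.isConstructible_comap_image hfp hcl)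
  refine ⟨S, fun s t => ?_⟩
  set y : Option σ → k := fun o => o.elim t s with hy
  have h1 : (pointToPoint (k := k) y) ∈ S.toSet ↔ ∃ C ∈ S, (∀ i, aeval y (C.g i) = 0) ∧
          aeval y C.f ≠ 0 := by
    simp only [PrimeSpectrum.ConstructibleSetData.toSet, Set.mem_iUnion,
      PrimeSpectrum.BasicConstructibleSetData.toSet, Set.mem_sdiff, PrimeSpectrum.mem_zeroLocus,
      pointToPoint, Set.range_subset_iff, Set.singleton_subset_iff, SetLike.mem_coe,
      mem_vanishingIdeal_singleton_iff, exists_prop]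
  rw [← h1, hS]
  constructor
  · rintro ⟨x, hx, hxt⟩
    refine ⟨pointToPoint (k := k) (Sum.elim s x), ?_, ?_⟩
    · simp only [PrimeSpectrum.mem_zeroLocus, pointToPoint, Set.range_subset_iff, SetLike.mem_coe,
      mem_vanishingIdeal_singleton_iff]
      exact hx
    · ext p
      simp only [PrimeSpectrum.comap_asIdeal, pointToPoint, Ideal.mem_comap]
      rw [mem_vanishingIdeal_singleton_iff, mem_vanishingIdeal_singleton_iff]
      erw [hφ]
      simp [hy, hxt]
  · rintro ⟨q, hq, hqy⟩
    obtain ⟨M, hM, hqM⟩ := Ideal.exists_le_maximal q.asIdeal q.2.ne_top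
    obtain ⟨z, rfl⟩ := isMaximal_iff_eq_vanishingIdeal_singleton.1 hM
    have hz : ∀ p, aeval y p = 0 → aeval z (φ p) = 0 := by
      intro p hp
      have : p ∈ (pointToPoint (k := k) y).asIdeal := by
        simp only [pointToPoint]
        rwa [mem_vanishingIdeal_singleton_iff]
      rw [← hqy] at this
      exact (mem_vanishingIdeal_singleton_iff _ _).1 (hqM this)
    have hzz : ∀ o : Option σ, (o.elim (z (Sum.inr j)) (fun i => z (Sum.inl i))) = y o := by
      intro o
      have := hz (X o - C (y o)) (by simp)
      rw [hφ] at this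
      simpa [sub_eq_zero] using this
    have hzs : Sum.elim s (fun a => z (Sum.inr a)) = z := by
      ext a
      cases a with
      | inl a => simpa [hy] using (hzz (some a)).symm
      | inr a => rfl
    refine ⟨fun a => z (Sum.inr a), fun i => ?_, by simpa [hy] using hzz none⟩
    rw [hzs]
    exact (mem_vanishingIdeal_singleton_iff _ _).1 (hqM (hq ⟨i, rfl⟩))

lemma proj_bound {k : Type*} [Field k] [IsAlgClosed k] {σ τ : Type*} [Finite σ] [Finite τ]
    {ι : Type*} [Finite ι] (P : ι → MvPolynomial (σ ⊕ τ) k) (j : τ) :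
    ∃ B : ℕ, ∀ s : σ → k,
      {x : τ → k | ∀ i, aeval (Sum.elim s x) (P i) = 0}.Finite →
      ((fun x : τ → k => x j) '' {x : τ → k | ∀ i, aeval (Sum.elim s x) (P i) = 0}).ncard ≤ B := by
  classical
  obtain ⟨S, hS⟩ := proj_points P j
  refine ⟨∑ C ∈ S, ∑ i, (C.g i).totalDegree, fun s hfin => ?_⟩
  set T := ((fun x : τ → k => x j) '' {x : τ → k | ∀ i, aeval (Sum.elim s x) (P i) = 0})
  have hTfin : T.Finite := hfin.image _
  let u : MvPolynomial (Option σ) k →ₐ[k] Polynomial k :=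
    aeval (fun o => o.elim Polynomial.X (fun i => Polynomial.C (s i)))
  have hu : ∀ t p, aeval (fun o : Option σ => o.elim t s) p = (u p).eval t := by
    intro t p
    rw [← Polynomial.coe_aeval_eq_eval, ← AlgHom.comp_apply]
    congr 1
    ext o
    cases o <;> simp [u]
  have hT : ∀ t, t ∈ T ↔ ∃ C ∈ S, (∀ i, (u (C.g i)).eval t = 0) ∧ (u C.f).eval t ≠ 0 := by
    intro t
    have := hS s t
    simp only [hu] at this
    rw [← this]
    rfl
  have hsub : T ⊆ ((S.biUnion fun C => Finset.univ.biUnion fun i => (u (C.g i)).roots.toFinset :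
      Finset k) : Set k) := by
    intro t ht
    obtain ⟨C, hC, hg, hf⟩ := (hT t).1 ht
    have : ∃ i, u (C.g i) ≠ 0 := by
      by_contra! hcon
      have hinf : {t | (u C.f).eval t = 0}.Finite := by
        have hne : u C.f ≠ 0 := by
          intro h0
          simp [h0] at hf
        have := (u C.f).roots.toFinset.finite_toSet
        refine this.subset fun t ht => ?_
        simpa [hne] using ht
      have hun : (Set.univ : Set k) ⊆ T ∪ {t | (u C.f).eval t = 0} := by
        intro t _
        by_cases h : (u C.f).eval t = 0
        · exact Or.inr h
        · exact Or.inl ((hT t).2 ⟨C, hC, by simp [hcon], h⟩)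
      exact Set.infinite_univ ((hTfin.union hinf).subset hun)
    obtain ⟨i, hi⟩ := this
    simp only [Finset.coe_biUnion, Set.mem_iUnion]
    refine ⟨C, hC, i, by simp, ?_⟩
    simp [hi, hg i]
  calc T.ncard ≤ (S.biUnion fun C => Finset.univ.biUnion fun i =>
        (u (C.g i)).roots.toFinset).card := by
        rw [← Set.ncard_coe_finset]
        exact Set.ncard_le_ncard hsub (Finset.finite_toSet _)
    _ ≤ ∑ C ∈ S, ∑ i, (u (C.g i)).roots.toFinset.card := by
        refine Finset.card_biUnion_le.trans (Finset.sum_le_sum fun C _ => Finset.card_biUnion_le)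
    _ ≤ _ := by
        refine Finset.sum_le_sum fun C _ => Finset.sum_le_sum fun i _ => ?_
        refine (Multiset.toFinset_card_le _).trans ((Polynomial.card_roots' _).trans ?_)
        refine (aeval_natDegree_le (m := (C.g i).totalDegree) (n := 1) _ le_rfl _ ?_).trans (by simp)
        intro o
        cases o <;> simp

lemma fiber_bound {k : Type*} [Field k] [IsAlgClosed k] {σ τ : Type*} [Finite σ] [Finite τ]
    {ι : Type*} [Finite ι] (P : ι → MvPolynomial (σ ⊕ τ) k) :
    ∃ B : ℕ, ∀ s : σ → k,
      {x : τ → k | ∀ i, aeval (Sum.elim s x) (P i) = 0}.Finite →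
      {x : τ → k | ∀ i, aeval (Sum.elim s x) (P i) = 0}.ncard ≤ B := by
  classical
  have := Fintype.ofFinite τ
  choose B hB using proj_bound P
  refine ⟨∏ j, B j, fun s hfin => ?_⟩
  set Z := {x : τ → k | ∀ i, aeval (Sum.elim s x) (P i) = 0}
  have hf : ∀ j, ((fun x : τ → k => x j) '' Z).Finite := fun j => hfin.image _
  have hsub : Z ⊆ (Fintype.piFinset fun j => (hf j).toFinset : Finset (τ → k)) := by
    intro x hx
    simp only [Finset.mem_coe, Fintype.mem_piFinset, Set.Finite.mem_toFinset]
    exact fun j => ⟨x, hx, rfl⟩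
  calc Z.ncard ≤ (Fintype.piFinset fun j => (hf j).toFinset).card := by
        rw [← Set.ncard_coe_finset]
        exact Set.ncard_le_ncard hsub (Finset.finite_toSet _)
    _ = ∏ j, (hf j).toFinset.card := Fintype.card_piFinset _
    _ ≤ _ := Finset.prod_le_prod' fun j _ => by
        rw [← Set.ncard_eq_toFinset_card _ (hf j)]
        exact hB j s hfin


lemma exists_chart {k : Type*} [Field k] {N d : ℕ} (W : Submodule k (Fin N → k))
    (hW : Module.finrank k W = d) :
    ∃ (e : Fin d → Fin N) (A : Fin d → Fin N → k), (∀ i j, A i (e j) = if i = j then 1 else 0) ∧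
      Submodule.span k (Set.range A) = W := by
  classical
  let v : Fin N → Module.Dual k W := fun i => (LinearMap.proj i).comp W.subtype
  obtain ⟨κ, a, ha, hsp, hli⟩ := exists_linearIndependent' k v
  have : Finite κ := Finite.of_injective a ha
  have := Fintype.ofFinite κ
  let L : W →ₗ[k] (κ → k) := LinearMap.pi (fun i => v (a i))
  have hinj : Function.Injective L := by
    rw [injective_iff_map_eq_zero]
    intro w hw
    have h1 : ∀ φ ∈ Submodule.span k (Set.range v), φ w = 0 := by
      rw [← hsp]
      intro φ hφ
      induction hφ using Submodule.span_induction with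
      | mem x h => obtain ⟨i, rfl⟩ := h; exact congrFun hw i
      | zero => simp
      | add x y _ _ hx hy => simp [hx, hy]
      | smul c x _ hx => simp [hx]
    ext i
    exact h1 (v i) (Submodule.subset_span ⟨i, rfl⟩)
  have hc1 : d ≤ Fintype.card κ := by
    have := LinearMap.finrank_le_finrank_of_injective hinj
    simpa [hW] using this
  have hc2 : Fintype.card κ ≤ d := by
    have := hli.fintype_card_le_finrank
    rwa [Subspace.dual_finrank_eq, hW] at this
  have hcard : Fintype.card κ = d := le_antisymm hc2 hc1
  let E : W ≃ₗ[k] (κ → k) := LinearEquiv.ofInjectiveOfFinrankEq L hinj (by simp [hW, hcard])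
  let r : Fin d ≃ κ := (Fintype.equivFinOfCardEq hcard).symm
  let b : Module.Basis (Fin d) k W := (Module.Basis.ofEquivFun E).reindex r.symm
  have hEL : ∀ w i, E w i = (w : Fin N → k) (a i) := fun w i => rfl
  refine ⟨fun j => a (r j), fun i => (b i : Fin N → k), ?_, ?_⟩
  · intro i j
    change (b i : Fin N → k) (a (r j)) = _
    rw [← hEL]
    have : E (b i) = Pi.single (r i) 1 := by
      simp [b]
    rw [this, Pi.single_apply]
    simp [eq_comm]
  · have h2 := b.span_eq
    have h3 := congrArg (Submodule.map W.subtype) h2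
    rw [Submodule.map_span, ← Set.range_comp, Submodule.map_top, Submodule.range_subtype] at h3
    exact h3

lemma bound_fixed (k : Type*) [Field k] [IsAlgClosed k] (N d : ℕ) :
    ∃ B : ℕ, ∀ F : (Fin N → k) →ₗ[k] (Fin N → k) →ₗ[k] (Fin N → k) →ₗ[k] k,
      {W : Submodule k (Fin N → k) | Module.finrank k W = d ∧
        ∀ a ∈ W, ∀ b ∈ W, ∀ c ∈ W, F a b c = 0}.Finite →
      {W : Submodule k (Fin N → k) | Module.finrank k W = d ∧
        ∀ a ∈ W, ∀ b ∈ W, ∀ c ∈ W, F a b c = 0}.ncard ≤ B := by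
  classical
  let σ := Fin N × Fin N × Fin N
  let τ := Fin d × Fin N
  let ι := (Fin d × Fin d) ⊕ (Fin d × Fin d × Fin d)
  let P : (Fin d → Fin N) → ι → MvPolynomial (σ ⊕ τ) k := fun e i =>
    match i with
    | Sum.inl (i, j) => X (Sum.inr (i, e j)) - C (if i = j then 1 else 0)
    | Sum.inr (a, b, c) => ∑ i, ∑ j, ∑ l, X (Sum.inr (a, i)) * (X (Sum.inr (b, j)) *
        (X (Sum.inr (c, l)) * X (Sum.inl (i, j, l))))
  choose B hB using fun e => fiber_bound (P e)
  refine ⟨∑ e, B e, fun F hfin => ?_⟩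
  set 𝒮 := {W : Submodule k (Fin N → k) | Module.finrank k W = d ∧
        ∀ a ∈ W, ∀ b ∈ W, ∀ c ∈ W, F a b c = 0}
  let s : σ → k := fun i => F (Pi.single i.1 1) (Pi.single i.2.1 1) (Pi.single i.2.2 1)
  have hF : ∀ a b c, F a b c = ∑ i, ∑ j, ∑ l, a i * (b j * (c l * s (i, j, l))) := by
    intro a b c
    have e1 : ∀ a : Fin N → k, a = ∑ i, a i • (Pi.single i 1 : Fin N → k) := fun a => by
      ext j
      simp [Finset.sum_apply, Pi.single_apply]
    have ha : F a b c = ∑ i, a i * F (Pi.single i 1) b c := by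
      conv_lhs => rw [e1 a]
      simp [map_sum, LinearMap.sum_apply]
    have hb : ∀ i, F (Pi.single i 1) b c =
        ∑ j, b j * F (Pi.single i 1) (Pi.single j 1) c := fun i => by
      conv_lhs => rw [e1 b]
      simp [map_sum, LinearMap.sum_apply]
    have hc : ∀ i j, F (Pi.single i 1) (Pi.single j 1) c =
        ∑ l, c l * F (Pi.single i 1) (Pi.single j 1) (Pi.single l 1) := fun i j => by
      conv_lhs => rw [e1 c]
      simp [map_sum]
    simp only [ha, hb, hc, Finset.mul_sum, s]
  let Z : (Fin d → Fin N) → Set (τ → k) := fun e =>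
    {x : τ → k | ∀ i, aeval (Sum.elim s x) (P e i) = 0}
  have hZ : ∀ e x, x ∈ Z e ↔ (∀ i j, x (i, e j) = if i = j then 1 else 0) ∧
      ∀ a b c, F (fun i => x (a, i)) (fun i => x (b, i)) (fun i => x (c, i)) = 0 := by
    intro e x
    simp only [Z, Set.mem_ofPred_eq, ι, Sum.forall, Prod.forall, P]
    refine and_congr ?_ ?_
    · refine forall_congr' fun i => forall_congr' fun j => ?_
      simp [sub_eq_zero]
    · refine forall_congr' fun i => forall_congr' fun j => forall_congr' fun l => ?_
      simp [hF]
  let Φ : (τ → k) → Submodule k (Fin N → k) := fun x =>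
    Submodule.span k (Set.range fun (i : Fin d) (j : Fin N) => x (i, j))
  have hcoord : ∀ e, ∀ x ∈ Z e, ∀ w ∈ Φ x, w = ∑ i, w (e i) • fun j => x (i, j) := by
    intro e x hx w hw
    obtain ⟨c, rfl⟩ := (Submodule.mem_span_range_iff_exists_fun k).1 hw
    have h1 := ((hZ e x).1 hx).1
    refine Finset.sum_congr rfl fun i _ => ?_
    congr 1
    simp [Finset.sum_apply, h1]
  have hmem : ∀ x i, (fun j => x (i, j)) ∈ Φ x := fun x i => Submodule.subset_span ⟨i, rfl⟩
  have hΦS : ∀ e, ∀ x ∈ Z e, Φ x ∈ 𝒮 := by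
    intro e x hx
    obtain ⟨h1, h2⟩ := (hZ e x).1 hx
    constructor
    · have hli : LinearIndependent k (fun (i : Fin d) (j : Fin N) => x (i, j)) := by
        rw [Fintype.linearIndependent_iff]
        intro g hg i
        have := congrFun hg (e i)
        simpa [Finset.sum_apply, h1] using this
      simpa using finrank_span_eq_card hli
    · intro a ha b hb c hc
      rw [hcoord e x hx a ha, hcoord e x hx b hb, hcoord e x hx c hc]
      simp [map_sum, LinearMap.sum_apply, h2]
  have hinj : ∀ e, Set.InjOn Φ (Z e) := by
    intro e x hx y hy hxy
    ext ⟨i, j⟩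
    have h3 : (fun j => x (i, j)) ∈ Φ y := hxy ▸ hmem x i
    have h4 := hcoord e y hy _ h3
    have h1 := ((hZ e x).1 hx).1
    have := congrFun h4 j
    simpa [Finset.sum_apply, h1, ite_apply] using this
  have hZfin : ∀ e, (Z e).Finite := fun e =>
    Set.Finite.of_finite_image (hfin.subset (by rintro _ ⟨x, hx, rfl⟩; exact hΦS e x hx)) (hinj e)
  have hcover : 𝒮 ⊆ ⋃ e ∈ (Finset.univ : Finset (Fin d → Fin N)), Φ '' Z e := by
    intro W hW
    obtain ⟨e, A, h1, h2⟩ := exists_chart W hW.1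
    simp only [Set.mem_iUnion]
    refine ⟨e, by simp, fun p => A p.1 p.2, ?_, h2⟩
    rw [hZ]
    refine ⟨h1, fun a b c => ?_⟩
    have hA : ∀ i, A i ∈ W := fun i => h2 ▸ Submodule.subset_span ⟨i, rfl⟩
    exact hW.2 _ (hA a) _ (hA b) _ (hA c)
  calc 𝒮.ncard ≤ (⋃ e ∈ (Finset.univ : Finset (Fin d → Fin N)), Φ '' Z e).ncard := by
        refine Set.ncard_le_ncard hcover ?_
        exact Set.Finite.biUnion (Finset.finite_toSet _) fun e _ => (hZfin e).image _
    _ ≤ ∑ e, (Φ '' Z e).ncard := Finset.set_ncard_biUnion_le _ _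
    _ ≤ ∑ e, B e := Finset.sum_le_sum fun e _ =>
        (Set.ncard_image_le (hZfin e)).trans (hB e s (hZfin e))

lemma isHomogeneous_pderiv' {k σ : Type*} [Field k] {f : MvPolynomial σ k} {n : ℕ}
    (hf : f.IsHomogeneous (n + 1)) (i : σ) : (pderiv i f).IsHomogeneous n := by
  exact hf.pderiv

lemma pderiv_comm' {k σ : Type*} [Field k] (f : MvPolynomial σ k) (i j : σ) :
    pderiv i (pderiv j f) = pderiv j (pderiv i f) := by
  classical
  ext m
  simp only [coeff_pderiv]
  by_cases h : i = j
  · subst h; rfl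
  · have h' : j ≠ i := Ne.symm h
    simp [h, h', add_right_comm]
    ring

lemma exists_polar {k : Type*} [Field k] {n : ℕ} (f : MvPolynomial (Fin n) k)
    (hf : f.IsHomogeneous 3) :
    ∃ F : (Fin n → k) →ₗ[k] (Fin n → k) →ₗ[k] (Fin n → k) →ₗ[k] k,
      (∀ a b c, F a b c = F b a c) ∧ (∀ a b c, F a b c = F a c b) ∧
      ∀ v, F v v v = 6 * eval v f := by
  let t : Fin n → Fin n → Fin n → k := fun i j l => eval 0 (pderiv i (pderiv j (pderiv l f)))
  have ht1 : ∀ i j l, t i j l = t j i l := fun i j l => by simp only [t]; rw [pderiv_comm']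
  have ht2 : ∀ i j l, t i j l = t i l j := fun i j l => by
    simp only [t]; rw [pderiv_comm' f j l]
  let F : (Fin n → k) →ₗ[k] (Fin n → k) →ₗ[k] (Fin n → k) →ₗ[k] k :=
    ∑ i, ∑ j, ∑ l, (LinearMap.proj i : (Fin n → k) →ₗ[k] k).smulRight
      ((LinearMap.proj j : (Fin n → k) →ₗ[k] k).smulRight
        (t i j l • (LinearMap.proj l : (Fin n → k) →ₗ[k] k)))
  have hF : ∀ a b c, F a b c = ∑ i, ∑ j, ∑ l, a i * (b j * (t i j l * c l)) := by
    intro a b c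
    simp [F, LinearMap.sum_apply]
  refine ⟨F, fun a b c => ?_, fun a b c => ?_, fun v => ?_⟩
  · rw [hF, hF, Finset.sum_comm]
    refine Finset.sum_congr rfl fun i _ => Finset.sum_congr rfl fun j _ =>
      Finset.sum_congr rfl fun l _ => ?_
    rw [ht1]; ring
  · rw [hF, hF]
    refine Finset.sum_congr rfl fun i _ => ?_
    rw [Finset.sum_comm]
    refine Finset.sum_congr rfl fun j _ => Finset.sum_congr rfl fun l _ => ?_
    rw [ht2]; ring
  · rw [hF]
    have e1 : ∑ l, v l * eval v (pderiv l f) = 3 * eval v f := by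
      have := congrArg (eval v) hf.sum_X_mul_pderiv
      simpa using this
    have e2 : ∀ l, ∑ j, v j * eval v (pderiv j (pderiv l f)) = 2 * eval v (pderiv l f) := by
      intro l
      have := congrArg (eval v) (isHomogeneous_pderiv' hf l).sum_X_mul_pderiv
      simpa using this
    have e3 : ∀ j l, ∑ i, v i * eval v (pderiv i (pderiv j (pderiv l f))) =
        eval v (pderiv j (pderiv l f)) := by
      intro j l
      have := congrArg (eval v)
        (isHomogeneous_pderiv' (isHomogeneous_pderiv' hf l) j).sum_X_mul_pderiv
      simpa using this
    have e4 : ∀ i j l, t i j l = eval v (pderiv i (pderiv j (pderiv l f))) := by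
      intro i j l
      have h0 := isHomogeneous_pderiv' (isHomogeneous_pderiv' (isHomogeneous_pderiv' hf l) j) i
      have := totalDegree_eq_zero_iff_eq_C.1 (Nat.le_zero.1 h0.totalDegree_le)
      simp only [t]
      rw [this]; simp
    calc ∑ i, ∑ j, ∑ l, v i * (v j * (t i j l * v l))
        = ∑ l, v l * ∑ j, v j * ∑ i, v i * t i j l := by
          simp only [Finset.mul_sum]
          rw [Finset.sum_comm]
          rw [Finset.sum_congr rfl fun j _ => Finset.sum_comm]
          rw [Finset.sum_comm]
          refine Finset.sum_congr rfl fun i _ => Finset.sum_congr rfl fun j _ =>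
            Finset.sum_congr rfl fun l _ => ?_
          ring
      _ = 6 * eval v f := by
          simp only [e4, e3, e2]
          have : ∀ l, v l * (2 * eval v (pderiv l f)) = 2 * (v l * eval v (pderiv l f)) :=
            fun l => by ring
          simp only [this]
          rw [← Finset.mul_sum, e1]; ring

lemma polarize {k V : Type*} [Field k] [AddCommGroup V] [Module k V]
    (h2 : (2 : k) ≠ 0) (h3 : (3 : k) ≠ 0) (F : V →ₗ[k] V →ₗ[k] V →ₗ[k] k)
    (s1 : ∀ a b c, F a b c = F b a c) (s2 : ∀ a b c, F a b c = F a c b)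
    (W : Submodule k V) (h : ∀ w ∈ W, F w w w = 0) :
    ∀ a ∈ W, ∀ b ∈ W, ∀ c ∈ W, F a b c = 0 := by
  have key : ∀ a ∈ W, ∀ b ∈ W, F a b b = 0 := by
    intro a ha b hb
    have h4 := h _ (W.add_mem ha hb)
    have h5 := h _ (W.sub_mem ha hb)
    simp only [map_add, map_sub, LinearMap.add_apply, LinearMap.sub_apply, h a ha, h b hb] at h4 h5
    rw [s1 b a a, s1 b a b, s2 a b a, s2 b b a, s1 b a b] at h4 h5
    have h6 : (2 * 3 : k) * F a b b = 0 := by linear_combination h4 + h5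
    exact (mul_eq_zero.1 h6).resolve_left (mul_ne_zero h2 h3)
  intro a ha b hb c hc
  have h4 := key a ha _ (W.add_mem hb hc)
  simp only [map_add, LinearMap.add_apply, key a ha b hb, key a ha c hc] at h4
  rw [s2 a c b] at h4
  have h6 : (2 : k) * F a b c = 0 := by linear_combination h4
  exact (mul_eq_zero.1 h6).resolve_left h2


lemma infinite_of_lt {k V : Type*} [Field k] [Infinite k] [AddCommGroup V] [Module k V]
    [FiniteDimensional k V] (W U : Submodule k V) (hWU : W < U) (hW : W ≠ ⊥) :
    {W' : Submodule k V | W' ≤ U ∧ Module.finrank k W' = Module.finrank k W}.Infinite := by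
  obtain ⟨u, huU, huW⟩ := SetLike.exists_of_lt hWU
  obtain ⟨w0, hw0, hne⟩ := W.exists_mem_ne_zero_of_ne_bot hW
  have hne' : (⟨w0, hw0⟩ : W) ≠ 0 := by simpa [Subtype.ext_iff] using hne
  obtain ⟨φ, hφ⟩ := Module.Projective.exists_dual_eq_one k hne'
  let L : k → W →ₗ[k] V := fun t => W.subtype + t • φ.smulRight u
  have hL : ∀ t w, L t w = w + (t * φ w) • u := by
    intro t w
    simp [L, mul_smul]
  have hzero : ∀ (w : W) (r : k), (w : V) + r • u = 0 → w = 0 ∧ r = 0 := by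
    intro w r h
    have hr : r = 0 := by
      by_contra hr
      apply huW
      have : u = (-r⁻¹) • (w : V) := by
        have h' : (w : V) = - (r • u) := eq_neg_of_add_eq_zero_left h
        rw [h', smul_neg, neg_smul, neg_neg, smul_smul, inv_mul_cancel₀ hr, one_smul]
      rw [this]
      exact W.smul_mem _ w.2
    subst hr
    simpa using h
  have hinj : ∀ t, Function.Injective (L t) := by
    intro t
    rw [injective_iff_map_eq_zero]
    intro w hw
    rw [hL] at hw
    exact (hzero w _ hw).1
  refine Set.infinite_of_injective_forall_mem (f := fun t => LinearMap.range (L t)) ?_ ?_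
  · intro t s hts
    have h1 : L t ⟨w0, hw0⟩ ∈ LinearMap.range (L s) := by
      have h0 : LinearMap.range (L t) = LinearMap.range (L s) := hts
      rw [← h0]; exact ⟨_, rfl⟩
    obtain ⟨w, hw⟩ := h1
    rw [hL, hL, hφ] at hw
    have h2 : ((w - ⟨w0, hw0⟩ : W) : V) + (s * φ w - t * 1) • u = 0 := by
      rw [sub_smul]
      push_cast
      have := sub_eq_zero.2 hw
      rw [← this]
      abel
    obtain ⟨h3, h4⟩ := hzero _ _ h2
    rw [sub_eq_zero] at h3 h4
    rw [h3, hφ] at h4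
    simpa using h4.symm
  · intro t
    refine ⟨?_, LinearMap.finrank_range_of_inj (hinj t)⟩
    rintro _ ⟨w, rfl⟩
    rw [hL]
    exact U.add_mem (hWU.le w.2) (U.smul_mem _ huU)

lemma exists_cover {k V : Type*} [Field k] [AddCommGroup V] [Module k V]
    [FiniteDimensional k V] (𝒮 : Set (Submodule k V)) (m : ℕ) :
    ∀ U : Submodule k V, Module.finrank k V ≤ Module.finrank k U + m →
    ∃ G : Finset (Submodule k V), ↑G ⊆ 𝒮 ∧ G.card ≤ m ∧ ∀ W ∈ 𝒮, W ≤ U ⊔ G.sup id := by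
  classical
  induction m with
  | zero =>
    intro U hU
    have : U = ⊤ := Submodule.eq_top_of_finrank_eq (le_antisymm (Submodule.finrank_le U) (by simpa using hU))
    exact ⟨∅, by simp, by simp, by simp [this]⟩
  | succ m ih =>
    intro U hU
    by_cases h : ∀ W ∈ 𝒮, W ≤ U
    · exact ⟨∅, by simp, by simp, by simpa using h⟩
    · push Not at h
      obtain ⟨W, hW, hWU⟩ := h
      have hlt : U < U ⊔ W := left_lt_sup.2 hWU
      have := Submodule.finrank_lt_finrank_of_lt hlt
      obtain ⟨G, hG, hc, hs⟩ := ih (U ⊔ W) (by omega)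
      refine ⟨insert W G, ?_, (Finset.card_insert_le _ _).trans (by omega), ?_⟩
      · simp [Set.insert_subset_iff, hW, hG]
      · intro W' hW'
        simpa [sup_assoc] using hs W' hW'

lemma finrank_inf_bound {k V : Type*} [Field k] [AddCommGroup V] [Module k V]
    [FiniteDimensional k V] (c : ℕ) (G : Finset (Submodule k V))
    (h : ∀ W ∈ G, Module.finrank k V ≤ Module.finrank k W + c) :
    Module.finrank k V ≤ Module.finrank k (G.inf id : Submodule k V) + c * G.card := by
  classical
  induction G using Finset.induction_on with
  | empty => rw [Finset.inf_empty, finrank_top]; omega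
  | insert W G hW ih =>
    have h1 := ih fun W' hW' => h W' (Finset.mem_insert_of_mem hW')
    have h2 := h W (Finset.mem_insert_self _ _)
    have h3 := Submodule.finrank_sup_add_finrank_inf_eq W (G.inf id)
    have h4 := Submodule.finrank_le (W ⊔ G.inf id)
    rw [Finset.card_insert_of_notMem hW, Finset.inf_insert, mul_add]
    simp only [id] at *
    omega

lemma reduction {k V : Type*} [Field k] [Infinite k] [AddCommGroup V] [Module k V]
    [FiniteDimensional k V] (F : V →ₗ[k] V →ₗ[k] V →ₗ[k] k)
    (s1 : ∀ a b c, F a b c = F b a c) (s2 : ∀ a b c, F a b c = F a c b)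
    (c d : ℕ) (hd : 0 < d) (hV : Module.finrank k V = d + c) (𝒮 : Set (Submodule k V))
    (h𝒮 : 𝒮 = {W : Submodule k V | Module.finrank k W = d ∧ ∀ a ∈ W, ∀ b ∈ W, ∀ c ∈ W, F a b c = 0})
    (hfin : 𝒮.Finite) (hne : 𝒮.Nonempty) :
    ∃ N ≤ c * (c + 1) + (c * (c + 1)) * (c * (c + 1)), ∃ d' ≤ N,
      ∃ G : (Fin N → k) →ₗ[k] (Fin N → k) →ₗ[k] (Fin N → k) →ₗ[k] k,
      {W : Submodule k (Fin N → k) | Module.finrank k W = d' ∧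
        ∀ a ∈ W, ∀ b ∈ W, ∀ c ∈ W, G a b c = 0}.Finite ∧
      𝒮.ncard ≤ {W : Submodule k (Fin N → k) | Module.finrank k W = d' ∧
        ∀ a ∈ W, ∀ b ∈ W, ∀ c ∈ W, G a b c = 0}.ncard := by
  classical
  have hmem : ∀ W, W ∈ 𝒮 ↔ Module.finrank k W = d ∧
      ∀ a ∈ W, ∀ b ∈ W, ∀ c ∈ W, F a b c = 0 := fun W => by rw [h𝒮]; rfl
  -- minimality
  have hmax : ∀ W ∈ 𝒮, ∀ U : Submodule k V, W ≤ U →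
      (∀ a ∈ U, ∀ b ∈ U, ∀ c ∈ U, F a b c = 0) → U ≤ W := by
    intro W hW U hWU hU
    by_contra hcon
    have hlt : W < U := lt_of_le_not_ge hWU hcon
    have hWd := ((hmem W).1 hW).1
    have hbot : W ≠ ⊥ := by
      rintro rfl
      simp at hWd
      omega
    refine infinite_of_lt W U hlt hbot (hfin.subset ?_)
    rintro W' ⟨h1, h2⟩
    exact (hmem W').2 ⟨h2.trans hWd, fun a ha b hb c hc => hU a (h1 ha) b (h1 hb) c (h1 hc)⟩
  obtain ⟨W0, hW0⟩ := hne
  obtain ⟨G0, hG0, hG0c, hG0s⟩ := exists_cover 𝒮 c W0 (by rw [((hmem W0).1 hW0).1, hV])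
  set G := insert W0 G0 with hG
  have hG𝒮 : ∀ W ∈ G, W ∈ 𝒮 := by
    intro W hW
    rcases Finset.mem_insert.1 hW with rfl | h
    · exact hW0
    · exact hG0 h
  have hGc : G.card ≤ c + 1 := (Finset.card_insert_le _ _).trans (by omega)
  set V' : Submodule k V := G.sup id with hV'
  have hle : ∀ W ∈ 𝒮, W ≤ V' := by
    intro W hW
    simpa [hV', hG] using hG0s W hW
  set I : Submodule k V := G.inf id with hI
  have hIW : ∀ W ∈ G, I ≤ W := fun W hW => Finset.inf_le (f := id) hW
  have hIV : I ≤ V' := (hIW W0 (Finset.mem_insert_self _ _)).trans (hle W0 hW0)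
  set D := c * (c + 1) with hD
  have hId : Module.finrank k V ≤ Module.finrank k I + D := by
    have := finrank_inf_bound c G fun W hW => by rw [((hmem W).1 (hG𝒮 W hW)).1, hV]
    exact this.trans (Nat.add_le_add_left (Nat.mul_le_mul_left _ hGc) _)
  have hFI : ∀ v ∈ I, ∀ a ∈ I, ∀ b ∈ V', F v a b = 0 := by
    intro v hv a ha
    have : V' ≤ LinearMap.ker (F v a) := by
      refine Finset.sup_le fun W hW b hb => ?_
      exact ((hmem W).1 (hG𝒮 W hW)).2 v (hIW W hW hv) a (hIW W hW ha) b hb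
    exact fun b hb => this hb
  -- complement of I
  obtain ⟨C, hC⟩ := Submodule.exists_isCompl I
  have hCd : Module.finrank k C ≤ D := by
    have := Submodule.finrank_add_eq_of_isCompl hC
    omega
  set C' := C ⊓ V' with hC'
  have hC'd : Module.finrank k C' ≤ D :=
    (Submodule.finrank_mono inf_le_left).trans hCd
  have hVsup : V' = I ⊔ C' := by
    rw [hC', ← sup_inf_assoc_of_le C hIV, hC.sup_eq_top, top_inf_eq]
  let L : I →ₗ[k] (C' →ₗ[k] C' →ₗ[k] k) :=
    { toFun := fun v => (F v).compl₁₂ C'.subtype C'.subtype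
      map_add' := fun x y => by ext; simp
      map_smul' := fun r x => by ext; simp }
  set K : Submodule k V := (LinearMap.ker L).map I.subtype with hK
  have hKd : Module.finrank k V' ≤ Module.finrank k K + (D + D * D) := by
    have h1 : Module.finrank k K = Module.finrank k (LinearMap.ker L) :=
      LinearEquiv.finrank_eq (Submodule.equivMapOfInjective _ I.injective_subtype _).symm
    have h2 := LinearMap.finrank_range_add_finrank_ker (K := k) (V := I) (V₂ := C' →ₗ[k] C' →ₗ[k] k) L
    have h3 : Module.finrank k (LinearMap.range L) ≤ D * D := by
      refine (Submodule.finrank_le _).trans ?_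
      rw [Module.finrank_linearMap, Module.finrank_linearMap, Module.finrank_self, mul_one]
      exact Nat.mul_le_mul hC'd hC'd
    have h4 := Submodule.finrank_le V'
    omega
  have hKI : K ≤ I := by
    rintro _ ⟨v, _, rfl⟩; exact v.2
  have hKF : ∀ v ∈ K, ∀ a ∈ V', ∀ b ∈ V', F v a b = 0 := by
    rintro _ ⟨v, hv, rfl⟩ a ha b hb
    change F v a b = 0
    have hv' : ∀ x (hx : x ∈ C') y (hy : y ∈ C'), F v x y = 0 := by
      intro x hx y hy
      have := LinearMap.congr_fun₂ (LinearMap.mem_ker.1 hv) ⟨x, hx⟩ ⟨y, hy⟩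
      simpa [L] using this
    rw [hVsup] at ha
    obtain ⟨a1, ha1, a2, ha2, rfl⟩ := Submodule.mem_sup.1 ha
    rw [map_add, LinearMap.add_apply, hFI v v.2 a1 ha1 b hb, zero_add]
    rw [hVsup] at hb
    obtain ⟨b1, hb1, b2, hb2, rfl⟩ := Submodule.mem_sup.1 hb
    rw [map_add, hv' a2 ha2 b2 hb2, s2, hFI v v.2 b1 hb1 a2 ha2.2, zero_add]
  have hKV : K ≤ V' := hKI.trans hIV
  -- vanishing on sums with K
  have hsum : ∀ U : Submodule k V, U ≤ V' → (∀ a ∈ U, ∀ b ∈ U, ∀ c ∈ U, F a b c = 0) →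
      ∀ a ∈ K ⊔ U, ∀ b ∈ K ⊔ U, ∀ c ∈ K ⊔ U, F a b c = 0 := by
    intro U hUV hU a ha b hb c hc
    have hKU : K ⊔ U ≤ V' := sup_le hKV hUV
    have hb' := hKU hb
    have hc' := hKU hc
    obtain ⟨a1, ha1, a2, ha2, rfl⟩ := Submodule.mem_sup.1 ha
    rw [map_add, LinearMap.add_apply, LinearMap.add_apply, hKF a1 ha1 b hb' c hc', zero_add]
    obtain ⟨b1, hb1, b2, hb2, rfl⟩ := Submodule.mem_sup.1 hb
    rw [map_add, LinearMap.add_apply, s1, hKF b1 hb1 a2 (hUV ha2) c hc', zero_add]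
    obtain ⟨c1, hc1, c2, hc2, rfl⟩ := Submodule.mem_sup.1 hc
    rw [map_add, s2, s1, hKF c1 hc1 a2 (hUV ha2) b2 (hUV hb2), zero_add]
    exact hU a2 ha2 b2 hb2 c2 hc2
  have hKW : ∀ W ∈ 𝒮, K ≤ W := fun W hW =>
    le_sup_left.trans (hmax W hW (K ⊔ W) le_sup_right (hsum W (hle W hW) ((hmem W).1 hW).2))
  -- complement of K in V'
  obtain ⟨M0, hM0⟩ := Submodule.exists_isCompl K
  set M := M0 ⊓ V' with hM
  have hMsup : K ⊔ M = V' := by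
    rw [hM, ← sup_inf_assoc_of_le M0 hKV, hM0.sup_eq_top, top_inf_eq]
  have hMinf : K ⊓ M = ⊥ := by
    rw [hM, ← inf_assoc, hM0.inf_eq_bot, bot_inf_eq]
  have hMd := Submodule.finrank_sup_add_finrank_inf_eq K M
  rw [hMsup, hMinf, finrank_bot, add_zero] at hMd
  set N := Module.finrank k M with hN
  let E : (Fin N → k) ≃ₗ[k] M := (Module.finBasis k M).equivFun.symm
  let j : (Fin N → k) →ₗ[k] V := M.subtype ∘ₗ E.toLinearMap
  have hj : Function.Injective j := M.injective_subtype.comp E.injective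
  have hjr : LinearMap.range j = M := by
    simp [j, LinearMap.range_comp]
  have hjM : ∀ x, j x ∈ M := fun x => (E x).2
  have hW0d := ((hmem W0).1 hW0).1
  have hKled : Module.finrank k K ≤ d := hW0d ▸ Submodule.finrank_mono (hKW W0 hW0)
  have hdV' : d ≤ Module.finrank k V' := hW0d ▸ Submodule.finrank_mono (hle W0 hW0)
  refine ⟨N, by omega, d - Module.finrank k K, by omega,
    (F.compl₁₂ j j).compr₂ (LinearMap.lcomp k k j), ?_⟩
  set G' := (F.compl₁₂ j j).compr₂ (LinearMap.lcomp k k j) with hG'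
  have hG'F : ∀ a b c, G' a b c = F (j a) (j b) (j c) := fun a b c => rfl
  set 𝒯 := {W : Submodule k (Fin N → k) | Module.finrank k W = d - Module.finrank k K ∧
        ∀ a ∈ W, ∀ b ∈ W, ∀ c ∈ W, G' a b c = 0} with h𝒯
  have hmemT : ∀ W, W ∈ 𝒯 ↔ Module.finrank k W = d - Module.finrank k K ∧
        ∀ a ∈ W, ∀ b ∈ W, ∀ c ∈ W, G' a b c = 0 := fun W => Iff.rfl
  let Φ : Submodule k (Fin N → k) → Submodule k V := fun U => K ⊔ U.map j
  have hmapM : ∀ U : Submodule k (Fin N → k), U.map j ≤ M := by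
    rintro U _ ⟨x, _, rfl⟩; exact hjM x
  have hMV : M ≤ V' := inf_le_right
  have hΦd : ∀ U : Submodule k (Fin N → k), Module.finrank k (Φ U) =
      Module.finrank k K + Module.finrank k U := by
    intro U
    have h1 := Submodule.finrank_sup_add_finrank_inf_eq K (U.map j)
    have h2 : K ⊓ U.map j = ⊥ := le_bot_iff.1 (hMinf ▸ inf_le_inf_left K (hmapM U))
    rw [h2, finrank_bot, add_zero] at h1
    rw [h1, LinearEquiv.finrank_eq (Submodule.equivMapOfInjective j hj U).symm]
  have hΦinj : Function.Injective Φ := by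
    have : ∀ U, Φ U ⊓ M = U.map j := by
      intro U
      change (K ⊔ U.map j) ⊓ M = _
      rw [sup_comm, sup_inf_assoc_of_le K (hmapM U), hMinf, sup_bot_eq]
    intro U U' h
    apply Submodule.map_injective_of_injective hj
    rw [← this U, ← this U', h]
  have hΦ𝒮 : ∀ U ∈ 𝒯, Φ U ∈ 𝒮 := by
    intro U hU
    obtain ⟨h1, h2⟩ := (hmemT U).1 hU
    rw [hmem]
    refine ⟨by rw [hΦd, h1]; omega, hsum _ ((hmapM U).trans hMV) ?_⟩
    rintro _ ⟨a, ha, rfl⟩ _ ⟨b, hb, rfl⟩ _ ⟨c, hc, rfl⟩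
    exact h2 a ha b hb c hc
  have h𝒯fin : 𝒯.Finite :=
    Set.Finite.of_finite_image (hfin.subset (by rintro _ ⟨U, hU, rfl⟩; exact hΦ𝒮 U hU))
      hΦinj.injOn
  refine ⟨h𝒯fin, ?_⟩
  have hsub : 𝒮 ⊆ Φ '' 𝒯 := by
    intro W hW
    have hΦW : Φ (W.comap j) = W := by
      change K ⊔ (W.comap j).map j = W
      rw [Submodule.map_comap_eq, hjr, ← sup_inf_assoc_of_le M (hKW W hW), hMsup,
        inf_eq_right.2 (hle W hW)]
    refine ⟨W.comap j, ?_, hΦW⟩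
    rw [hmemT]
    obtain ⟨h1, h2⟩ := (hmem W).1 hW
    constructor
    · have := hΦd (W.comap j)
      rw [hΦW, h1] at this
      omega
    · intro a ha b hb c hc
      exact h2 _ ha _ hb _ hc
  exact (Set.ncard_le_ncard hsub (h𝒯fin.image _)).trans (Set.ncard_image_le h𝒯fin)

end BLS

/-- Uniform bound on linear subspaces of cubic hypersurfaces: for every `c > 0` there is
a bound `B` such that for every `n` and every nonzero cubic form `f` in `n` variables,
if the set of codimension-`c` linear subspaces of `kⁿ` on which `f` vanishes is finite,
then it has at most `B` elements. -/
theorem bounded_linear_subspaces {k : Type*} [Field k] [IsAlgClosed k]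
    (h2 : (2 : k) ≠ 0) (h3 : (3 : k) ≠ 0) (c : ℕ) (hc : 0 < c) :
    ∃ B : ℕ, ∀ (n : ℕ) (f : MvPolynomial (Fin n) k), f ≠ 0 → f.IsHomogeneous 3 →
      ∀ hfin : {W : Submodule k (Fin n → k) |
          Module.finrank k ((Fin n → k) ⧸ W) = c ∧
          ∀ w ∈ W, MvPolynomial.eval w f = 0}.Finite,
        hfin.toFinset.card ≤ B := by
  classical
  let N0 := c * (c + 1) + (c * (c + 1)) * (c * (c + 1))
  choose B hB using fun N d => BLS.bound_fixed k N d
  refine ⟨1 + ∑ N ∈ Finset.range (N0 + 1), ∑ d ∈ Finset.range (N0 + 1), B N d, ?_⟩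
  intro n f _ hf hfin
  obtain ⟨F, s1, s2, hF⟩ := BLS.exists_polar f hf
  have h6 : (6 : k) ≠ 0 := by
    have : (6 : k) = 2 * 3 := by norm_num
    rw [this]; exact mul_ne_zero h2 h3
  have hvan : ∀ W : Submodule k (Fin n → k), (∀ w ∈ W, MvPolynomial.eval w f = 0) ↔
      ∀ a ∈ W, ∀ b ∈ W, ∀ c ∈ W, F a b c = 0 := by
    intro W
    constructor
    · intro h
      exact BLS.polarize h2 h3 F s1 s2 W fun w hw => by rw [hF, h w hw, mul_zero]
    · intro h w hw
      have := h w hw w hw w hw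
      rw [hF] at this
      exact (mul_eq_zero.1 this).resolve_left h6
  rw [← Set.ncard_eq_toFinset_card _ hfin]
  set 𝒮 := {W : Submodule k (Fin n → k) |
          Module.finrank k ((Fin n → k) ⧸ W) = c ∧
          ∀ w ∈ W, MvPolynomial.eval w f = 0} with h𝒮
  have hq : ∀ W : Submodule k (Fin n → k),
      Module.finrank k ((Fin n → k) ⧸ W) + Module.finrank k W = n := by
    intro W
    simpa using Submodule.finrank_quotient_add_finrank W
  rcases le_or_gt n c with hnc | hnc
  · have hsub : 𝒮 ⊆ {⊥} := by
      rintro W ⟨hW, -⟩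
      have := hq W
      exact Submodule.finrank_eq_zero.1 (by omega)
    have := Set.ncard_le_ncard hsub (Set.finite_singleton _)
    rw [Set.ncard_singleton] at this
    omega
  · rcases 𝒮.eq_empty_or_nonempty with he | hne
    · rw [he]; simp
    have hS' : 𝒮 = {W : Submodule k (Fin n → k) | Module.finrank k W = n - c ∧
        ∀ a ∈ W, ∀ b ∈ W, ∀ c ∈ W, F a b c = 0} := by
      ext W
      refine and_congr ?_ (hvan W)
      have := hq W
      omega
    have : Infinite k := IsAlgClosed.instInfinite
    obtain ⟨N, hN, d', hd', G, hGfin, hle⟩ := BLS.reduction F s1 s2 c (n - c) (by omega)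
      (by rw [Module.finrank_fin_fun]; omega) 𝒮 hS' hfin hne
    refine hle.trans ((hB N d' G hGfin).trans ?_)
    have h1 : B N d' ≤ ∑ d ∈ Finset.range (N0 + 1), B N d :=
      Finset.single_le_sum (f := fun d => B N d) (fun _ _ => Nat.zero_le _)
        (Finset.mem_range.2 (by simp only [N0]; omega))
    have h2 : ∑ d ∈ Finset.range (N0 + 1), B N d ≤
        ∑ N ∈ Finset.range (N0 + 1), ∑ d ∈ Finset.range (N0 + 1), B N d :=
      Finset.single_le_sum (f := fun N => ∑ d ∈ Finset.range (N0 + 1), B N d)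
        (fun _ _ => Nat.zero_le _) (Finset.mem_range.2 (by simp only [N0]; omega))
    omega
end

section
/- Density of GL-stable sets of unbounded q-rank: let V = ℕ →₀ k (the countable direct sum with standard basis (e_i)), and let GL_∞ be the group of k-linear automorphisms g of V for which there exists N with g(e_i) = e_i for all i ≥ N and g preserving the span of e_0,…,e_{N−1}. Let Z be a set of symmetric trilinear forms T : V × V × V → k that is stable under the GL_∞-action (T, g) ↦ T∘(g × g × g), and suppose that for every m ∈ ℕ there exists T ∈ Z whose associated cubic form v ↦ T(v,v,v) has q-rank at least m. Then Z is Zariski dense in the space of all symmetric trilinear forms: for every finite set F of triples (i,j,l) ∈ ℕ³ and every polynomial P in the variables indexed by F, if P((T(e_i,e_j,e_l))_{(i,j,l) ∈ F}) = 0 for all T ∈ Z, then P((T(e_i,e_j,e_l))_{(i,j,l) ∈ F}) = 0 for every symmetric trilinear form T on V. -/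
open scoped BigOperators

/-- A trilinear form on `V = ℕ →₀ k` is symmetric if it is invariant under all
permutations of its three arguments. -/
def IsSymTri {k : Type*} [Field k]
    (T : MultilinearMap k (fun _ : Fin 3 => (ℕ →₀ k)) k) : Prop :=
  ∀ (σ : Equiv.Perm (Fin 3)) (v : Fin 3 → (ℕ →₀ k)), T (v ∘ σ) = T v

/-- An automorphism of `V = ℕ →₀ k` belongs to `GL∞` if for some `N` it fixes `eᵢ`
for `i ≥ N` and preserves the span of `e₀, …, e_{N-1}`. -/
def IsGLinf {k : Type*} [Field k] (g : (ℕ →₀ k) ≃ₗ[k] (ℕ →₀ k)) : Prop :=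
  ∃ N : ℕ, (∀ i, N ≤ i → g (Finsupp.single i 1) = Finsupp.single i 1) ∧
    (Submodule.span k {v : ℕ →₀ k | ∃ j < N, v = Finsupp.single j (1 : k)}).map
        g.toLinearMap
      = Submodule.span k {v : ℕ →₀ k | ∃ j < N, v = Finsupp.single j (1 : k)}

/-- Evaluation of a coordinate polynomial function at a trilinear form: `P` is a
polynomial in the coordinates `T(eᵢ, eⱼ, eₗ)`. -/
noncomputable def coordEval {k : Type*} [Field k]
    (T : MultilinearMap k (fun _ : Fin 3 => (ℕ →₀ k)) k)
    (P : MvPolynomial (ℕ × ℕ × ℕ) k) : k :=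
  MvPolynomial.eval
    (fun p => T ![Finsupp.single p.1 1, Finsupp.single p.2.1 1,
      Finsupp.single p.2.2 1]) P


/-- bordered determinant identity -/
lemma qr_bordered {R : Type*} [CommRing R] [IsDomain R] {E V : Type*} (a : E → V → R) {r : ℕ}
    (b : Fin r → E) (x : Fin r → V)
    (hD : (Matrix.of fun i j => a (b i) (x j)).det ≠ 0)
    (hm : ∀ (b' : Fin (r+1) → E) (x' : Fin (r+1) → V),
      (Matrix.of fun i j => a (b' i) (x' j)).det = 0) (e : E) (y : V) :
    (Matrix.of fun i j => a (b i) (x j)).det * a e y =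
      ∑ j, (∑ i, a e (x i) * (Matrix.of fun i j => a (b i) (x j)).adjugate i j) * a (b j) y := by
  set M : Matrix (Fin r) (Fin r) R := Matrix.of fun i j => a (b i) (x j) with hM
  let c : Matrix (Fin r) (Fin 1) R := Matrix.of fun i _ => a (b i) y
  let rw' : Matrix (Fin 1) (Fin r) R := Matrix.of fun _ j => a e (x j)
  let q : Matrix (Fin 1) (Fin 1) R := Matrix.of fun _ _ => a e y
  have h0 : (Matrix.fromBlocks M c rw' q).det = 0 := by
    have h := hm (Fin.snoc b e) (Fin.snoc x y)
    rw [← Matrix.det_submatrix_equiv_self (finSumFinEquiv (m := r) (n := 1))] at h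
    rw [← h]
    congr 1
    ext i j
    rcases i with i | i <;> rcases j with j | j
    all_goals
      simp [M, c, rw', q, Fin.snoc]
  have h1 : Matrix.fromBlocks M c rw' q *
      Matrix.fromBlocks 1 (-(M.adjugate * c)) 0 (M.det • (1 : Matrix (Fin 1) (Fin 1) R)) =
      Matrix.fromBlocks M 0 rw' (M.det • q - rw' * M.adjugate * c) := by
    rw [Matrix.fromBlocks_multiply]
    congr 1
    · simp
    · rw [Matrix.mul_neg, ← Matrix.mul_assoc, Matrix.mul_adjugate]; simp
    · simp
    · rw [Matrix.mul_neg, ← Matrix.mul_assoc]; simp [sub_eq_neg_add]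
  have h2 := congrArg Matrix.det h1
  rw [Matrix.det_mul, h0, zero_mul, Matrix.det_fromBlocks_zero₁₂] at h2
  have h3 := (mul_eq_zero.mp h2.symm).resolve_left hD
  rw [Matrix.det_fin_one] at h3
  simp only [Matrix.sub_apply, Matrix.smul_apply, Matrix.mul_apply, smul_eq_mul, sub_eq_zero] at h3
  simpa [q, rw', c] using h3

open Polynomial in
lemma qr_deriv_zero {k : Type*} [Field k] {E V : Type*} (a : E → V → k[X]) {r : ℕ}
    (b : Fin r → E) (x : Fin r → V)
    (hD : (Matrix.of fun i j => (a (b i) (x j)).eval 0).det ≠ 0)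
    (hm : ∀ (b' : Fin (r+1) → E) (x' : Fin (r+1) → V),
      (Matrix.of fun i j => a (b' i) (x' j)).det = 0) (e : E) (y : V)
    (h1 : ∀ i, (a e (x i)).eval 0 = 0) (h2 : ∀ j, (a (b j) y).eval 0 = 0)
    (h3 : (a e y).eval 0 = 0) : (a e y).coeff 1 = 0 := by
  have hD' : (Matrix.of fun i j => a (b i) (x j)).det.eval 0 ≠ 0 := by
    rw [← coe_evalRingHom, RingHom.map_det]
    exact hD
  have h := qr_bordered a b x (fun h => hD' (by rw [h]; simp)) hm e y
  have h4 := congrArg (fun p => coeff p 1) h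
  simp only [finsetSum_coeff, coeff_mul, Finset.Nat.antidiagonal_succ, Finset.Nat.antidiagonal_zero, Finset.sum_cons, Finset.map_singleton, Finset.sum_singleton] at h4
  simp only [← coeff_zero_eq_eval_zero] at h1 h2 h3 hD'
  simp [h3, h2, h1] at h4
  exact h4.resolve_left hD'

section core
open Polynomial
variable {k : Type*} [Field k] {V : Type*} [AddCommGroup V] [Module k V]

def Afun (T : V →ₗ[k] V →ₗ[k] V →ₗ[k] k) {d : ℕ} (u : Fin d → V) (c : Fin d → Fin d → k)
    (x : V) : k := ∑ j, ∑ l, c j l * T (u j) (u l) x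

def wvec {d : ℕ} (u : Fin d → V) (c : Fin d → Fin d → k) (j : Fin d) : V :=
  ∑ l, (c j l + c l j) • u l

noncomputable def Apol (T : V →ₗ[k] V →ₗ[k] V →ₗ[k] k) {d : ℕ} (u v : Fin d → V)
    (c : Fin d → Fin d → k) (x : V) : k[X] :=
  ∑ j, ∑ l, C (c j l) * (C (T (u j) (u l) x) + X * C (T (u j) (v l) x + T (v j) (u l) x)
    + X ^ 2 * C (T (v j) (v l) x))

lemma Apol_eval (T : V →ₗ[k] V →ₗ[k] V →ₗ[k] k) {d : ℕ} (u v : Fin d → V)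
    (c : Fin d → Fin d → k) (x : V) (s : k) :
    (Apol T u v c x).eval s = Afun T (fun j => u j + s • v j) c x := by
  simp only [Apol, Afun, eval_finsetSum]
  refine Finset.sum_congr rfl fun j _ => Finset.sum_congr rfl fun l _ => ?_
  simp only [eval_mul, eval_add, eval_C, eval_X, eval_pow, map_add, map_smul, LinearMap.add_apply,
    LinearMap.smul_apply, smul_eq_mul]
  ring

lemma Apol_coeff (T : V →ₗ[k] V →ₗ[k] V →ₗ[k] k) {d : ℕ} (u v : Fin d → V)
    (c : Fin d → Fin d → k) (x : V) :
    (Apol T u v c x).coeff 1 = ∑ j, ∑ l, c j l * (T (u j) (v l) x + T (v j) (u l) x) := by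
  simp only [Apol, finsetSum_coeff]
  refine Finset.sum_congr rfl fun j _ => Finset.sum_congr rfl fun l _ => ?_
  simp only [coeff_C_mul, coeff_add, coeff_C, coeff_X_pow_mul']
  rw [show (1:ℕ) = 0 + 1 from rfl, coeff_X_mul]
  simp

lemma max_nat (P : ℕ → Prop) (h0 : P 0) (n : ℕ) (hn : ¬ P n) : ∃ m, P m ∧ ¬ P (m + 1) := by
  by_contra! h
  exact hn (Nat.rec h0 (fun m hm => h m hm) n)

variable (T : V →ₗ[k] V →ₗ[k] V →ₗ[k] k)

lemma Afun_minor {d : ℕ} (u : Fin d → V) (b : Fin (d * d + 1) → (Fin d → Fin d → k))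
    (x : Fin (d * d + 1) → V) : (Matrix.of fun i j => Afun T u (b i) (x j)).det = 0 := by
  have : ¬ LinearIndependent k b := by
    intro h
    have := h.fintype_card_le_finrank
    simp [Module.finrank_pi_fintype] at this
  rw [Fintype.not_linearIndependent_iff] at this
  obtain ⟨g, hg, i, hi⟩ := this
  refine Matrix.exists_vecMul_eq_zero_iff.mp ⟨g, fun h => hi (by rw [h]; rfl), ?_⟩
  ext j
  have h2 : ∀ p q, ∑ i, g i * b i p q = 0 := by
    intro p q
    have := congrFun (congrFun hg p) q
    simpa [Finset.sum_apply] using this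
  simp only [Matrix.vecMul, dotProduct, Matrix.of_apply, Afun, Finset.mul_sum, Pi.zero_apply]
  rw [Finset.sum_comm]
  refine Finset.sum_eq_zero fun p _ => ?_
  rw [Finset.sum_comm]
  refine Finset.sum_eq_zero fun q _ => ?_
  simp only [← mul_assoc, ← Finset.sum_mul, h2, zero_mul]

lemma det_eval {n : ℕ} (M : Fin n → Fin n → k[X]) (s : k) :
    (Matrix.of M).det.eval s = (Matrix.of fun i j => (M i j).eval s).det := by
  rw [← coe_evalRingHom, RingHom.map_det]
  rfl

lemma first_deriv [Infinite k] (h12 : ∀ x y z, T x y z = T y x z) {d ρ : ℕ}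
    (hmax : ∀ (u : Fin d → V) (b : Fin (ρ + 1) → (Fin d → Fin d → k)) (x : Fin (ρ + 1) → V),
      (Matrix.of fun i j => Afun T u (b i) (x j)).det = 0)
    (u : Fin d → V) (b : Fin ρ → (Fin d → Fin d → k)) (x : Fin ρ → V)
    (hD : (Matrix.of fun i j => Afun T u (b i) (x j)).det ≠ 0)
    (c : Fin d → Fin d → k) (hc : ∀ x, Afun T u c x = 0)
    (y : V) (hy : ∀ j l, T (u j) (u l) y = 0) (j : Fin d) (v : V) :
    T (wvec u c j) v y = 0 := by
  have h := qr_deriv_zero (Apol T u (Pi.single j v)) b x (by simpa [Apol_eval] using hD)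
    (by
      intro b' x'
      refine Polynomial.funext fun s => ?_
      rw [det_eval]
      simp only [Apol_eval, eval_zero]
      exact hmax _ _ _) c y (by simp [Apol_eval, hc])
    (by simp [Apol_eval, Afun, hy]) (by simp [Apol_eval, hc])
  rw [Apol_coeff] at h
  rw [← h]
  simp only [wvec, map_sum, LinearMap.sum_apply, map_smul, LinearMap.smul_apply, smul_eq_mul,
    mul_add, add_mul, Finset.sum_add_distrib, Pi.single_apply]
  rw [add_comm]
  congr 1
  · refine Finset.sum_congr rfl fun p _ => ?_
    rw [Finset.sum_eq_single j] <;> simp +contextual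
  · rw [Finset.sum_comm]
    refine Finset.sum_congr rfl fun p _ => ?_
    rw [Finset.sum_eq_single j] <;> simp +contextual [h12 v]

lemma Q_minor {d : ℕ} (u : Fin d → V) (w : V)
    (hw : ∀ y, (∀ j l, T (u j) (u l) y = 0) → ∀ v, T w v y = 0)
    (y z : Fin (d * d + 1) → V) : (Matrix.of fun i j => T w (y i) (z j)).det = 0 := by
  have : ¬ LinearIndependent k (fun i => (fun (j l : Fin d) => T (u j) (u l) (z i))) := by
    intro h
    have := h.fintype_card_le_finrank
    simp [Module.finrank_pi_fintype] at this
  rw [Fintype.not_linearIndependent_iff] at this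
  obtain ⟨g, hg, i, hi⟩ := this
  refine Matrix.exists_mulVec_eq_zero_iff.mp ⟨g, fun h => hi (by rw [h]; rfl), ?_⟩
  have h2 := hw (∑ i, g i • z i) (by
    intro p q
    have := congrFun (congrFun hg p) q
    simpa [Finset.sum_apply] using this)
  ext j
  have := h2 (y j)
  simpa [Matrix.mulVec, dotProduct, mul_comm] using this

/-- the key step -/
lemma core_step [Infinite k] (h12 : ∀ x y z, T x y z = T y x z) (h23 : ∀ x y z, T x y z = T x z y) (d : ℕ)
    (hbad : ∀ u : Fin d → V, ∃ c : Fin d → Fin d → k, (∀ x, Afun T u c x = 0) ∧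
      ∃ j l, c j l + c l j ≠ 0) :
    ∃ u : Fin d → V, ∀ v : V, ∃ (a : k) (β : Fin d → k), a ≠ 0 ∧
      ∀ y z, (∀ j l, T (u j) (u l) y = 0) → (∀ j l, T (u j) (u l) z = 0) →
        a * T v y z + ∑ l, β l * T (u l) y z = 0 := by
  obtain ⟨ρ, ⟨u0, b0, x0, h0⟩, hρ⟩ := max_nat (fun ρ => ∃ (u : Fin d → V)
    (b : Fin ρ → (Fin d → Fin d → k)) (x : Fin ρ → V),
      (Matrix.of fun i j => Afun T u (b i) (x j)).det ≠ 0)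
      ⟨0, fun _ => 0, fun _ => 0, by simp⟩ (d * d + 1) (by
        rintro ⟨u, b, x, h⟩
        exact h (Afun_minor T u b x))
  push Not at hρ
  obtain ⟨c0, hc0, j0, l0, hjl0⟩ := hbad u0
  obtain ⟨r, ⟨u, b, x, c, j, l, hD, hc, hjl, y, z, hyz⟩, hr⟩ := max_nat (fun r =>
    ∃ (u : Fin d → V) (b : Fin ρ → (Fin d → Fin d → k)) (x : Fin ρ → V)
      (c : Fin d → Fin d → k) (j l : Fin d),
      (Matrix.of fun i j => Afun T u (b i) (x j)).det ≠ 0 ∧ (∀ x, Afun T u c x = 0) ∧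
      c j l + c l j ≠ 0 ∧ ∃ y z : Fin r → V,
        (Matrix.of fun i i' => T (wvec u c j) (y i) (z i')).det ≠ 0)
      ⟨u0, b0, x0, c0, j0, l0, h0, hc0, hjl0, fun _ => 0, fun _ => 0, by simp⟩ (d * d + 1) (by
        rintro ⟨u, b, x, c, j, l, hD, hc, hjl, y, z, hyz⟩
        exact hyz (Q_minor T u _ (fun y hy v => first_deriv T h12 hρ u b x hD c hc y hy j v) y z))
  push Not at hr
  refine ⟨u, fun v => ?_⟩
  set vv : Fin d → V := Pi.single l v with hvv
  have hDe : ∀ s, (Matrix.of fun i j => Apol T u vv (b i) (x j)).det.eval s =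
      (Matrix.of fun i j => Afun T (fun j => u j + s • vv j) (b i) (x j)).det := by
    intro s
    rw [det_eval]; simp only [Apol_eval]
  set D := (Matrix.of fun i j => Apol T u vv (b i) (x j)).det with hDdef
  have hD0 : D.eval 0 ≠ 0 := by rw [hDe]; simpa using hD
  have hDne : D ≠ 0 := fun h => hD0 (by rw [h]; simp)
  have hbor := qr_bordered (Apol T u vv) b x hDne (by
      intro b' x'
      refine Polynomial.funext fun s => ?_
      rw [det_eval]
      simp only [Apol_eval, eval_zero]
      exact hρ _ _ _) c
  rw [← hDdef] at hbor
  obtain ⟨p, hp0, hp⟩ : ∃ p : Fin ρ → k[X], (∀ i, (p i).eval 0 = 0) ∧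
      ∀ y, D * Apol T u vv c y = ∑ j, p j * Apol T u vv (b j) y := by
    refine ⟨_, ?_, hbor⟩
    intro i
    rw [eval_finsetSum]
    refine Finset.sum_eq_zero fun i' _ => ?_
    rw [eval_mul, Apol_eval]
    simp [hc]
  -- polynomial family of coefficients
  let cp : Fin d → Fin d → k[X] := fun i i' => D * C (c i i') - ∑ m, p m * C (b m i i')
  have hcpA : ∀ s y, Afun T (fun j => u j + s • vv j) (fun i i' => (cp i i').eval s) y = 0 := by
    intro s y
    have := congrArg (eval s) (hp y)
    simp only [eval_mul, eval_finsetSum, Apol_eval] at this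
    simp only [cp, eval_sub, eval_mul, eval_C, eval_finsetSum, Afun, sub_mul,
      Finset.sum_sub_distrib] at this ⊢
    rw [sub_eq_zero]
    simp only [Finset.mul_sum, Finset.sum_mul, ← mul_assoc] at this ⊢
    rw [this, Finset.sum_comm]
    refine Finset.sum_congr rfl fun i _ => ?_
    rw [Finset.sum_comm]
  have hcp0 : ∀ i i', (cp i i').eval 0 = D.eval 0 * c i i' := by
    intro i i'
    simp [cp, eval_finsetSum, hp0]
  let a2 : V → V → k[X] := fun y z => ∑ i, (cp j i + cp i j) *
    (C (T (u i) y z) + X * C (T (vv i) y z))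
  have ha2 : ∀ y z s, (a2 y z).eval s =
      T (wvec (fun j => u j + s • vv j) (fun i i' => (cp i i').eval s) j) y z := by
    intro y z s
    simp only [a2, wvec, eval_finsetSum, map_sum, LinearMap.sum_apply]
    refine Finset.sum_congr rfl fun i _ => ?_
    simp only [eval_mul, eval_add, eval_C, eval_X, map_add, map_smul, LinearMap.add_apply,
      LinearMap.smul_apply, smul_eq_mul]
  have ha20 : ∀ y z, (a2 y z).eval 0 = D.eval 0 * T (wvec u c j) y z := by
    intro y z
    rw [ha2]
    simp only [hcp0, wvec, map_sum, LinearMap.sum_apply, Finset.mul_sum]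
    refine Finset.sum_congr rfl fun i _ => ?_
    simp only [zero_smul, add_zero, map_smul, LinearMap.smul_apply, smul_eq_mul]
    ring
  have hmin : ∀ (b' : Fin (r+1) → V) (x' : Fin (r+1) → V),
      (Matrix.of fun i j => a2 (b' i) (x' j)).det = 0 := by
    intro b' x'
    have hprod : (Matrix.of fun i j => a2 (b' i) (x' j)).det * D * (cp j l + cp l j) = 0 := by
      refine Polynomial.funext fun s => ?_
      simp only [eval_mul, eval_zero]
      by_cases h1 : D.eval s = 0
      · simp [h1]
      by_cases h2 : (cp j l + cp l j).eval s = 0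
      · simp [h2]
      rw [det_eval]
      simp only [ha2]
      rw [hr (fun j => u j + s • vv j) b x (fun i i' => (cp i i').eval s) j l (by rwa [← hDe])
        (hcpA s) (by simpa using h2) b' x']
      simp
    have hne : cp j l + cp l j ≠ 0 := by
      intro h
      have := congrArg (eval 0) h
      rw [eval_add, hcp0, hcp0, ← mul_add] at this
      simp [hD0, hjl] at this
    simpa [hDne, hne] using hprod
  refine ⟨D.eval 0 * (c j l + c l j), fun i => (cp j i + cp i j).coeff 1, mul_ne_zero hD0 hjl, ?_⟩
  intro y' z' hy' hz'
  have hfd := fun y hy v => first_deriv T h12 hρ u b x hD c hc y hy j v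
  have hfin := qr_deriv_zero a2 y z (by
    simp only [ha20]
    have : (Matrix.of fun i i' => eval 0 D * T (wvec u c j) (y i) (z i')) =
      eval 0 D • (Matrix.of fun i i' => T (wvec u c j) (y i) (z i')) := by
      ext; simp
    rw [this, Matrix.det_smul]
    exact mul_ne_zero (pow_ne_zero _ hD0) hyz) hmin y' z'
    (by intro i; rw [ha20, h23, hfd _ hy', mul_zero])
    (by intro i; rw [ha20, hfd _ hz', mul_zero])
    (by rw [ha20, hfd _ hz', mul_zero])
  have hco : ∀ i, ((cp j i + cp i j) *
    (C (T (u i) y' z') + X * C (T (vv i) y' z'))).coeff 1 =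
      (cp j i + cp i j).coeff 1 * T (u i) y' z' +
      D.eval 0 * (c j i + c i j) * T (vv i) y' z' := by
    intro i
    rw [mul_add, coeff_add, coeff_mul_C, mul_left_comm, show (1:ℕ) = 0 + 1 from rfl, coeff_X_mul,
      coeff_mul_C, coeff_zero_eq_eval_zero, eval_add, hcp0, hcp0]
    ring
  simp only [a2, finsetSum_coeff, hco, Finset.sum_add_distrib] at hfin
  have hs : ∑ i, D.eval 0 * (c j i + c i j) * T (vv i) y' z' =
      D.eval 0 * (c j l + c l j) * T v y' z' := by
    rw [Finset.sum_eq_single l]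
    · simp [hvv]
    · intro i _ hi; simp [hvv, hi]
    · simp
  rw [← hs, add_comm]
  exact hfin

end core

section codim
variable {k : Type*} [Field k] {V : Type*} [AddCommGroup V] [Module k V]
variable (T : V →ₗ[k] V →ₗ[k] V →ₗ[k] k)

/-- a cubic vanishing on a subspace of codimension at most `m` has q-rank at most `m` -/
lemma qrank_le_of_codim (S : Submodule k V) (hS : ∀ x ∈ S, T x x x = 0)
    [Module.Finite k (V ⧸ S)] :
    qrank k (fun v => T v v v) ≤ (Module.finrank k (V ⧸ S) : ℕ∞) := by
  refine sInf_le ⟨_, rfl, ?_⟩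
  let B := Module.finBasis k (V ⧸ S)
  have hsurj := Submodule.mkQ_surjective S
  choose e he using fun i => hsurj (B i)
  let ℓ : Fin (Module.finrank k (V ⧸ S)) → (V →ₗ[k] k) := fun i => (B.coord i) ∘ₗ S.mkQ
  let π : V →ₗ[k] V := LinearMap.id - ∑ i, (ℓ i).smulRight (e i)
  have hπ : ∀ x, x = π x + ∑ i, ℓ i x • e i := by intro x; simp [π]
  have hπS : ∀ x, π x ∈ S := by
    intro x
    rw [← Submodule.ker_mkQ S, LinearMap.mem_ker]
    simp only [π, LinearMap.sub_apply, LinearMap.id_apply, map_sub, LinearMap.sum_apply, map_sum,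
      LinearMap.smulRight_apply, map_smul, he, ℓ, LinearMap.comp_apply]
    rw [sub_eq_zero]
    exact (B.sum_repr _).symm
  let bq : (V →ₗ[k] V →ₗ[k] k) → QuadraticForm k V := fun b => LinearMap.BilinMap.toQuadraticMap b
  refine ⟨ℓ, fun i => bq (T (e i)) + bq ((T.flip (e i)) ∘ₗ π) +
     bq (((T.compl₁₂ π π).compr₂ (LinearMap.applyₗ (e i)))), ?_⟩
  intro v
  have h1 : ∀ a b : V, T v a b = T (π v) a b + ∑ i, ℓ i v * T (e i) a b := by
    intro a b
    conv_lhs => rw [hπ v]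
    simp
  have h2 : ∀ a b : V, T a v b = T a (π v) b + ∑ i, ℓ i v * T a (e i) b := by
    intro a b
    conv_lhs => rw [hπ v]
    simp
  have h3 : ∀ a b : V, T a b v = T a b (π v) + ∑ i, ℓ i v * T a b (e i) := by
    intro a b
    conv_lhs => rw [hπ v]
    simp
  have : T v v v = T (π v) (π v) (π v) + ∑ i, ℓ i v * T (π v) (π v) (e i)
      + ∑ i, ℓ i v * T (π v) (e i) v + ∑ i, ℓ i v * T (e i) v v := by
    rw [← h3, ← h2, ← h1]
  change T v v v = _
  rw [this, hS _ (hπS v), zero_add, ← Finset.sum_add_distrib, ← Finset.sum_add_distrib]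
  refine Finset.sum_congr rfl fun i _ => ?_
  simp [bq, LinearMap.BilinMap.toQuadraticMap_apply]
  ring

lemma qrank_bound [Infinite k] (h12 : ∀ x y z, T x y z = T y x z)
    (h23 : ∀ x y z, T x y z = T x z y) (d : ℕ)
    (hbad : ∀ u : Fin d → V, ∃ c : Fin d → Fin d → k, (∀ x, Afun T u c x = 0) ∧
      ∃ j l, c j l + c l j ≠ 0) :
    qrank k (fun v => T v v v) ≤ ((d * d + d : ℕ) : ℕ∞) := by
  obtain ⟨u, hu⟩ := core_step T h12 h23 d hbad
  let K : Submodule k V := 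
    { carrier := {x | ∀ j l, T (u j) (u l) x = 0}
      add_mem' := by intro a b ha hb j l; simp [ha j l, hb j l]
      zero_mem' := by intro j l; simp
      smul_mem' := by intro c a ha j l; simp [ha j l] }
  let E : Submodule k V := 
    { carrier := {x | ∀ y ∈ K, ∀ z ∈ K, T x y z = 0}
      add_mem' := by intro a b ha hb y hy z hz; simp [ha y hy z hz, hb y hy z hz]
      zero_mem' := by intro j _ l _; simp
      smul_mem' := by intro c a ha y hy z hz; simp [ha y hy z hz] }
  have hspan : Submodule.span k (Set.range fun i => E.mkQ (u i)) = ⊤ := by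
    rw [eq_top_iff]
    rintro q -
    obtain ⟨v, rfl⟩ := E.mkQ_surjective q
    obtain ⟨a, β, ha, h⟩ := hu v
    have hm : a • v + ∑ l, β l • u l ∈ E := by
      intro y hy z hz
      simpa using h y z hy hz
    have h0 : E.mkQ (a • v + ∑ l, β l • u l) = 0 := by
      rw [← LinearMap.mem_ker, Submodule.ker_mkQ]; exact hm
    rw [map_add, map_smul, map_sum] at h0
    have h1 : E.mkQ v = a⁻¹ • (- ∑ l, β l • E.mkQ (u l)) := by
      rw [eq_inv_smul_iff₀ ha, eq_neg_iff_add_eq_zero]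
      simpa using h0
    rw [h1]
    refine Submodule.smul_mem _ _ (Submodule.neg_mem _ (Submodule.sum_mem _ fun l _ => ?_))
    exact Submodule.smul_mem _ _ (Submodule.subset_span ⟨l, rfl⟩)
  have : Module.Finite k (V ⧸ E) :=
    Module.finite_def.mpr ((Submodule.fg_def).mpr ⟨_, Set.finite_range _, hspan⟩)
  have hE : Module.finrank k (V ⧸ E) ≤ d := by
    have := finrank_range_le_card (R := k) (fun i => E.mkQ (u i))
    rw [Set.finrank, hspan, finrank_top] at this
    simpa using this
  let φ : V →ₗ[k] (Fin d → Fin d → k) × (V ⧸ E) :=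
    LinearMap.prod (LinearMap.pi fun j => LinearMap.pi fun l => T (u j) (u l)) E.mkQ
  let eqv := φ.quotKerEquivRange
  have : Module.Finite k (V ⧸ LinearMap.ker φ) := Module.Finite.equiv eqv.symm
  refine (qrank_le_of_codim T (LinearMap.ker φ) ?_).trans ?_
  · intro x hx
    rw [LinearMap.mem_ker] at hx
    have hxK : x ∈ K := by
      intro j l
      exact congrFun (congrFun (congrArg Prod.fst hx) j) l
    have hxE : x ∈ E := by
      rw [← Submodule.ker_mkQ E, LinearMap.mem_ker]
      exact congrArg Prod.snd hx
    exact hxE x hxK x hxK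
  · rw [eqv.finrank_eq]
    have h1 := Submodule.finrank_le (LinearMap.range φ)
    rw [Module.finrank_prod] at h1
    have h2 : Module.finrank k (Fin d → Fin d → k) = d * d := by
      simp [Module.finrank_pi_fintype]
    exact_mod_cast (by omega)

/-- surjectivity from goodness -/
lemma good_surj (h2 : (2 : k) ≠ 0) {d : ℕ} (u : Fin d → V)
    (hgood : ∀ c : Fin d → Fin d → k, (∀ x, Afun T u c x = 0) → ∀ j l, c j l + c l j = 0)
    (a : Fin d → Fin d → k) (ha : ∀ j l, a j l = a l j) : ∃ x, ∀ j l, T (u j) (u l) x = a j l := by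
  let φ : V →ₗ[k] (Fin d × Fin d → k) := LinearMap.pi fun q => T (u q.1) (u q.2)
  by_contra hne
  have hnot : (fun q : Fin d × Fin d => a q.1 q.2) ∉ LinearMap.range φ := by
    rintro ⟨x, hx⟩
    exact hne ⟨x, fun j l => congrFun hx (j, l)⟩
  obtain ⟨f, hf, hle⟩ := Submodule.exists_le_ker_of_notMem hnot
  have hrep : ∀ g : Fin d × Fin d → k, f g = ∑ j, ∑ l, f (Pi.single (j,l) 1) * g (j,l) := by
    intro g
    conv_lhs => rw [LinearMap.pi_apply_eq_sum_univ f g]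
    rw [Fintype.sum_prod_type]
    refine Finset.sum_congr rfl fun i _ => Finset.sum_congr rfl fun i' _ => ?_
    rw [smul_eq_mul, mul_comm]
    congr 2
    ext q
    simp [Pi.single_apply, eq_comm]
  have hg := hgood (fun j l => f (Pi.single (j,l) 1)) (by
    intro x
    have : f (φ x) = 0 := hle ⟨x, rfl⟩
    rw [hrep] at this
    exact this)
  apply hf
  rw [hrep]
  have h3 : (2:k) * ∑ j, ∑ l, f (Pi.single (j,l) 1) * a j l = 0 := by
    rw [two_mul]
    nth_rewrite 2 [Finset.sum_comm]
    rw [← Finset.sum_add_distrib]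
    refine Finset.sum_eq_zero fun j _ => ?_
    rw [← Finset.sum_add_distrib]
    refine Finset.sum_eq_zero fun l _ => ?_
    rw [ha l j, ← add_mul, hg, zero_mul]
  exact (mul_eq_zero.mp h3).resolve_left h2

open Polynomial in
/-- Newton iteration -/
lemma newton (h3 : (3 : k) ≠ 0) (h12 : ∀ x y z, T x y z = T y x z)
    (h23 : ∀ x y z, T x y z = T x z y) {d : ℕ} (u : Fin d → V)
    (hs : ∀ a : Fin d → Fin d → k, (∀ j l, a j l = a l j) → ∃ x, ∀ j l, T (u j) (u l) x = a j l)
    (z : Fin d → Fin d → Fin d → k) (hz12 : ∀ i j l, z i j l = z j i l)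
    (hz23 : ∀ i j l, z i j l = z i l j) [Infinite k] (n : ℕ) :
    ∃ γ : Fin d → k → V,
      (∀ i w w', ∃ p : k[X], ∀ s, T (γ i s) w w' = p.eval s) ∧
      (∀ i j w, ∃ p : k[X], ∀ s, T (γ i s) (γ j s) w = T (u i) (u j) w + s * p.eval s) ∧
      (∀ i j l, ∃ p : k[X], ∀ s, T (γ i s) (γ j s) (γ l s) =
        T (u i) (u j) (u l) + s * z i j l + s ^ (n + 1) * p.eval s) := by
  induction n with
  | zero =>
    refine ⟨fun i _ => u i, fun i w w' => ⟨C (T (u i) w w'), by simp⟩, fun i j w => ⟨0, by simp⟩,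
      fun i j l => ⟨C (- z i j l), by intro s; simp⟩⟩
  | succ n ih =>
    obtain ⟨γ, hγ1, hγ2, hγ3⟩ := ih
    choose p1 hp1 using hγ1
    choose p2 hp2 using hγ2
    choose p3 hp3 using hγ3
    have symp : ∀ i j l i' j' l', (∀ s, T (γ i s) (γ j s) (γ l s) = T (γ i' s) (γ j' s) (γ l' s)) →
        T (u i) (u j) (u l) = T (u i') (u j') (u l') → z i j l = z i' j' l' →
        p3 i j l = p3 i' j' l' := by
      intro i j l i' j' l' h1 h2 h4
      have : X ^ (n+1) * p3 i j l = X ^ (n+1) * p3 i' j' l' := by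
        refine Polynomial.funext fun s => ?_
        have := h1 s
        rw [hp3, hp3, h2, h4] at this
        simpa using this
      exact mul_left_cancel₀ (pow_ne_zero _ X_ne_zero) this
    choose w hw using fun i => hs (fun j l => - (p3 i j l).eval 0 / 3) (by
      intro j l
      rw [symp i j l i l j (fun s => h23 _ _ _) (h23 _ _ _) (hz23 _ _ _)])
    have hsym1 : ∀ i j l, p3 j i l = p3 i j l := fun i j l =>
      symp _ _ _ _ _ _ (fun s => h12 _ _ _) (h12 _ _ _) (hz12 _ _ _)
    have hsym2 : ∀ i j l, p3 i l j = p3 i j l := fun i j l =>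
      symp _ _ _ _ _ _ (fun s => h23 _ _ _) (h23 _ _ _) (hz23 _ _ _)
    have hdiv : ∀ p : k[X], ∀ s, p.eval s = p.eval 0 + s * p.divX.eval s := by
      intro p s
      conv_lhs => rw [← divX_mul_X_add p]
      simp [coeff_zero_eq_eval_zero]
      ring
    refine ⟨fun i s => γ i s + s ^ (n+1) • w i, ?_, ?_, ?_⟩
    · intro i a b
      refine ⟨p1 i a b + X ^ (n+1) * C (T (w i) a b), fun s => ?_⟩
      simp [hp1, -X_mul_C, mul_comm (T (w i) a b)]
    · intro i j a
      refine ⟨p2 i j a + X ^ n * (p1 i (w j) a + p1 j (w i) a) + X ^ (2 * n + 1) * C (T (w i) (w j) a),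
        fun s => ?_⟩
      simp only [map_add, LinearMap.add_apply, map_smul, LinearMap.smul_apply, smul_eq_mul, hp2,
        hp1, h12 (w i) (γ j s), eval_add, eval_mul, eval_pow, eval_X, eval_C]
      ring
    · intro i j l
      refine ⟨(p3 i j l).divX + p2 j l (w i) + p2 i l (w j) + p2 i j (w l) +
        X ^ n * (p1 i (w j) (w l) + p1 j (w i) (w l) + p1 l (w i) (w j)) +
        X ^ (2 * n + 1) * C (T (w i) (w j) (w l)), fun s => ?_⟩
      have e1 : T (w i) (γ j s) (γ l s) = T (γ j s) (γ l s) (w i) := by rw [h12, h23]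
      have e2 : T (γ i s) (w j) (γ l s) = T (γ i s) (γ l s) (w j) := by rw [h23]
      have e3 : T (w i) (γ j s) (w l) = T (γ j s) (w i) (w l) := by rw [h12]
      have e4 : T (w i) (w j) (γ l s) = T (γ l s) (w i) (w j) := by rw [h23, h12]
      simp only [map_add, LinearMap.add_apply, map_smul, LinearMap.smul_apply, smul_eq_mul, e1, e2,
        e3, e4, hp3]
      simp only [hp2]
      simp only [hp1, hw, eval_add, eval_mul, eval_pow, eval_X, eval_C]
      rw [hdiv (p3 i j l) s]
      have f1 : p3 j i l = p3 i j l := hsym1 _ _ _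
      have f2 : p3 l i j = p3 i j l := by rw [hsym1 i l j, hsym2]
      simp only [f1, f2]
      field_simp
      ring

open Polynomial in
lemma newton_eval (h3 : (3 : k) ≠ 0) (h12 : ∀ x y z, T x y z = T y x z)
    (h23 : ∀ x y z, T x y z = T x z y) {d : ℕ} (u : Fin d → V)
    (hs : ∀ a : Fin d → Fin d → k, (∀ j l, a j l = a l j) → ∃ x, ∀ j l, T (u j) (u l) x = a j l)
    [Infinite k] (S : Fin d → Fin d → Fin d → k) (hS12 : ∀ i j l, S i j l = S j i l)
    (hS23 : ∀ i j l, S i j l = S i l j) (P : MvPolynomial (Fin d × Fin d × Fin d) k)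
    (hP : ∀ v : Fin d → V, MvPolynomial.eval (fun q => T (v q.1) (v q.2.1) (v q.2.2)) P = 0) :
    MvPolynomial.eval (fun q => S q.1 q.2.1 q.2.2) P = 0 := by
  let z : Fin d → Fin d → Fin d → k := fun i j l => S i j l - T (u i) (u j) (u l)
  let G : Fin d × Fin d × Fin d → k[X] := fun q =>
    C (T (u q.1) (u q.2.1) (u q.2.2)) + X * C (z q.1 q.2.1 q.2.2)
  let Q : k[X] := MvPolynomial.aeval G P
  have evQ : ∀ (G : Fin d × Fin d × Fin d → k[X]) (s : k), (MvPolynomial.aeval G P).eval s =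
      MvPolynomial.eval (fun q => (G q).eval s) P := by
    intro G s
    rw [← coe_aeval_eq_eval]
    rw [← AlgHom.comp_apply, MvPolynomial.comp_aeval]
    rw [← MvPolynomial.coe_aeval_eq_eval]
    rfl
  have hdvd : ∀ n : ℕ, X ^ (n + 1) ∣ Q := by
    intro n
    obtain ⟨γ, -, -, h⟩ := newton T h3 h12 h23 u hs z
      (fun i j l => by simp only [z]; rw [hS12, h12]) (fun i j l => by simp only [z]; rw [hS23, h23]) n
    choose p hp using h
    let G' : Fin d × Fin d × Fin d → k[X] := fun q => G q + X ^ (n+1) * p q.1 q.2.1 q.2.2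
    have h0 : MvPolynomial.aeval G' P = 0 := by
      refine Polynomial.funext fun s => ?_
      rw [evQ, eval_zero, ← hP (fun i => γ i s)]
      congr 1
      simp only [G', G, hp]
      simp [-X_mul_C]
    rw [← Ideal.mem_span_singleton, ← Ideal.Quotient.eq_zero_iff_mem]
    have h1 : ∀ G : Fin d × Fin d × Fin d → k[X],
      (Ideal.Quotient.mkₐ k (Ideal.span {(X : k[X]) ^ (n+1)})) (MvPolynomial.aeval G P) =
      MvPolynomial.aeval (fun q => (Ideal.Quotient.mkₐ k (Ideal.span {(X : k[X]) ^ (n+1)})) (G q)) P := by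
      intro G
      rw [← AlgHom.comp_apply, MvPolynomial.comp_aeval]
    have h2 := h1 G'
    rw [h0, map_zero] at h2
    have h4 := h1 G
    rw [show (Ideal.Quotient.mk (Ideal.span {(X : k[X]) ^ (n+1)})) Q = 
      (Ideal.Quotient.mkₐ k (Ideal.span {(X : k[X]) ^ (n+1)})) (MvPolynomial.aeval G P) from rfl, h4, h2]
    congr 2
    funext q
    simp only [G', map_add]
    rw [left_eq_add]
    rw [Ideal.Quotient.mkₐ_eq_mk, Ideal.Quotient.eq_zero_iff_mem, Ideal.mem_span_singleton]
    exact dvd_mul_right _ _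
  have hQ : Q = 0 := by
    by_contra hne
    have := natDegree_le_of_dvd (hdvd Q.natDegree) hne
    simp at this
  have := evQ G 1
  rw [show MvPolynomial.aeval G P = 0 from hQ, eval_zero] at this
  rw [this]
  congr 1
  simp [G, z]

end codim

section glinf
variable {k : Type*} [Field k]

/-- trilinear form from a multilinear map -/
noncomputable def toTri (T : MultilinearMap k (fun _ : Fin 3 => (ℕ →₀ k)) k) :
    (ℕ →₀ k) →ₗ[k] (ℕ →₀ k) →ₗ[k] (ℕ →₀ k) →ₗ[k] k :=
  LinearMap.mk₂ k (fun x y =>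
    { toFun := fun z => T ![x, y, z]
      map_add' := fun a b => by
        have h := T.map_update_add ![x, y, 0] 2 a b
        have e : ∀ a, Function.update ![x, y, 0] 2 a = ![x, y, a] := by
          intro a; ext i; fin_cases i <;> simp
        simpa only [e] using h
      map_smul' := fun c a => by
        have h := T.map_update_smul ![x, y, 0] 2 c a
        have e : ∀ a, Function.update ![x, y, 0] 2 a = ![x, y, a] := by
          intro a; ext i; fin_cases i <;> simp
        simp only [e] at h
        exact h })
    (fun a b y => by
      refine LinearMap.ext fun z => ?_
      have h := T.map_update_add ![0, y, z] 0 a b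
      have e : ∀ a, Function.update ![0, y, z] 0 a = ![a, y, z] := by
        intro a; ext i; fin_cases i <;> simp
      simp only [e] at h
      exact h)
    (fun c a y => by
      refine LinearMap.ext fun z => ?_
      have h := T.map_update_smul ![0, y, z] 0 c a
      have e : ∀ a, Function.update ![0, y, z] 0 a = ![a, y, z] := by
        intro a; ext i; fin_cases i <;> simp
      simp only [e] at h
      exact h)
    (fun x a b => by
      refine LinearMap.ext fun z => ?_
      have h := T.map_update_add ![x, 0, z] 1 a b
      have e : ∀ a, Function.update ![x, 0, z] 1 a = ![x, a, z] := by
        intro a; ext i; fin_cases i <;> simp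
      simp only [e] at h
      exact h)
    (fun c x a => by
      refine LinearMap.ext fun z => ?_
      have h := T.map_update_smul ![x, 0, z] 1 c a
      have e : ∀ a, Function.update ![x, 0, z] 1 a = ![x, a, z] := by
        intro a; ext i; fin_cases i <;> simp
      simp only [e] at h
      exact h)

lemma toTri_apply (T : MultilinearMap k (fun _ : Fin 3 => (ℕ →₀ k)) k) (x y z : ℕ →₀ k) :
    toTri T x y z = T ![x, y, z] := rfl

lemma sym12 {T : MultilinearMap k (fun _ : Fin 3 => (ℕ →₀ k)) k} (h : IsSymTri T)
    (x y z : ℕ →₀ k) : toTri T x y z = toTri T y x z := by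
  rw [toTri_apply, toTri_apply, ← h (Equiv.swap 0 1) ![x, y, z]]
  congr 1
  ext i; fin_cases i <;> simp [Equiv.swap_apply_of_ne_of_ne]

lemma sym23 {T : MultilinearMap k (fun _ : Fin 3 => (ℕ →₀ k)) k} (h : IsSymTri T)
    (x y z : ℕ →₀ k) : toTri T x y z = toTri T x z y := by
  rw [toTri_apply, toTri_apply, ← h (Equiv.swap 1 2) ![x, y, z]]
  congr 1
  ext i; fin_cases i <;> simp [Equiv.swap_apply_of_ne_of_ne]

lemma lc_fix (f : ℕ → (ℕ →₀ k)) (N : ℕ) (hf : ∀ n < N, f n = Finsupp.single n 1)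
    (x : ℕ →₀ k) (hx : ∀ n ∈ x.support, n < N) : Finsupp.linearCombination k f x = x := by
  rw [Finsupp.linearCombination_apply, Finsupp.sum]
  conv_rhs => rw [← Finsupp.sum_single x, Finsupp.sum]
  refine Finset.sum_congr rfl fun n hn => ?_
  rw [hf n (hx n hn)]; simp

lemma mem_span_of_supp (M : ℕ) (x : ℕ →₀ k) (hx : ∀ n ∈ x.support, n < M) :
    x ∈ Submodule.span k {v : ℕ →₀ k | ∃ j < M, v = Finsupp.single j (1 : k)} := by
  rw [← Finsupp.sum_single x, Finsupp.sum]
  refine Submodule.sum_mem _ fun n hn => ?_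
  rw [← mul_one (x n), ← smul_eq_mul, ← Finsupp.smul_single]
  exact Submodule.smul_mem _ _ (Submodule.subset_span ⟨n, hx n hn, rfl⟩)

/-- the automorphism -/
lemma exists_gl (d N : ℕ) (hd : d ≤ N) (u : ℕ → (ℕ →₀ k)) (hu : ∀ i, ∀ n ∈ (u i).support, n < N)
    (t : k) (ht : t ≠ 0) :
    ∃ g : (ℕ →₀ k) ≃ₗ[k] (ℕ →₀ k), IsGLinf g ∧
      ∀ i < d, g (Finsupp.single i 1) = u i + t • Finsupp.single (N + i) 1 := by
  let f : ℕ → (ℕ →₀ k) := fun n => if N ≤ n ∧ n < N + d then u (n - N) + t • Finsupp.single n 1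
    else Finsupp.single n 1
  let f' : ℕ → (ℕ →₀ k) := fun n => if N ≤ n ∧ n < N + d then
    t⁻¹ • (Finsupp.single n 1 - u (n - N)) else Finsupp.single n 1
  have hfN : ∀ n < N, f n = Finsupp.single n 1 := fun n hn => by simp [f]; omega
  have hfN' : ∀ n < N, f' n = Finsupp.single n 1 := fun n hn => by simp [f']; omega
  let F := Finsupp.linearCombination k f
  let F' := Finsupp.linearCombination k f'
  have hF : ∀ n, F (Finsupp.single n 1) = f n := by intro n; simp [F]
  have hF' : ∀ n, F' (Finsupp.single n 1) = f' n := by intro n; simp [F']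
  have hFu : ∀ i, F (u i) = u i := fun i => lc_fix f N hfN _ (hu i)
  have hFu' : ∀ i, F' (u i) = u i := fun i => lc_fix f' N hfN' _ (hu i)
  let L : (ℕ →₀ k) ≃ₗ[k] (ℕ →₀ k) := LinearEquiv.ofLinearMap F F'
    (by
      refine Finsupp.lhom_ext' fun n => LinearMap.ext_ring ?_
      simp only [LinearMap.comp_apply, Finsupp.lsingle_apply, LinearMap.id_apply, hF']
      by_cases h : N ≤ n ∧ n < N + d
      · simp only [f', if_pos h, map_smul, map_sub, hFu, hF]
        simp only [f, if_pos h]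
        simp [ht]
      · simp only [f', if_neg h, hF]
        simp only [f, if_neg h])
    (by
      refine Finsupp.lhom_ext' fun n => LinearMap.ext_ring ?_
      simp only [LinearMap.comp_apply, Finsupp.lsingle_apply, LinearMap.id_apply, hF]
      by_cases h : N ≤ n ∧ n < N + d
      · simp only [f, if_pos h, map_smul, map_add, hFu', hF']
        simp only [f', if_pos h]
        simp [ht, smul_smul]
      · simp only [f, if_neg h, hF']
        simp only [f', if_neg h])
  let τ : ℕ → ℕ := fun n => if n < d then N + n else if N ≤ n ∧ n < N + d then n - N else n
  have hτ : Function.Involutive τ := by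
    intro n
    simp only [τ]
    split_ifs <;> omega
  have hτM : ∀ n < N + d, τ n < N + d := by
    intro n hn; simp only [τ]; split_ifs <;> omega
  let σ : (ℕ →₀ k) ≃ₗ[k] (ℕ →₀ k) := Finsupp.domLCongr hτ.toPerm
  have hσ : ∀ n, σ (Finsupp.single n 1) = Finsupp.single (τ n) 1 := by
    intro n; simp [σ]
  have hσ' : ∀ n, σ.symm (Finsupp.single n 1) = Finsupp.single (τ n) 1 := by
    intro n
    rw [LinearEquiv.symm_apply_eq, hσ, hτ]
  have hL : ∀ n, L (Finsupp.single n 1) = f n := hF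
  have hL' : ∀ n, L.symm (Finsupp.single n 1) = f' n := hF'
  set Sp := Submodule.span k {v : ℕ →₀ k | ∃ j < N + d, v = Finsupp.single j (1 : k)} with hSp
  have hsing : ∀ n < N + d, Finsupp.single n (1:k) ∈ Sp := fun n hn =>
    Submodule.subset_span ⟨n, hn, rfl⟩
  have huS : ∀ i, u i ∈ Sp := fun i => mem_span_of_supp _ _ fun n hn => by
    have := hu i n hn; omega
  have hfS : ∀ n < N + d, f n ∈ Sp := by
    intro n hn
    simp only [f]
    split_ifs
    · exact Submodule.add_mem _ (huS _) (Submodule.smul_mem _ _ (hsing n hn))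
    · exact hsing n hn
  have hfS' : ∀ n < N + d, f' n ∈ Sp := by
    intro n hn
    simp only [f']
    split_ifs
    · exact Submodule.smul_mem _ _ (Submodule.sub_mem _ (hsing n hn) (huS _))
    · exact hsing n hn
  have hσS : ∀ x ∈ Sp, σ.symm x ∈ Sp := by
    intro x hx
    have : Sp ≤ Sp.comap σ.symm.toLinearMap := by
      refine Submodule.span_le.mpr ?_
      rintro _ ⟨n, hn, rfl⟩
      change σ.symm _ ∈ Sp
      rw [hσ']
      exact hsing _ (hτM n hn)
    exact this hx
  refine ⟨σ.trans L, ⟨N + d, ?_, ?_⟩, ?_⟩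
  · intro i hi
    rw [LinearEquiv.trans_apply, hσ, hL]
    have : τ i = i := by simp only [τ]; split_ifs <;> omega
    rw [this]
    simp only [f]
    rw [if_neg (by omega)]
  · rw [← hSp]
    apply le_antisymm
    · rw [Submodule.map_le_iff_le_comap]
      refine Submodule.span_le.mpr ?_
      rintro _ ⟨n, hn, rfl⟩
      change L (σ _) ∈ Sp
      rw [hσ, hL]
      exact hfS _ (hτM n hn)
    · refine Submodule.span_le.mpr ?_
      rintro _ ⟨n, hn, rfl⟩
      refine ⟨σ.symm (L.symm (Finsupp.single n 1)), ?_, ?_⟩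
      · rw [hL']
        exact hσS _ (hfS' n hn)
      · simp
  · intro i hi
    rw [LinearEquiv.trans_apply, hσ, hL]
    have : τ i = N + i := by simp only [τ]; split_ifs; rfl
    rw [this]
    simp only [f]
    rw [if_pos (by omega)]
    simp

open Polynomial in
lemma eval_all [Infinite k] (Z : Set (MultilinearMap k (fun _ : Fin 3 => (ℕ →₀ k)) k))
    (hstable : ∀ T ∈ Z, ∀ g : (ℕ →₀ k) ≃ₗ[k] (ℕ →₀ k), IsGLinf g →
      T.compLinearMap (fun _ => g.toLinearMap) ∈ Z) {d : ℕ}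
    (P : MvPolynomial (Fin d × Fin d × Fin d) k)
    (hP : ∀ T ∈ Z, MvPolynomial.eval (fun q : Fin d × Fin d × Fin d =>
      toTri T (Finsupp.single q.1 1) (Finsupp.single q.2.1 1) (Finsupp.single q.2.2 1)) P = 0)
    (T) (hT : T ∈ Z) (u : Fin d → (ℕ →₀ k)) :
    MvPolynomial.eval (fun q => toTri T (u q.1) (u q.2.1) (u q.2.2)) P = 0 := by
  let uu : ℕ → (ℕ →₀ k) := fun n => if h : n < d then u ⟨n, h⟩ else 0
  have huu : ∀ i : Fin d, uu i = u i := by intro i; simp [uu]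
  obtain ⟨N, hdN, hN⟩ : ∃ N, d ≤ N ∧ ∀ i, ∀ n ∈ (uu i).support, n < N := by
    refine ⟨d + (Finset.univ.sup fun i => (u i).support.sup id) + 1, by omega, ?_⟩
    intro i n hn
    by_cases h : i < d
    · simp only [uu, dif_pos h] at hn
      have h1 : n ≤ (u ⟨i, h⟩).support.sup id := Finset.le_sup (f := id) hn
      have h2 : (u ⟨i, h⟩).support.sup id ≤ Finset.univ.sup fun i => (u i).support.sup id :=
        Finset.le_sup (f := fun i => (u i).support.sup id) (Finset.mem_univ _)
      omega
    · simp [uu, h] at hn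
  let e : Fin d → (ℕ →₀ k) := fun i => Finsupp.single (N + i) 1
  set τ := toTri T with hτ
  let G : Fin d × Fin d × Fin d → k[X] := fun q =>
    C (τ (u q.1) (u q.2.1) (u q.2.2)) + X * C (τ (e q.1) (u q.2.1) (u q.2.2) +
      τ (u q.1) (e q.2.1) (u q.2.2) + τ (u q.1) (u q.2.1) (e q.2.2)) +
    X ^ 2 * C (τ (e q.1) (e q.2.1) (u q.2.2) +
      τ (u q.1) (e q.2.1) (e q.2.2) + τ (e q.1) (u q.2.1) (e q.2.2)) +
    X ^ 3 * C (τ (e q.1) (e q.2.1) (e q.2.2))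
  have hG : ∀ s, MvPolynomial.eval (fun q => τ (u q.1 + s • e q.1) (u q.2.1 + s • e q.2.1)
      (u q.2.2 + s • e q.2.2)) P = (MvPolynomial.aeval G P).eval s := by
    intro s
    rw [← coe_aeval_eq_eval, ← AlgHom.comp_apply, MvPolynomial.comp_aeval,
      ← MvPolynomial.coe_aeval_eq_eval]
    change MvPolynomial.aeval _ P = _
    congr 2
    funext q
    simp only [G, coe_aeval_eq_eval, eval_add, eval_mul, eval_pow, eval_X, eval_C, map_add,
      map_smul, LinearMap.add_apply, LinearMap.smul_apply, smul_eq_mul]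
    ring
  have h0 : X * MvPolynomial.aeval G P = 0 := by
    refine Polynomial.funext fun s => ?_
    by_cases hs : s = 0
    · simp [hs]
    rw [eval_mul, eval_X, ← hG]
    obtain ⟨g, hg, hge⟩ := exists_gl d N hdN uu hN s hs
    have := hP _ (hstable T hT g hg)
    have hh : ∀ q : Fin d × Fin d × Fin d, toTri (T.compLinearMap (fun _ => g.toLinearMap))
        (Finsupp.single q.1 1) (Finsupp.single q.2.1 1) (Finsupp.single q.2.2 1) =
        τ (u q.1 + s • e q.1) (u q.2.1 + s • e q.2.1) (u q.2.2 + s • e q.2.2) := by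
      intro q
      rw [hτ, toTri_apply, toTri_apply, MultilinearMap.compLinearMap_apply]
      congr 1
      ext1 i
      fin_cases i
      · simp [hge, huu, e]
      · simp [hge, huu, e]
      · simp [hge, huu, e]
    simp only [hh] at this
    rw [this]; simp
  have h1 : MvPolynomial.aeval G P = 0 := (mul_eq_zero.mp h0).resolve_left X_ne_zero
  have := hG 0
  rw [h1] at this
  simpa using this
end glinf

/-- Density of `GL∞`-stable sets of unbounded q-rank: a `GL∞`-stable set of symmetric
trilinear forms containing forms of arbitrarily high q-rank is Zariski dense in the
space of all symmetric trilinear forms. -/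
theorem glinf_stable_unbounded_qrank_dense {k : Type*} [Field k] [IsAlgClosed k]
    (h2 : (2 : k) ≠ 0) (h3 : (3 : k) ≠ 0)
    (Z : Set (MultilinearMap k (fun _ : Fin 3 => (ℕ →₀ k)) k))
    (hsym : ∀ T ∈ Z, IsSymTri T)
    (hstable : ∀ T ∈ Z, ∀ g : (ℕ →₀ k) ≃ₗ[k] (ℕ →₀ k), IsGLinf g →
      T.compLinearMap (fun _ => g.toLinearMap) ∈ Z)
    (hrank : ∀ m : ℕ, ∃ T ∈ Z, (m : ℕ∞) ≤ qrank k (fun v => T ![v, v, v])) :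
    ∀ P : MvPolynomial (ℕ × ℕ × ℕ) k,
      (∀ T ∈ Z, coordEval T P = 0) →
      ∀ T : MultilinearMap k (fun _ : Fin 3 => (ℕ →₀ k)) k, IsSymTri T →
        coordEval T P = 0 := by
  intro P hP S hS
  obtain ⟨d, hd⟩ : ∃ d, ∀ p ∈ P.vars, p.1 < d ∧ p.2.1 < d ∧ p.2.2 < d := by
    refine ⟨(P.vars.sup fun p => p.1 + p.2.1 + p.2.2) + 1, fun p hp => ?_⟩
    have := Finset.le_sup (f := fun p : ℕ × ℕ × ℕ => p.1 + p.2.1 + p.2.2) hp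
    omega
  let ι : Fin d × Fin d × Fin d → ℕ × ℕ × ℕ := fun q => (q.1, q.2.1, q.2.2)
  have hι : Function.Injective ι := by
    rintro ⟨a, b, c⟩ ⟨a', b', c'⟩ h
    simp only [ι, Prod.mk.injEq, Fin.val_inj] at h
    simp [h]
  obtain ⟨P', rfl⟩ := MvPolynomial.exists_rename_eq_of_vars_subset_range P ι hι (by
    intro p hp
    obtain ⟨h1, h2, h3⟩ := hd p hp
    exact ⟨(⟨_, h1⟩, ⟨_, h2⟩, ⟨_, h3⟩), rfl⟩)
  have hev : ∀ T : MultilinearMap k (fun _ : Fin 3 => (ℕ →₀ k)) k,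
      coordEval T (MvPolynomial.rename ι P') =
      MvPolynomial.eval (fun q : Fin d × Fin d × Fin d =>
        toTri T (Finsupp.single q.1 1) (Finsupp.single q.2.1 1) (Finsupp.single q.2.2 1)) P' := by
    intro T
    rw [coordEval, MvPolynomial.eval_rename]
    rfl
  have : Infinite k := IsAlgClosed.instInfinite
  obtain ⟨T, hT, hTr⟩ := hrank (d * d + d + 1)
  have h12 := sym12 (hsym T hT)
  have h23 := sym23 (hsym T hT)
  have hgood : ∃ u : Fin d → (ℕ →₀ k), ∀ c : Fin d → Fin d → k,
      (∀ x, Afun (toTri T) u c x = 0) → ∀ j l, c j l + c l j = 0 := by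
    by_contra! hb
    have h1 := qrank_bound (toTri T) h12 h23 d hb
    have h4 := hTr.trans h1
    have h5 : d * d + d + 1 ≤ d * d + d := by exact_mod_cast h4
    omega
  obtain ⟨u, hu⟩ := hgood
  rw [hev]
  exact newton_eval (toTri T) h3 h12 h23 u (good_surj (toTri T) h2 u hu)
    (fun i j l => toTri S (Finsupp.single i 1) (Finsupp.single j 1) (Finsupp.single l 1))
    (fun i j l => sym12 hS _ _ _) (fun i j l => sym23 hS _ _ _) P'
    (eval_all Z hstable P' (fun T hT => by rw [← hev]; exact hP T hT) T hT)
end
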